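/- arXiv:1902.04194 — 2 statements merged into one kernel-verified Lean document; each statement's English description precedes it below -/
import Mathlib

section
/- Let n₀ and p₀ be positive integers such that X*(p₀, n₀) > 3.8 and p₀ > max{2·10⁶, exp(8(n₀−1))}, where X*(p, n) = (π/3)(2e)^{-1/2}((n+1)/n)^{n-1} · p^{1/4}/(log p)^{(n-1)/2} · (1 − ((n+1)/n) e^{-1/n} (log p)^{-1}). Set C = g(n₀, p₀), where g(n,p) = (π/3)√(2e) · (n/(n+1)) · ((1 + √2/(2B log p − 3)) / (1 − (π²/9)(log X*(p,n) + 9)/(3 X*(p,n))))^{1/2} with B = n/(2(n+1)). Then for every prime p ≥ p₀, every nonprincipal Dirichlet character χ modulo p, and every n ≤ n₀, the n-th smallest prime nonresidue qₙ of χ satisfies qₙ ≤ C p^{1/4} (log p)^{(n+1)/2}. -/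
open Real

/-- `X* = (π/3)(2e)^(-1/2) ((n+1)/n)^(n-1) p^(1/4)/(log p)^((n-1)/2)
       · (1 - ((n+1)/n) e^(-1/n) (log p)^(-1))`. -/
noncomputable def Xstar (n : ℕ) (p : ℝ) : ℝ :=
  (π / 3) * (2 * Real.exp 1) ^ (-(1 : ℝ) / 2) * (((n : ℝ) + 1) / (n : ℝ)) ^ (n - 1) *
    p ^ ((1 : ℝ) / 4) / Real.log p ^ (((n : ℝ) - 1) / 2) *
    (1 - ((n : ℝ) + 1) / (n : ℝ) * Real.exp (-1 / (n : ℝ)) / Real.log p)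

/-- `g(n,p) = (π/3)√(2e) (n/(n+1))
      ((1 + √2/(2B log p - 3))/(1 - (π²/9)(log X* + 9)/(3X*)))^(1/2)`
with `B = n/(2(n+1))`. -/
noncomputable def gconst (n : ℕ) (p : ℝ) : ℝ :=
  (π / 3) * Real.sqrt (2 * Real.exp 1) * ((n : ℝ) / ((n : ℝ) + 1)) *
    ((1 + Real.sqrt 2 / (2 * ((n : ℝ) / (2 * ((n : ℝ) + 1))) * Real.log p - 3)) /
        (1 - (π ^ 2 / 9) * (Real.log (Xstar n p) + 9) / (3 * Xstar n p))) ^ ((1 : ℝ) / 2)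

/-!
Let `ℓ ≥ 2` be the order of `χ` and `p = ℓ * g + 1`, so that `χ v = 1` implies `v ^ g = 1`.
Suppose that `r ^ g = 1` modulo `p` for all but `m` exceptional primes `r < Y`. Let `u` be the
product of the small exceptional primes, and let `h` be at most each of the `j` others. If `x`
lies just above `t * p / d`, with `t / d` a reduced fraction, then the integers
`d * (x + u * i) - t * p` for `i < h` are small, and each large exceptional prime divides at most
one of them. Hence `v ↦ v ^ g` is constant, up to at most `j` exceptions, on the block of `h`
consecutive residues starting at `x / u`, and likewise on the negated block. Summing over the
fractions `t / d` produces many such blocks.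

On the other hand, a block of length `h = s + 1 + j` contains `s + 1` residues with the same
`g`-th power, in one of `C(h, j)` patterns, and dividing by one of these residues prescribes the
`g`-th powers of `s` shifts of its inverse. Stepanov's method bounds the number of solutions by
roughly `√p * log p / (2 * log 2)`: an auxiliary polynomial built from the powers `(X + aᵢ) ^ g`
vanishes to high order at all of them, and it is nonzero because, by Kummer theory, the `ℓ`-th
roots of the `X + aᵢ` and their products are linearly independent. For `Y` of size
`p ^ (1 / 4) * (log p) ^ (m / 2 + 1)` the two estimates contradict each other.
-/

/-! ### Linear independence of radicals -/

/-- The monomial `∏ yᵢ ^ eᵢ` whose exponents are residues modulo `ℓ`, represented in `[0, ℓ)`. -/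
def radicalMonomial {ι R : Type*} [Fintype ι] [CommMonoid R] {ℓ : ℕ} (y : ι → R)
    (e : ι → ZMod ℓ) : R :=
  ∏ i, y i ^ (e i).val

section Kummer

variable {K Ω : Type*} [Field K] [Field Ω] [Algebra K Ω]

-- Dedekind: the maps `σ ↦ σ (w e) / w e` are pairwise distinct characters of the Galois group.
theorem linearIndependent_of_galois_semiinvariant [IsGalois K Ω] {E : Type*} {w : E → Ω}
    (hw : ∀ e, w e ≠ 0)
    (hsemi : ∀ e (σ : Ω ≃ₐ[K] Ω), ∃ z : K, σ (w e) = algebraMap K Ω z * w e)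
    (hdist : ∀ e e', e ≠ e' → ∀ k : K, w e ≠ algebraMap K Ω k * w e') :
    LinearIndependent K w := by
  let character (e : E) : (Ω ≃ₐ[K] Ω) →* Ω :=
    { toFun := fun σ => σ (w e) / w e
      map_one' := div_self (hw e)
      map_mul' := fun σ τ => by
        obtain ⟨z, hz⟩ := hsemi e τ
        rw [AlgEquiv.mul_apply, hz, map_mul, AlgEquiv.commutes, mul_div_cancel_right₀ _ (hw e),
          mul_div_assoc, mul_comm] }
  have character_injective : Function.Injective character := by
    intro e e' heq
    by_contra hne
    have hfixed : ∀ σ : Ω ≃ₐ[K] Ω, σ (w e / w e') = w e / w e' := fun σ => by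
      have hσ : σ (w e) / w e = σ (w e') / w e' := DFunLike.congr_fun heq σ
      rw [map_div₀, div_eq_div_iff ((map_ne_zero σ).2 (hw e')) (hw e'), mul_comm (w e)]
      exact ((div_eq_div_iff (hw e) (hw e')).1 hσ).trans rfl
    obtain ⟨k, hk⟩ := IntermediateField.mem_bot.1
      ((InfiniteGalois.mem_bot_iff_fixed (w e / w e')).2 hfixed)
    exact hdist e e' hne k (by rw [hk, div_mul_cancel₀ _ (hw e')])
  have hcharacters := (linearIndependent_monoidHom (Ω ≃ₐ[K] Ω) Ω).comp _ character_injective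
  rw [linearIndependent_iff'] at hcharacters ⊢
  intro S c hc e he
  have hsum : ∑ i ∈ S, (algebraMap K Ω (c i) * w i) • ⇑(character i) = 0 := by
    funext σ
    rw [Finset.sum_apply, Pi.zero_apply, ← map_zero σ, ← hc, map_sum]
    refine Finset.sum_congr rfl fun i _ => ?_
    rw [Pi.smul_apply, smul_eq_mul, mul_assoc, Algebra.smul_def, map_mul, AlgEquiv.commutes]
    exact congrArg _ (mul_div_cancel₀ _ (hw i))
  have hcoeff := (mul_eq_zero.1 (hcharacters S _ hsum e he)).resolve_right (hw e)
  exact (map_eq_zero _).1 hcoeff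

theorem exists_algEquiv_apply_eq_mul_of_pow_mem {ℓ : ℕ} [NeZero ℓ] {ζ : K}
    (hζ : IsPrimitiveRoot ζ ℓ) {u : K} {y : Ω} (hy : y ^ ℓ = algebraMap K Ω u)
    (σ : Ω ≃ₐ[K] Ω) : ∃ z : K, σ y = algebraMap K Ω z * y := by
  rcases eq_or_ne y 0 with rfl | hy0
  · exact ⟨1, by simp⟩
  have hquot : (σ y / y) ^ ℓ = 1 := by
    rw [div_pow, ← map_pow, hy, AlgEquiv.commutes, ← hy, div_self (pow_ne_zero _ hy0)]
  obtain ⟨k, -, hk⟩ :=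
    (hζ.map_of_injective (algebraMap K Ω).injective).eq_pow_of_pow_eq_one hquot
  exact ⟨ζ ^ k, by rw [map_pow, hk, div_mul_cancel₀ _ hy0]⟩

end Kummer

section RadicalMonomials

open Polynomial

variable {F ι : Type*} [Field F] [Fintype ι]

theorem rootMultiplicity_prod_X_add_C_pow {a : ι → F} (ha : Function.Injective a) (f : ι → ℕ)
    (j : ι) : rootMultiplicity (-a j) (∏ i, (X + C (a i)) ^ f i) = f j := by
  classical
  rw [← count_roots, roots_prod _ _
    (Finset.prod_ne_zero_iff.2 fun i _ => pow_ne_zero _ (X_add_C_ne_zero _)), Multiset.count_bind]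
  simp only [roots_pow, Multiset.count_nsmul, roots_X_add_C, Multiset.count_singleton,
    Finset.sum_map_val, neg_inj, ha.eq_iff, mul_ite, mul_one, mul_zero,
    Finset.sum_ite_eq, Finset.mem_univ, if_true]

theorem rootMultiplicity_pow_mul_C_mul_prod {a : ι → F} (ha : Function.Injective a) {G : F[X]}
    (hG : G ≠ 0) {γ : F} (hγ : γ ≠ 0) (ℓ : ℕ) (f : ι → ℕ) (j : ι) :
    rootMultiplicity (-a j) (G ^ ℓ * C γ * ∏ i, (X + C (a i)) ^ f i)
      = ℓ * rootMultiplicity (-a j) G + f j := by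
  have hGγ : G ^ ℓ * C γ ≠ 0 := mul_ne_zero (pow_ne_zero _ hG) (C_ne_zero.2 hγ)
  have hprod : ∏ i, (X + C (a i)) ^ f i ≠ 0 :=
    Finset.prod_ne_zero_iff.2 fun i _ => pow_ne_zero _ (X_add_C_ne_zero _)
  classical
  rw [rootMultiplicity_mul (mul_ne_zero hGγ hprod), rootMultiplicity_mul hGγ,
    rootMultiplicity_prod_X_add_C_pow ha, rootMultiplicity_C, ← count_roots, roots_pow,
    Multiset.count_nsmul, count_roots, add_zero]

-- Compare multiplicities of the root `-aⱼ` modulo `ℓ`.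
theorem exponents_eq_of_pow_mul_prod_eq {ℓ : ℕ} {a : ι → F} (ha : Function.Injective a)
    {P Q : F[X]} (hP : P ≠ 0) (hQ : Q ≠ 0) {α β : F} (hα : α ≠ 0) (hβ : β ≠ 0)
    {e e' : ι → ℕ} (he : ∀ i, e i < ℓ) (he' : ∀ i, e' i < ℓ)
    (h : Q ^ ℓ * C α * ∏ i, (X + C (a i)) ^ e' i = P ^ ℓ * C β * ∏ i, (X + C (a i)) ^ e i) :
    e = e' := by
  funext j
  have hmod := congrArg (rootMultiplicity (-a j) · % ℓ) h
  simp only [rootMultiplicity_pow_mul_C_mul_prod ha hQ hα,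
    rootMultiplicity_pow_mul_C_mul_prod ha hP hβ, Nat.mul_add_mod, Nat.mod_eq_of_lt (he j),
    Nat.mod_eq_of_lt (he' j)] at hmod
  exact hmod.symm

theorem radicalMonomial_pow_mul {A R : Type*} [CommRing A] [CommRing R] (φ : A →+* R) {ℓ : ℕ}
    {t a : ι → A} {y : ι → R} (hy : ∀ i, φ (t i) * y i ^ ℓ = φ (a i)) (e : ι → ZMod ℓ) :
    radicalMonomial y e ^ ℓ * φ (radicalMonomial t e) = φ (radicalMonomial a e) := by
  simp only [radicalMonomial, map_prod, map_pow]
  rw [← Finset.prod_pow, ← Finset.prod_mul_distrib]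
  refine Finset.prod_congr rfl fun i _ => ?_
  rw [← hy i, pow_right_comm, ← mul_pow, mul_comm]

variable {Ω : Type*} [Field Ω] [Algebra F[X] Ω] [Algebra (RatFunc F) Ω]
  [IsScalarTower F[X] (RatFunc F) Ω]

variable (F Ω) in
theorem algebraMap_polynomial_injective : Function.Injective (algebraMap F[X] Ω) := by
  rw [IsScalarTower.algebraMap_eq F[X] (RatFunc F) Ω]
  exact (algebraMap (RatFunc F) Ω).injective.comp (IsFractionRing.injective F[X] (RatFunc F))

theorem ne_zero_of_mul_pow_eq_C {ℓ : ℕ} [NeZero ℓ] {a : F} (ha : a ≠ 0) {y : Ω}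
    (hy : algebraMap F[X] Ω (X + C a) * y ^ ℓ = algebraMap F[X] Ω (C a)) : y ≠ 0 := by
  rintro rfl
  rw [zero_pow (NeZero.ne ℓ), mul_zero, eq_comm,
    map_eq_zero_iff _ (algebraMap_polynomial_injective F Ω), C_eq_zero] at hy
  exact ha hy

theorem radicalMonomial_ne_algebraMap_mul {ℓ : ℕ} [NeZero ℓ] {a : ι → F}
    (ha : Function.Injective a) (ha0 : ∀ i, a i ≠ 0) {y : ι → Ω}
    (hy : ∀ i, algebraMap F[X] Ω (X + C (a i)) * y i ^ ℓ = algebraMap F[X] Ω (C (a i)))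
    {e e' : ι → ZMod ℓ} (hne : e ≠ e') (k : RatFunc F) :
    radicalMonomial y e ≠ algebraMap (RatFunc F) Ω k * radicalMonomial y e' := by
  intro hk
  have hinj := algebraMap_polynomial_injective F Ω
  have hmonomial (f : ι → ZMod ℓ) : radicalMonomial y f ≠ 0 :=
    Finset.prod_ne_zero_iff.2 fun i _ => pow_ne_zero _ (ne_zero_of_mul_pow_eq_C (ha0 i) (hy i))
  have hconst (f : ι → ZMod ℓ) : ∏ i, a i ^ (f i).val ≠ 0 :=
    Finset.prod_ne_zero_iff.2 fun i _ => pow_ne_zero _ (ha0 i)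
  obtain ⟨P, Q, hQ, rfl⟩ := IsFractionRing.div_surjective (A := F[X]) k
  have hQ0 : Q ≠ 0 := nonZeroDivisors.ne_zero hQ
  rw [map_div₀, ← IsScalarTower.algebraMap_apply, ← IsScalarTower.algebraMap_apply,
    div_mul_eq_mul_div, eq_div_iff ((map_ne_zero_iff _ hinj).2 hQ0)] at hk
  have hP0 : P ≠ 0 := by
    rintro rfl
    rw [map_zero, zero_mul] at hk
    exact (mul_ne_zero (hmonomial e) ((map_ne_zero_iff _ hinj).2 hQ0)) hk
  have hpow (f : ι → ZMod ℓ) := radicalMonomial_pow_mul (algebraMap F[X] Ω) hy f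
  have hpoly : Q ^ ℓ * C (∏ i, a i ^ (e i).val) * ∏ i, (X + C (a i)) ^ (e' i).val
      = P ^ ℓ * C (∏ i, a i ^ (e' i).val) * ∏ i, (X + C (a i)) ^ (e i).val := by
    have hC (f : ι → ZMod ℓ) :
        C (∏ i, a i ^ (f i).val) = radicalMonomial (fun i => C (a i)) f := by
      simp only [radicalMonomial, map_prod, map_pow]
    apply hinj
    change algebraMap F[X] Ω (Q ^ ℓ * C _ * radicalMonomial (fun i => X + C (a i)) e')
      = algebraMap F[X] Ω (P ^ ℓ * C _ * radicalMonomial (fun i => X + C (a i)) e)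
    simp only [map_mul (algebraMap F[X] Ω), map_pow (algebraMap F[X] Ω), hC, ← hpow]
    linear_combination (algebraMap F[X] Ω (radicalMonomial (fun i => X + C (a i)) e)) *
      (algebraMap F[X] Ω (radicalMonomial (fun i => X + C (a i)) e')) * congrArg (· ^ ℓ) hk
  have hval := exponents_eq_of_pow_mul_prod_eq ha hP0 hQ0 (hconst e) (hconst e')
    (fun i => ZMod.val_lt (e i)) (fun i => ZMod.val_lt (e' i)) hpoly
  exact hne (funext fun i => ZMod.val_injective ℓ (congrFun hval i))

theorem linearIndependent_radicalMonomial [IsGalois (RatFunc F) Ω] {ℓ : ℕ} [NeZero ℓ] {ζ : F}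
    (hζ : IsPrimitiveRoot ζ ℓ) {a : ι → F} (ha : Function.Injective a) (ha0 : ∀ i, a i ≠ 0)
    {y : ι → Ω}
    (hy : ∀ i, algebraMap F[X] Ω (X + C (a i)) * y i ^ ℓ = algebraMap F[X] Ω (C (a i))) :
    LinearIndependent F[X] (radicalMonomial (ℓ := ℓ) y) := by
  have hinj : Function.Injective (algebraMap F[X] (RatFunc F)) := IsFractionRing.injective _ _
  have hroot (i : ι) : y i ^ ℓ = algebraMap (RatFunc F) Ω
      (algebraMap F[X] (RatFunc F) (C (a i)) / algebraMap F[X] (RatFunc F) (X + C (a i))) := by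
    rw [map_div₀, ← IsScalarTower.algebraMap_apply, ← IsScalarTower.algebraMap_apply, ← hy i,
      mul_div_cancel_left₀]
    exact (map_ne_zero_iff _ (algebraMap_polynomial_injective F Ω)).2 (X_add_C_ne_zero _)
  have hζ' := hζ.map_of_injective (f := (algebraMap F[X] (RatFunc F)).comp C)
    (hinj.comp C_injective)
  have hLI : LinearIndependent (RatFunc F) (radicalMonomial (ℓ := ℓ) y) := by
    refine linearIndependent_of_galois_semiinvariant
      (fun e => Finset.prod_ne_zero_iff.2 fun i _ =>
        pow_ne_zero _ (ne_zero_of_mul_pow_eq_C (ha0 i) (hy i)))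
      (fun e σ => ?_) (fun e e' hne k => radicalMonomial_ne_algebraMap_mul ha ha0 hy hne k)
    choose z hz using fun i => exists_algEquiv_apply_eq_mul_of_pow_mem hζ' (hroot i) σ
    exact ⟨radicalMonomial z e, by
      simp only [radicalMonomial, map_prod, map_pow, hz, mul_pow, Finset.prod_mul_distrib]⟩
  exact hLI.restrict_scalars (R := F[X]) fun f g hfg =>
    hinj (by simpa only [Algebra.smul_def, mul_one] using hfg)

variable (Ω) in
theorem exists_radical [IsSepClosed Ω] (ℓ : ℕ) [NeZero (ℓ : F)] (a : F) :
    ∃ y : Ω, algebraMap F[X] Ω (X + C a) * y ^ ℓ = algebraMap F[X] Ω (C a) := by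
  have hinj := algebraMap_polynomial_injective F Ω
  have : NeZero (ℓ : Ω) := ⟨by
    have hℓ := (map_ne_zero_iff _ hinj).2 (C_ne_zero.2 (NeZero.ne (ℓ : F)))
    rwa [map_natCast, map_natCast] at hℓ⟩
  obtain ⟨y, hy⟩ := IsSepClosed.exists_pow_nat_eq
    (algebraMap F[X] Ω (C a) / algebraMap F[X] Ω (X + C a)) ℓ
  exact ⟨y, by rw [hy, mul_div_cancel₀ _ ((map_ne_zero_iff _ hinj).2 (X_add_C_ne_zero _))]⟩

end RadicalMonomials

section RadicalMatrix

variable {ι A R : Type*} [CommRing A] [CommRing R] {ℓ : ℕ}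

/-- The factor in the multiplication rule `t * (Y ^ x * Y ^ y) = carryFactor t a x y * Y ^ (x + y)`
for exponents `x, y` modulo `ℓ`, where `Y` is a radical satisfying `t * Y ^ ℓ = a`. -/
def carryFactor (t a : A) (x y : ZMod ℓ) : A :=
  if x.val + y.val < ℓ then t else a

theorem carryFactor_mul [NeZero ℓ] (φ : A →+* R) {t a : A} {Y : R} (h : φ t * Y ^ ℓ = φ a)
    (x y : ZMod ℓ) :
    φ (carryFactor t a x y) * Y ^ (x + y).val = φ t * Y ^ x.val * Y ^ y.val := by
  unfold carryFactor
  split_ifs with hlt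
  · rw [ZMod.val_add_of_lt hlt, pow_add, mul_assoc]
  · rw [mul_assoc, ← pow_add, ZMod.val_add_val_of_le (not_lt.1 hlt), ← h, pow_add]
    ring

variable [Fintype ι]

/-- The matrix, in the basis of radical monomials, of multiplication by
`(∏ i, t i) * ∑ d, c d * radicalMonomial y d`, where `t i * y i ^ ℓ = a i`. -/
def radicalMatrix (t a : ι → A) (c : (ι → ZMod ℓ) → A) :
    Matrix (ι → ZMod ℓ) (ι → ZMod ℓ) A :=
  Matrix.of fun e e' => c (e' - e) * ∏ i, carryFactor (t i) (a i) (e i) (e' i - e i)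

variable [DecidableEq ι] [NeZero ℓ] {t a : ι → A}

theorem radicalMatrix_mulVec (φ : A →+* R) {y : ι → R} (hy : ∀ i, φ (t i) * y i ^ ℓ = φ (a i))
    (c : (ι → ZMod ℓ) → A) (e : ι → ZMod ℓ) :
    ∑ e', φ (radicalMatrix t a c e e') * radicalMonomial y e'
      = (∏ i, φ (t i)) * radicalMonomial y e * ∑ d, φ (c d) * radicalMonomial y d := by
  rw [← Equiv.sum_comp (Equiv.addLeft e), Finset.mul_sum]
  refine Finset.sum_congr rfl fun d _ => ?_
  simp only [radicalMatrix, radicalMonomial, Matrix.of_apply, Equiv.coe_addLeft,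
    add_sub_cancel_left, Pi.add_apply, map_mul, map_prod]
  rw [mul_assoc, ← Finset.prod_mul_distrib, Finset.prod_congr rfl
    fun i _ => carryFactor_mul φ (hy i) (e i) (d i), Finset.prod_mul_distrib,
    Finset.prod_mul_distrib]
  ring

theorem map_det_radicalMatrix_eq_zero (φ : A →+* R) {y : ι → R}
    (hy : ∀ i, φ (t i) * y i ^ ℓ = φ (a i)) {c : (ι → ZMod ℓ) → A}
    (hc : ∑ d, φ (c d) * radicalMonomial y d = 0) : φ (radicalMatrix t a c).det = 0 := by
  have hmulVec : ((radicalMatrix t a c).map φ).mulVec (radicalMonomial y) = 0 := by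
    funext e
    exact (radicalMatrix_mulVec φ hy c e).trans (by rw [hc, mul_zero, Pi.zero_apply])
  have hadjugate :=
    congrArg (fun v => ((radicalMatrix t a c).map φ).adjugate.mulVec v 0) hmulVec
  simpa only [Matrix.mulVec_mulVec, Matrix.adjugate_mul, Matrix.smul_mulVec, Matrix.one_mulVec,
    Matrix.mulVec_zero, Pi.zero_apply, Pi.smul_apply, radicalMonomial, ZMod.val_zero, pow_zero,
    Finset.prod_const_one, smul_eq_mul, mul_one, ← RingHom.mapMatrix_apply, ← RingHom.map_det]
    using hadjugate

-- A left kernel vector `v` of the matrix makes the product of the independent combinations with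
-- coefficients `v` and `c` vanish.
theorem eq_zero_of_det_radicalMatrix_eq_zero [IsDomain A] [IsDomain R] [Algebra A R]
    (ht : ∀ i, algebraMap A R (t i) ≠ 0) {y : ι → R}
    (hy : ∀ i, algebraMap A R (t i) * y i ^ ℓ = algebraMap A R (a i))
    (hindep : LinearIndependent A (radicalMonomial (ℓ := ℓ) y)) {c : (ι → ZMod ℓ) → A}
    (hdet : (radicalMatrix t a c).det = 0) : c = 0 := by
  have eq_zero_of_sum_eq_zero (b : (ι → ZMod ℓ) → A)
      (hb : ∑ d, algebraMap A R (b d) * radicalMonomial y d = 0) : b = 0 :=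
    funext (Fintype.linearIndependent_iff.1 hindep b
      (by simpa only [Algebra.smul_def] using hb))
  obtain ⟨v, hv0, hv⟩ := Matrix.exists_vecMul_eq_zero_iff.2 hdet
  have hkernel : ∑ e, algebraMap A R (v e) *
      ∑ e', algebraMap A R (radicalMatrix t a c e e') * radicalMonomial y e' = 0 := by
    simp only [Finset.mul_sum]
    rw [Finset.sum_comm]
    refine Finset.sum_eq_zero fun e' _ => ?_
    have hcolumn := congrArg (algebraMap A R) (congrFun hv e')
    simp only [Matrix.vecMul, dotProduct, map_sum, map_mul, Pi.zero_apply, map_zero] at hcolumn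
    simp only [← mul_assoc]
    rw [← Finset.sum_mul, hcolumn, zero_mul]
  have hproduct : (∏ i, algebraMap A R (t i)) *
      (∑ d, algebraMap A R (c d) * radicalMonomial y d) *
      ∑ e, algebraMap A R (v e) * radicalMonomial y e = 0 := by
    rw [← hkernel, Finset.mul_sum]
    refine Finset.sum_congr rfl fun e _ => ?_
    rw [radicalMatrix_mulVec (algebraMap A R) hy c e]
    ring
  rcases mul_eq_zero.1 hproduct with hleft | hv'
  · exact eq_zero_of_sum_eq_zero c
      ((mul_eq_zero.1 hleft).resolve_left (Finset.prod_ne_zero_iff.2 fun i _ => ht i))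
  · exact absurd (eq_zero_of_sum_eq_zero v hv') hv0

end RadicalMatrix

section AuxiliaryPolynomialNonzero

open Polynomial

theorem natDegree_det_le_card_mul {A n : Type*} [CommRing A] [Fintype n] [DecidableEq n]
    (M : Matrix n n A[X]) {B : ℕ} (h : ∀ i j, (M i j).natDegree ≤ B) :
    M.det.natDegree ≤ Fintype.card n * B := by
  rw [Matrix.det_apply]
  refine natDegree_sum_le_of_forall_le _ _ fun σ _ => ?_
  calc (Equiv.Perm.sign σ • ∏ i, M (σ i) i).natDegree
      ≤ (∏ i, M (σ i) i).natDegree := natDegree_smul_le _ _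
    _ ≤ ∑ i, (M (σ i) i).natDegree := natDegree_prod_le _ _
    _ ≤ Fintype.card n * B := Finset.sum_le_card_nsmul _ _ B fun i _ => h _ _

theorem natDegree_det_radicalMatrix_le {A ι : Type*} [CommRing A] [Fintype ι]
    [DecidableEq ι] {ℓ : ℕ} [NeZero ℓ] (a : ι → A) {c : (ι → ZMod ℓ) → A[X]} {B : ℕ}
    (hc : ∀ e, (c e).natDegree ≤ B) :
    (radicalMatrix (fun i => X + C (a i)) (fun i => C (a i)) c).det.natDegree
      ≤ ℓ ^ Fintype.card ι * (B + Fintype.card ι) := by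
  have hcarry (i : ι) (x y : ZMod ℓ) :
      (carryFactor (X + C (a i)) (C (a i)) x y).natDegree ≤ 1 := by
    unfold carryFactor
    split_ifs
    · exact natDegree_add_C.trans_le natDegree_X_le
    · exact (natDegree_C _).trans_le zero_le_one
  refine (natDegree_det_le_card_mul _ (B := B + Fintype.card ι) fun e e' => ?_).trans_eq
    (by rw [Fintype.card_fun, ZMod.card])
  refine natDegree_mul_le.trans (add_le_add (hc _) ?_)
  calc (∏ i, carryFactor (X + C (a i)) (C (a i)) (e i) (e' i - e i)).natDegree
      ≤ ∑ i, (carryFactor (X + C (a i)) (C (a i)) (e i) (e' i - e i)).natDegree :=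
        natDegree_prod_le _ _
    _ ≤ ∑ _i : ι, 1 := Finset.sum_le_sum fun i _ => hcarry i _ _
    _ = Fintype.card ι := Fintype.card_eq_sum_ones.symm

variable {p : ℕ} [Fact p.Prime] {ℓ g : ℕ}

theorem exists_isPrimitiveRoot_of_mul_add_one_eq (hg : ℓ * g + 1 = p) :
    ∃ ζ : ZMod p, IsPrimitiveRoot ζ ℓ := by
  obtain ⟨γ, hγ⟩ := IsCyclic.exists_ofOrder_eq_natCard (α := (ZMod p)ˣ)
  have hprim : IsPrimitiveRoot (γ : ZMod p) (ℓ * g) := by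
    rw [IsPrimitiveRoot.coe_units_iff, show ℓ * g = orderOf γ by
      rw [hγ, Nat.card_eq_fintype_card, ZMod.card_units]; omega]
    exact IsPrimitiveRoot.orderOf γ
  have hpos : 0 < ℓ * g := by have := (Fact.out : p.Prime).two_le; omega
  exact ⟨_, hprim.pow hpos (mul_comm ℓ g)⟩

theorem X_add_C_mul_pow_pow_sub_eq (hg : ℓ * g + 1 = p) (a : ZMod p) :
    (X + C a) * ((X + C a) ^ g) ^ ℓ - C a = X ^ p := by
  rw [← pow_mul, ← pow_succ', mul_comm g, hg, add_pow_char, ← C_pow, ZMod.pow_card,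
    add_sub_cancel_right]

variable {ι : Type*} [Fintype ι] [DecidableEq ι] [NeZero ℓ] {a : ι → ZMod p} {B : ℕ}

-- Modulo `X ^ p` the polynomials `(X + aᵢ) ^ g` satisfy the same relation as genuine radicals, so
-- the determinant of the radical matrix is divisible by `X ^ p`; its degree is too small for that.
theorem eq_zero_of_X_pow_dvd_sum (hg : ℓ * g + 1 = p) (ha : Function.Injective a)
    (ha0 : ∀ i, a i ≠ 0) {c : (ι → ZMod ℓ) → (ZMod p)[X]} (hc : ∀ e, (c e).natDegree ≤ B)
    (hB : ℓ ^ Fintype.card ι * (B + Fintype.card ι) < p)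
    (hdvd : X ^ p ∣ ∑ e, c e * radicalMonomial (fun i => (X + C (a i)) ^ g) e) : c = 0 := by
  obtain ⟨ζ, hζ⟩ := exists_isPrimitiveRoot_of_mul_add_one_eq hg
  have : NeZero (ℓ : ZMod p) := hζ.neZero'
  let Ω := SeparableClosure (RatFunc (ZMod p))
  choose y hy using fun i => exists_radical Ω ℓ (a i)
  refine eq_zero_of_det_radicalMatrix_eq_zero (R := Ω)
    (fun i => (map_ne_zero_iff _ (algebraMap_polynomial_injective _ _)).2 (X_add_C_ne_zero (a i)))
    hy (linearIndependent_radicalMonomial hζ ha ha0 hy) ?_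
  let φ := Ideal.Quotient.mk (Ideal.span {(X : (ZMod p)[X]) ^ p})
  have φ_eq_zero_iff (f : (ZMod p)[X]) : φ f = 0 ↔ X ^ p ∣ f := by
    rw [Ideal.Quotient.eq_zero_iff_mem, Ideal.mem_span_singleton]
  have hradical (i : ι) : φ (X + C (a i)) * φ ((X + C (a i)) ^ g) ^ ℓ = φ (C (a i)) := by
    rw [← map_pow, ← map_mul, ← sub_eq_zero, ← map_sub, φ_eq_zero_iff,
      X_add_C_mul_pow_pow_sub_eq hg]
  have hsum : ∑ d, φ (c d) * radicalMonomial (fun i => φ ((X + C (a i)) ^ g)) d = 0 := by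
    simpa only [radicalMonomial, map_sum, map_mul, map_prod, map_pow]
      using (φ_eq_zero_iff _).2 hdvd
  refine eq_zero_of_dvd_of_natDegree_lt
    ((φ_eq_zero_iff _).1 (map_det_radicalMatrix_eq_zero φ hradical hsum)) ?_
  rw [natDegree_X_pow]
  exact (natDegree_det_radicalMatrix_le a hc).trans_lt hB

/-- The auxiliary polynomial of Stepanov's method: once `x ^ p` is replaced by `x` and
`(x + a i) ^ g` by a prescribed value `θ i`, its derivatives become polynomials of low degree. -/
noncomputable def stepanovPoly {J : ℕ} (g : ℕ) (a : ι → ZMod p)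
    (c : Fin J → (ι → ZMod ℓ) → (ZMod p)[X]) : (ZMod p)[X] :=
  ∑ j : Fin J, X ^ (p * (j : ℕ)) * ∑ e, c j e * radicalMonomial (fun i => (X + C (a i)) ^ g) e

theorem eq_zero_of_stepanovPoly_eq_zero (hg : ℓ * g + 1 = p) (ha : Function.Injective a)
    (ha0 : ∀ i, a i ≠ 0) (hB : ℓ ^ Fintype.card ι * (B + Fintype.card ι) < p) {J : ℕ}
    {c : Fin J → (ι → ZMod ℓ) → (ZMod p)[X]} (hc : ∀ j e, (c j e).natDegree ≤ B)
    (hsum : stepanovPoly g a c = 0) : c = 0 := by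
  induction J with
  | zero => exact Subsingleton.elim _ _
  | succ J ih =>
    have hsplit : stepanovPoly g a c = stepanovPoly g a (fun j => c j.succ) * X ^ p
        + ∑ e, c 0 e * radicalMonomial (fun i => (X + C (a i)) ^ g) e := by
      rw [stepanovPoly, Fin.sum_univ_succ, stepanovPoly, Finset.sum_mul, add_comm]
      congr 1
      · refine Finset.sum_congr rfl fun j _ => ?_
        rw [Fin.val_succ, mul_add_one, pow_add, mul_right_comm]
      · rw [Fin.val_zero, mul_zero, pow_zero, one_mul]
    rw [hsplit] at hsum
    have hc0 : c 0 = 0 := by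
      refine eq_zero_of_X_pow_dvd_sum hg ha ha0 (hc 0) hB ?_
      rw [eq_neg_of_add_eq_zero_right hsum]
      exact (Dvd.intro_left _ rfl).neg_right
    simp only [hc0, Pi.zero_apply, zero_mul, Finset.sum_const_zero, add_zero] at hsum
    have htail := ih (fun j => hc j.succ)
      ((mul_eq_zero.1 hsum).resolve_right (pow_ne_zero _ X_ne_zero))
    funext j
    exact Fin.cases hc0 (fun j => congrFun htail j) j

end AuxiliaryPolynomialNonzero

/-! ### Stepanov's auxiliary polynomial -/

section TwistedDerivative

open Polynomial

theorem natDegree_prod_X_add_C_le {F ι : Type*} [CommRing F] (a : ι → F) (S : Finset ι) :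
    (∏ i ∈ S, (X + C (a i))).natDegree ≤ S.card := by
  refine (natDegree_prod_le _ _).trans ((Finset.sum_le_card_nsmul _ _ 1 fun i _ => ?_).trans_eq
    (by rw [smul_eq_mul, mul_one]))
  exact natDegree_add_C.trans_le natDegree_X_le

variable {F ι : Type*} [CommRing F] [Fintype ι]

/-- The numerator of the logarithmic derivative of `∏ i, (X + a i) ^ f i` over the denominator
`∏ i, (X + a i)`. -/
noncomputable def logDerivNumerator [DecidableEq ι] (a : ι → F) (f : ι → ℕ) : F[X] :=
  ∑ i, C (f i : F) * ∏ j ∈ Finset.univ.erase i, (X + C (a j))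

/-- `twistedDeriv a f k c` is the polynomial `T` with `W ^ k * D ^ k (c * Y) = T * Y`, where
`W = ∏ i, (X + a i)` and `Y = ∏ i, (X + a i) ^ f i`. -/
noncomputable def twistedDeriv [DecidableEq ι] (a : ι → F) (f : ι → ℕ) : ℕ → F[X] →ₗ[F] F[X]
  | 0 => LinearMap.id
  | k + 1 => LinearMap.mulLeft F (∏ i, (X + C (a i))) ∘ₗ derivative ∘ₗ twistedDeriv a f k
      + LinearMap.mulLeft F (logDerivNumerator a f - C (k : F) * derivative (∏ i, (X + C (a i))))
        ∘ₗ twistedDeriv a f k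

variable [DecidableEq ι]

theorem twistedDeriv_succ_apply (a : ι → F) (f : ι → ℕ) (k : ℕ) (c : F[X]) :
    twistedDeriv a f (k + 1) c = (∏ i, (X + C (a i))) * derivative (twistedDeriv a f k c)
      + (logDerivNumerator a f - C (k : F) * derivative (∏ i, (X + C (a i))))
        * twistedDeriv a f k c := rfl

theorem mul_derivative_pow (W : F[X]) (k : ℕ) :
    W * derivative (W ^ k) = C (k : F) * derivative W * W ^ k := by
  cases k with
  | zero => rw [pow_zero, derivative_one, Nat.cast_zero, C_0, mul_zero, zero_mul, zero_mul]
  | succ k => rw [derivative_pow_succ, Nat.cast_add_one]; ring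

theorem derivative_prod_X_add_C_pow (a : ι → F) (f : ι → ℕ) :
    (∏ i, (X + C (a i))) * derivative (∏ i, (X + C (a i)) ^ f i)
      = logDerivNumerator a f * ∏ i, (X + C (a i)) ^ f i := by
  rw [derivative_prod_finset, logDerivNumerator, Finset.mul_sum, Finset.sum_mul]
  refine Finset.sum_congr rfl fun i _ => ?_
  have hfactor := mul_derivative_pow (X + C (a i)) (f i)
  rw [derivative_X_add_C, mul_one] at hfactor
  rw [← Finset.mul_prod_erase _ (fun i => X + C (a i)) (Finset.mem_univ i),
    ← Finset.mul_prod_erase _ (fun i => (X + C (a i)) ^ f i) (Finset.mem_univ i)]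
  linear_combination ((∏ j ∈ Finset.univ.erase i, (X + C (a j))) *
    ∏ j ∈ Finset.univ.erase i, (X + C (a j)) ^ f j) * hfactor

theorem prod_pow_mul_iterate_derivative (a : ι → F) (f : ι → ℕ) {E : F[X]}
    (hE : derivative E = 0) (c : F[X]) (k : ℕ) :
    (∏ i, (X + C (a i))) ^ k * derivative^[k] (E * (c * ∏ i, (X + C (a i)) ^ f i))
      = E * (twistedDeriv a f k c * ∏ i, (X + C (a i)) ^ f i) := by
  induction k with
  | zero => rw [pow_zero, one_mul]; rfl
  | succ k ih =>
    have hlog := derivative_prod_X_add_C_pow a f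
    rw [Function.iterate_succ_apply', twistedDeriv_succ_apply]
    generalize (∏ i, (X + C (a i)) : F[X]) = W at ih hlog ⊢
    generalize (∏ i, (X + C (a i)) ^ f i : F[X]) = Y at ih hlog ⊢
    generalize derivative^[k] (E * (c * Y)) = D at ih ⊢
    have hderiv := congrArg (fun q => W * derivative q) ih
    simp only [derivative_mul, hE] at hderiv
    linear_combination hderiv - D * mul_derivative_pow W k + E * (twistedDeriv a f k c) * hlog
      - C (k : F) * derivative W * ih

theorem natDegree_logDerivNumerator_le (a : ι → F) (f : ι → ℕ) :
    (logDerivNumerator a f).natDegree ≤ Fintype.card ι - 1 :=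
  natDegree_sum_le_of_forall_le _ _ fun i _ => (natDegree_C_mul_le _ _).trans
    ((natDegree_prod_X_add_C_le a _).trans_eq (Finset.card_erase_of_mem (Finset.mem_univ i)))

theorem natDegree_twistedDeriv_le [Nonempty ι] (a : ι → F) (f : ι → ℕ) (c : F[X]) (k : ℕ) :
    (twistedDeriv a f k c).natDegree ≤ c.natDegree + k * (Fintype.card ι - 1) := by
  have hW : (∏ i, (X + C (a i))).natDegree ≤ Fintype.card ι := natDegree_prod_X_add_C_le a _
  have hW' : (derivative (∏ i, (X + C (a i)))).natDegree ≤ Fintype.card ι - 1 :=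
    (natDegree_derivative_le _).trans (Nat.sub_le_sub_right hW 1)
  have hfactor (k : ℕ) :
      (logDerivNumerator a f - C (k : F) * derivative (∏ i, (X + C (a i)))).natDegree
        ≤ Fintype.card ι - 1 :=
    (natDegree_sub_le _ _).trans
      (max_le (natDegree_logDerivNumerator_le a f) ((natDegree_C_mul_le _ _).trans hW'))
  have hι : 1 ≤ Fintype.card ι := Fintype.card_pos
  induction k with
  | zero => rw [zero_mul, add_zero]; rfl
  | succ k ih =>
    rw [twistedDeriv_succ_apply, add_one_mul]
    refine (natDegree_add_le _ _).trans (max_le ?_ ?_)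
    · rcases Nat.eq_zero_or_pos (twistedDeriv a f k c).natDegree with hconst | hpos
      · rw [natDegree_eq_zero] at hconst
        obtain ⟨x, hx⟩ := hconst
        rw [← hx, derivative_C, mul_zero, natDegree_zero]
        exact Nat.zero_le _
      · have hlt := natDegree_derivative_lt hpos.ne'
        exact natDegree_mul_le.trans (by omega)
    · exact natDegree_mul_le.trans (by have := hfactor k; omega)

end TwistedDerivative

section Stepanov

open Polynomial

theorem natDegree_le_pred_of_mem_degreeLT {F : Type*} [Semiring F] {A : ℕ} {q : F[X]}
    (hq : q ∈ degreeLT F A) : q.natDegree ≤ A - 1 := by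
  rcases eq_or_ne q 0 with rfl | hq0
  · rw [natDegree_zero]; exact Nat.zero_le _
  · exact Nat.le_sub_one_of_lt ((natDegree_lt_iff_degree_lt hq0).2 (mem_degreeLT.1 hq))

theorem exists_ne_zero_mem_degreeLT_forall_eq_zero {F κ μ : Type*} [Field F] [Fintype κ]
    [Fintype μ] {A : ℕ} {d : μ → ℕ} (T : μ → (κ → F[X]) →ₗ[F] F[X])
    (hT : ∀ k v, (∀ i, v i ∈ degreeLT F A) → T k v ∈ degreeLT F (d k))
    (hdim : ∑ k, d k < Fintype.card κ * A) :
    ∃ v : κ → F[X], v ≠ 0 ∧ (∀ i, v i ∈ degreeLT F A) ∧ ∀ k, T k v = 0 := by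
  have hfinite (n : ℕ) : Module.Finite F (degreeLT F n) :=
    Module.Finite.equiv (degreeLTEquiv F n).symm
  have hfinrank (n : ℕ) : Module.finrank F (degreeLT F n) = n := by
    rw [(degreeLTEquiv F n).finrank_eq, Module.finrank_fin_fun]
  let coeffs : (κ → degreeLT F A) →ₗ[F] κ → F[X] :=
    LinearMap.pi fun i => (degreeLT F A).subtype ∘ₗ LinearMap.proj i
  let Φ : (κ → degreeLT F A) →ₗ[F] (k : μ) → degreeLT F (d k) :=
    LinearMap.pi fun k => LinearMap.codRestrict _ (T k ∘ₗ coeffs) fun v =>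
      hT k _ fun i => (v i).2
  have hlt : Module.finrank F ((k : μ) → degreeLT F (d k))
      < Module.finrank F (κ → degreeLT F A) := by
    simpa only [Module.finrank_pi_fintype, hfinrank, Finset.sum_const, Finset.card_univ,
      smul_eq_mul] using hdim
  obtain ⟨v, hv, hv0⟩ := Submodule.exists_mem_ne_zero_of_ne_bot
    (LinearMap.ker_ne_bot_of_finrank_lt (f := Φ) hlt)
  refine ⟨coeffs v, fun h => hv0 ?_, fun i => (v i).2, fun k => ?_⟩
  · exact funext fun i => Subtype.ext (congrFun h i)
  · exact congrArg Subtype.val (congrFun (LinearMap.mem_ker.1 hv) k)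

variable {ι : Type*} [Fintype ι] {p : ℕ} [Fact p.Prime] {ℓ g A J M : ℕ}
  [NeZero ℓ]

theorem exists_auxiliary_coeffs [DecidableEq ι] [Nonempty ι] (g : ℕ) (a θ : ι → ZMod p) (hA : 1 ≤ A)
    (hdim : ∑ k ∈ Finset.range M, (A + J - 1 + k * (Fintype.card ι - 1))
      < A * ℓ ^ Fintype.card ι * J) :
    ∃ c : Fin J → (ι → ZMod ℓ) → (ZMod p)[X], c ≠ 0 ∧ (∀ j e, (c j e).natDegree ≤ A - 1) ∧
      ∀ k < M, ∑ j : Fin J, ∑ e, X ^ (j : ℕ) * (C (radicalMonomial θ e) *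
        twistedDeriv a (fun i => g * (e i).val) k (c j e)) = 0 := by
  let T (k : Fin M) : (Fin J × (ι → ZMod ℓ) → (ZMod p)[X]) →ₗ[ZMod p] (ZMod p)[X] :=
    ∑ j : Fin J, ∑ e, LinearMap.mulLeft (ZMod p) (X ^ (j : ℕ) * C (radicalMonomial θ e)) ∘ₗ
      twistedDeriv a (fun i => g * (e i).val) k ∘ₗ LinearMap.proj (j, e)
  have hT_apply (k : Fin M) (v : Fin J × (ι → ZMod ℓ) → (ZMod p)[X]) :
      T k v = ∑ j : Fin J, ∑ e, X ^ (j : ℕ) * (C (radicalMonomial θ e) *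
        twistedDeriv a (fun i => g * (e i).val) k (v (j, e))) := by
    simp only [T, LinearMap.coe_sum, Finset.sum_apply, LinearMap.comp_apply,
      LinearMap.mulLeft_apply, LinearMap.proj_apply, mul_assoc]
  have hT_degree (k : Fin M) (v : Fin J × (ι → ZMod ℓ) → (ZMod p)[X])
      (hv : ∀ i, v i ∈ degreeLT (ZMod p) A) :
      T k v ∈ degreeLT (ZMod p) (A + J - 1 + k * (Fintype.card ι - 1)) := by
    rw [hT_apply]
    refine Submodule.sum_mem _ fun j _ => Submodule.sum_mem _ fun e _ => ?_
    have hcoeff := natDegree_le_pred_of_mem_degreeLT (hv (j, e))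
    have htwisted := natDegree_twistedDeriv_le a (fun i => g * (e i).val) (v (j, e)) k
    rw [mem_degreeLT]
    refine degree_le_natDegree.trans_lt (Nat.cast_lt.2 ?_)
    calc (X ^ (j : ℕ) * (C (radicalMonomial θ e) *
          twistedDeriv a (fun i => g * (e i).val) k (v (j, e)))).natDegree
        ≤ j + (twistedDeriv a (fun i => g * (e i).val) k (v (j, e))).natDegree :=
          natDegree_mul_le.trans (add_le_add (natDegree_X_pow_le _) (natDegree_C_mul_le _ _))
      _ < A + J - 1 + k * (Fintype.card ι - 1) := by have := j.2; omega
  have hcount : ∑ k : Fin M, (A + J - 1 + k * (Fintype.card ι - 1))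
      < Fintype.card (Fin J × (ι → ZMod ℓ)) * A := by
    rw [Fin.sum_univ_eq_sum_range (fun k => A + J - 1 + k * (Fintype.card ι - 1))]
    refine hdim.trans_eq ?_
    rw [Fintype.card_prod, Fintype.card_fin, Fintype.card_fun, ZMod.card]
    ring
  obtain ⟨v, hv0, hdeg, hv⟩ := exists_ne_zero_mem_degreeLT_forall_eq_zero T hT_degree hcount
  refine ⟨fun j e => v (j, e), fun h => hv0 (funext fun i => congrFun₂ h i.1 i.2),
    fun j e => natDegree_le_pred_of_mem_degreeLT (hdeg _), fun k hk => ?_⟩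
  rw [← hT_apply ⟨k, hk⟩, hv]

theorem natDegree_stepanovPoly_le [DecidableEq ι] (g : ℕ) (a : ι → ZMod p) {B : ℕ}
    {c : Fin J → (ι → ZMod ℓ) → (ZMod p)[X]} (hc : ∀ j e, (c j e).natDegree ≤ B) :
    (stepanovPoly g a c).natDegree ≤ B + p * (J - 1) + Fintype.card ι * (g * (ℓ - 1)) := by
  have hmonomial (e : ι → ZMod ℓ) :
      (radicalMonomial (fun i => (X + C (a i)) ^ g) e).natDegree
        ≤ Fintype.card ι * (g * (ℓ - 1)) := by
    refine (natDegree_prod_le _ _).trans (Finset.sum_le_card_nsmul _ _ _ fun i _ => ?_)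
    rw [← pow_mul]
    refine natDegree_pow_le.trans ?_
    rw [natDegree_X_add_C, mul_one]
    exact Nat.mul_le_mul_left _ (Nat.le_sub_one_of_lt (ZMod.val_lt (e i)))
  have hinner (j : Fin J) :
      (∑ e, c j e * radicalMonomial (fun i => (X + C (a i)) ^ g) e).natDegree
        ≤ B + Fintype.card ι * (g * (ℓ - 1)) :=
    natDegree_sum_le_of_forall_le _ _ fun e _ =>
      natDegree_mul_le.trans (add_le_add (hc j e) (hmonomial e))
  refine natDegree_sum_le_of_forall_le _ _ fun j _ => natDegree_mul_le.trans ?_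
  have hpow : (X ^ (p * j) : (ZMod p)[X]).natDegree ≤ p * (J - 1) :=
    (natDegree_X_pow_le _).trans (Nat.mul_le_mul_left _ (Nat.le_sub_one_of_lt j.2))
  have := hinner j
  omega

theorem eval_iterate_derivative_stepanovPoly_eq_zero [DecidableEq ι] {a θ : ι → ZMod p}
    {c : Fin J → (ι → ZMod ℓ) → (ZMod p)[X]} {k : ℕ}
    (hc : ∑ j : Fin J, ∑ e, X ^ (j : ℕ) * (C (radicalMonomial θ e) *
      twistedDeriv a (fun i => g * (e i).val) k (c j e)) = 0)
    {y : ZMod p} (hy : ∀ i, (y + a i) ^ g = θ i) (hya : ∀ i, y + a i ≠ 0) :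
    eval y (derivative^[k] (stepanovPoly g a c)) = 0 := by
  have hW : (∏ i, (X + C (a i))).eval y ≠ 0 := by
    simpa only [eval_prod, eval_add, eval_X, eval_C]
      using Finset.prod_ne_zero_iff.2 fun i _ => hya i
  have hderiv : (∏ i, (X + C (a i))) ^ k * derivative^[k] (stepanovPoly g a c)
      = ∑ j : Fin J, ∑ e, X ^ (p * j) *
        (twistedDeriv a (fun i => g * (e i).val) k (c j e) *
          ∏ i, (X + C (a i)) ^ (g * (e i).val)) := by
    simp only [stepanovPoly, radicalMonomial, ← pow_mul, iterate_derivative_sum, Finset.mul_sum]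
    refine Finset.sum_congr rfl fun j _ => Finset.sum_congr rfl fun e _ => ?_
    refine prod_pow_mul_iterate_derivative a (fun i => g * (e i).val) ?_ _ _
    rw [derivative_X_pow, Nat.cast_mul, ZMod.natCast_self, zero_mul, C_0, zero_mul]
  have heval := congrArg (eval y) hderiv
  rw [eval_mul, eval_pow] at heval
  refine (mul_eq_zero.1 (heval.trans ?_)).resolve_left (pow_ne_zero _ hW)
  have hvanish := congrArg (eval y) hc
  rw [eval_zero] at hvanish
  rw [← hvanish]
  simp only [eval_finsetSum]
  refine Finset.sum_congr rfl fun j _ => Finset.sum_congr rfl fun e _ => ?_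
  simp only [radicalMonomial, eval_mul, eval_pow, eval_X, eval_prod, eval_add, eval_C, pow_mul,
    hy, ZMod.pow_card]
  ring

theorem card_mul_le_natDegree_of_le_rootMultiplicity {F : Type*} [CommRing F] [IsDomain F]
    {P : F[X]} {S : Finset F} (hS : ∀ y ∈ S, M ≤ rootMultiplicity y P) :
    S.card * M ≤ P.natDegree := by
  classical
  have hle : M • S.val ≤ P.roots := by
    rw [Multiset.le_iff_count]
    intro y
    rw [Multiset.count_nsmul, count_roots]
    by_cases hy : y ∈ S
    · rw [Multiset.count_eq_one_of_mem S.nodup hy, mul_one]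
      exact hS y hy
    · rw [Multiset.count_eq_zero_of_notMem hy, mul_zero]
      exact Nat.zero_le _
  have hcard := (Multiset.card_le_card hle).trans (card_roots' P)
  rwa [Multiset.card_nsmul, mul_comm] at hcard

theorem card_mul_le_of_stepanov [Nonempty ι] (hg : ℓ * g + 1 = p) {a θ : ι → ZMod p}
    (ha : Function.Injective a) (ha0 : ∀ i, a i ≠ 0) (hθ : ∀ i, θ i ≠ 0) (hA : 1 ≤ A)
    (hMp : M ≤ p)
    (hdim : ∑ k ∈ Finset.range M, (A + J - 1 + k * (Fintype.card ι - 1))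
      < A * ℓ ^ Fintype.card ι * J)
    (hind : ℓ ^ Fintype.card ι * (A - 1 + Fintype.card ι) < p)
    {S : Finset (ZMod p)} (hS : ∀ y ∈ S, ∀ i, (y + a i) ^ g = θ i) :
    S.card * M ≤ (A - 1) + p * (J - 1) + Fintype.card ι * (g * (ℓ - 1)) := by
  classical
  have hp := (Fact.out : p.Prime)
  have hg0 : g ≠ 0 := by
    rintro rfl
    rw [mul_zero, zero_add] at hg
    exact hp.one_lt.ne hg
  obtain ⟨c, hc0, hcdeg, hc⟩ := exists_auxiliary_coeffs (ℓ := ℓ) g a θ hA hdim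
  have hP0 : stepanovPoly g a c ≠ 0 := fun h =>
    hc0 (eq_zero_of_stepanovPoly_eq_zero hg ha ha0 hind hcdeg h)
  refine (card_mul_le_natDegree_of_le_rootMultiplicity fun y hy => ?_).trans
    (natDegree_stepanovPoly_le g a hcdeg)
  rcases Nat.eq_zero_or_pos M with rfl | hM
  · exact Nat.zero_le _
  refine Nat.le_of_pred_lt
    ((lt_rootMultiplicity_iff_isRoot_iterate_derivative_of_mem_nonZeroDivisors hP0 ?_).2
      fun k hk => ?_)
  · rw [mem_nonZeroDivisors_iff_ne_zero, Ne, ZMod.natCast_eq_zero_iff, hp.dvd_factorial]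
    exact not_le.2 ((Nat.pred_lt hM.ne').trans_le hMp)
  · refine eval_iterate_derivative_stepanovPoly_eq_zero (hc k ?_) (hS y hy) fun i h => hθ i ?_
    · exact hk.trans_lt (Nat.pred_lt hM.ne')
    · rw [← hS y hy i, h, zero_pow hg0]

end Stepanov

section ShiftBound

/-- The elements `y` for which every shift `y + a i` has `g`-th power `θ i`. -/
def commonPowerFiber {p s : ℕ} [NeZero p] (g : ℕ) (a θ : Fin s → ZMod p) : Finset (ZMod p) :=
  Finset.univ.filter fun y => ∀ i, (y + a i) ^ g = θ i

/-- `B` bounds the number of `y` modulo `p` for which `s` given distinct nonzero shifts of `y`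
have prescribed nonzero `g`-th powers. -/
def HasShiftBound (p : ℕ) [NeZero p] (g s : ℕ) (B : ℝ) : Prop :=
  ∀ a θ : Fin s → ZMod p, Function.Injective a → (∀ i, a i ≠ 0) → (∀ i, θ i ≠ 0) →
    ((commonPowerFiber g a θ).card : ℝ) ≤ B

theorem log_ge_of_two_million_le {p : ℝ} (hp : 2 * 10 ^ 6 ≤ p) : 14.5 ≤ Real.log p := by
  have exp_le : Real.exp 29 ≤ 4 * 10 ^ 12 := by
    rw [show (29 : ℝ) = (29 : ℕ) * 1 by norm_num, Real.exp_nat_mul]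
    calc Real.exp 1 ^ 29 ≤ 2.7182818286 ^ 29 := by gcongr; exact Real.exp_one_lt_d9.le
      _ ≤ 4 * 10 ^ 12 := by norm_num
  have le_log : (29 : ℝ) ≤ Real.log ((2 * 10 ^ 6) ^ 2) :=
    (Real.le_log_iff_exp_le (by norm_num)).2 (exp_le.trans_eq (by norm_num))
  rw [Real.log_pow] at le_log
  have := Real.log_le_log (by norm_num) hp
  push_cast at le_log
  linarith

theorem natCast_sum_range_add_mul (b d M : ℕ) :
    ((∑ k ∈ Finset.range M, (b + k * d) : ℕ) : ℝ) = M * b + d * (M * (M - 1) / 2) := by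
  induction M with
  | zero => simp
  | succ M ih =>
    rw [Finset.sum_range_succ, Nat.cast_add, ih]
    push_cast
    ring

section Window

variable {R s l D t : ℝ}

/- Here `R = √p`, `D = ℓ ^ s`, `t = ⌊p / D⌋`, with `J` blocks and vanishing order `M`: there are
fewer linear conditions (left) than coefficients of the auxiliary polynomial (right). -/
theorem stepanov_dimension_lt (hs : 2 ≤ s) (hl : 2 ≤ l) (hRD : R ≤ D) (hDR : D < l * R)
    (hR : s + 1 + s * (s + 2) * l ≤ R) (hst : s ≤ t) (htR : t ≤ R) (hRt : R ^ 2 < D * (t + 1))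
    {J M : ℝ} (hJ : s / 2 + 1 ≤ J) (hJ' : J - 1 ≤ (s + 1) / 2) (hM : R < M) (hM' : M ≤ R + 1) :
    M * (t - s + J) + (s - 1) * (M * (M - 1) / 2) < (t - s + 1) * D * J := by
  have hR0 : 0 < R := by
    have : 0 ≤ s * (s + 2) * l := by positivity
    linarith
  have hD0 : 0 ≤ D := hR0.le.trans hRD
  have main_term : (t - s + 1) * D * (s / 2 + 1) ≤ (t - s + 1) * D * J :=
    mul_le_mul_of_nonneg_left hJ (mul_nonneg (by linarith) hD0)
  have linear_term : M * (t - s + J) ≤ (R + 1) * (t - s + 1 + (s + 1) / 2) :=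
    mul_le_mul hM' (by linarith) (by linarith) (by linarith)
  have quadratic_term : (s - 1) * (M * (M - 1) / 2) ≤ (s - 1) * ((R + 1) * R / 2) := by
    have : M * (M - 1) ≤ (R + 1) * R :=
      mul_le_mul hM' (by linarith) (by linarith) (by linarith)
    exact mul_le_mul_of_nonneg_left (by linarith) (by linarith)
  have sq_sub_le : R ^ 2 - s * (l * R) ≤ (t - s + 1) * D := by nlinarith
  have mul_le : (t - s + 1) * R ≤ (t - s + 1) * D :=
    mul_le_mul_of_nonneg_left hRD (by linarith)
  have half_mul_le : s / 2 * (R ^ 2 - s * (l * R)) ≤ s / 2 * ((t - s + 1) * D) :=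
    mul_le_mul_of_nonneg_left sq_sub_le (by linarith)
  have hR_mul : (s + 1 + s * (s + 2) * l) * R ≤ R * R := mul_le_mul_of_nonneg_right hR hR0.le
  have hl_mul : 2 * (s * R) ≤ l * (s * R) := mul_le_mul_of_nonneg_right hl (by positivity)
  have hs_mul : 2 * R ≤ s * R := mul_le_mul_of_nonneg_right hs hR0.le
  linarith

theorem window_quotient_le (hR0 : 0 < R) (hRD : R ≤ D) (ht : 0 ≤ t) (hDt : D * t ≤ R ^ 2) :
    t ≤ R := by
  refine le_of_mul_le_mul_left ?_ hR0
  nlinarith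

theorem le_window_quotient (hR0 : 0 < R) (hs : 2 ≤ s) (hl : 2 ≤ l) (hDR : D < l * R)
    (hR : s + 1 + s * (s + 2) * l ≤ R) (ht : 0 ≤ t) (hRt : R ^ 2 < D * (t + 1)) : s ≤ t := by
  have lt_mul : R < l * (t + 1) := by
    refine lt_of_mul_lt_mul_left ?_ hR0.le
    nlinarith
  have : s * (s + 2) < t + 1 := by
    refine lt_of_mul_lt_mul_right ?_ (zero_le_two.trans hl)
    nlinarith
  nlinarith

end Window

theorem not_pow_mul_eq {ℓ g p s t : ℕ} (hg : ℓ * g + 1 = p) (hℓ : 2 ≤ ℓ) (hs : s ≠ 0) :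
    ℓ ^ s * t ≠ p := by
  intro h
  have hdvd : ℓ ∣ p := h ▸ (dvd_pow_self ℓ hs).mul_right t
  rw [← hg, Nat.dvd_add_right (dvd_mul_right ℓ g), Nat.dvd_one] at hdvd
  omega

variable {p : ℕ} [Fact p.Prime] {ℓ g : ℕ}

/- Stepanov's method with vanishing order about `√p`, about `s / 2` blocks, and coefficients of
degree about `p / ℓ ^ s`. -/
theorem card_commonPowerFiber_mul_le {s : ℕ} (hg : ℓ * g + 1 = p) (hℓ : 2 ≤ ℓ) (hs : 2 ≤ s)
    (hup : √p ≤ (ℓ : ℝ) ^ s) (hlow : (ℓ : ℝ) ^ s < ℓ * √p)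
    (hR : (s : ℝ) + 1 + s * (s + 2) * ℓ ≤ √p) {a θ : Fin s → ZMod p}
    (ha : Function.Injective a) (ha0 : ∀ i, a i ≠ 0) (hθ : ∀ i, θ i ≠ 0) :
    (commonPowerFiber g a θ).card * (Nat.sqrt p + 1)
      ≤ Nat.sqrt p + p * ((s + 1) / 2) + s * (g * (ℓ - 1)) := by
  have hp := (Fact.out : p.Prime)
  have : NeZero ℓ := ⟨by omega⟩
  have : Nonempty (Fin s) := ⟨⟨0, by omega⟩⟩
  have hD : 0 < ℓ ^ s := by positivity
  have hR0 : 0 < √(p : ℝ) := Real.sqrt_pos.2 (mod_cast hp.pos)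
  have hR2 : √(p : ℝ) ^ 2 = p := Real.sq_sqrt (Nat.cast_nonneg p)
  have hs2 : (2 : ℝ) ≤ s := mod_cast hs
  have hℓ2 : (2 : ℝ) ≤ ℓ := mod_cast hℓ
  have hDt : (ℓ : ℝ) ^ s * (p / ℓ ^ s : ℕ) ≤ √p ^ 2 := by
    rw [hR2]; exact_mod_cast Nat.mul_div_le p _
  have hpDt : √p ^ 2 < (ℓ : ℝ) ^ s * ((p / ℓ ^ s : ℕ) + 1) := by
    rw [hR2]; exact_mod_cast Nat.lt_mul_div_succ p hD
  set t := p / ℓ ^ s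
  have htR : (t : ℝ) ≤ √p := window_quotient_le hR0 hup (Nat.cast_nonneg t) hDt
  have hstR : (s : ℝ) ≤ t :=
    le_window_quotient hR0 hs2 hℓ2 hlow hR (Nat.cast_nonneg t) hpDt
  have hst : s ≤ t := mod_cast hstR
  have htsqrt : t ≤ Nat.sqrt p := Real.nat_floor_real_sqrt_eq_nat_sqrt (a := p) ▸ Nat.le_floor htR
  have hdim : ∑ k ∈ Finset.range (Nat.sqrt p + 1),
      ((t - s + 1) + ((s + 1) / 2 + 1) - 1 + k * (Fintype.card (Fin s) - 1))
        < (t - s + 1) * ℓ ^ Fintype.card (Fin s) * ((s + 1) / 2 + 1) := by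
    have hJ : (s : ℝ) ≤ 2 * ((s + 1) / 2 : ℕ) := mod_cast (by omega : s ≤ 2 * ((s + 1) / 2))
    have hJ' : 2 * (((s + 1) / 2 : ℕ) : ℝ) ≤ s + 1 := mod_cast Nat.mul_div_le (s + 1) 2
    have hbase : t - s + 1 + ((s + 1) / 2 + 1) - 1 = t - s + ((s + 1) / 2 + 1) := by omega
    rw [Fintype.card_fin, hbase, ← Nat.cast_lt (α := ℝ), natCast_sum_range_add_mul]
    push_cast [Nat.cast_sub hst, Nat.cast_sub (one_le_two.trans hs)]
    exact stepanov_dimension_lt hs2 hℓ2 hup hlow hR hstR htR hpDt (by linarith) (by linarith)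
      Real.real_sqrt_lt_nat_sqrt_succ (by linarith [Real.nat_sqrt_le_real_sqrt (a := p)])
  refine (card_mul_le_of_stepanov hg ha ha0 hθ (A := t - s + 1) (by omega)
    (Nat.sqrt_lt_self hp.one_lt) hdim ?_ fun y hy => (Finset.mem_filter.1 hy).2).trans ?_
  · rw [Fintype.card_fin, show t - s + 1 - 1 + s = t by omega]
    exact (Nat.mul_div_le p _).lt_of_ne (not_pow_mul_eq hg hℓ (by omega))
  · rw [Fintype.card_fin]
    gcongr <;> omega

theorem hasShiftBound_of_pow_window {s : ℕ} (hg : ℓ * g + 1 = p) (hℓ : 2 ≤ ℓ) (hs : 2 ≤ s)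
    (hup : √p ≤ (ℓ : ℝ) ^ s) (hlow : (ℓ : ℝ) ^ s < ℓ * √p)
    (hR : (s : ℝ) + 1 + s * (s + 2) * ℓ ≤ √p) :
    HasShiftBound p g s (√p * ((s + 1) / 2 + s * (1 - 1 / ℓ)) + 1) := by
  intro a θ ha ha0 hθ
  have hR0 : 0 < √(p : ℝ) := Real.sqrt_pos.2 (mod_cast (Fact.out : p.Prime).pos)
  have hR2 : √(p : ℝ) ^ 2 = p := Real.sq_sqrt (Nat.cast_nonneg p)
  have estimate : ((commonPowerFiber g a θ).card : ℝ) * (Nat.sqrt p + 1)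
      ≤ Nat.sqrt p + p * ((s + 1) / 2 : ℕ) + s * (g * (ℓ - 1 : ℕ)) :=
    mod_cast card_commonPowerFiber_mul_le hg hℓ hs hup hlow hR ha ha0 hθ
  have half_le : (((s + 1) / 2 : ℕ) : ℝ) ≤ (s + 1) / 2 := mod_cast Nat.cast_div_le
  have hℓ0 : (0 : ℝ) < ℓ := by positivity
  have g_mul_le : (g : ℝ) * (ℓ - 1 : ℕ) ≤ p * (1 - 1 / ℓ) := by
    rw [Nat.cast_sub (by omega), Nat.cast_one, one_sub_div hℓ0.ne', ← mul_div_assoc,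
      le_div_iff₀ hℓ0, mul_right_comm, ← hg]
    push_cast
    have : (1 : ℝ) ≤ ℓ := mod_cast (by omega : 1 ≤ ℓ)
    nlinarith
  refine le_of_mul_le_mul_right ?_ hR0
  calc ((commonPowerFiber g a θ).card : ℝ) * √p
      ≤ (commonPowerFiber g a θ).card * (Nat.sqrt p + 1) := by
        gcongr; exact Real.real_sqrt_lt_nat_sqrt_succ.le
    _ ≤ √p + p * ((s + 1) / 2) + s * (p * (1 - 1 / ℓ)) := by
        refine estimate.trans ?_
        gcongr
        exact Real.nat_sqrt_le_real_sqrt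
    _ = (√p * ((s + 1) / 2 + s * (1 - 1 / ℓ)) + 1) * √p := by
        rw [← hR2]; simp only [Real.sqrt_sq hR0.le]; ring

theorem quadratic_le_two_pow {s : ℕ} (hs : 9 ≤ s) : s * (s + 2) + s ≤ 2 ^ (s - 2) := by
  induction s, hs using Nat.le_induction with
  | base => norm_num
  | succ s hs ih =>
    rw [show s + 1 - 2 = (s - 2) + 1 by omega, pow_succ]
    nlinarith

theorem quadratic_mul_le_pow {ℓ s : ℕ} (hℓ : 2 ≤ ℓ) (hs : 3 ≤ s) (h : 17 ≤ ℓ ∨ 9 ≤ s) :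
    s + 1 + s * (s + 2) * ℓ ≤ ℓ ^ (s - 1) := by
  rw [show s - 1 = s - 2 + 1 by omega, pow_succ]
  rcases Nat.lt_or_ge s 9 with hs9 | hs9
  · have hℓ17 : 17 ≤ ℓ := h.resolve_right (by omega)
    have hle : s * (s + 2) + 1 ≤ 17 ^ (s - 2) := by interval_cases s <;> norm_num
    nlinarith [hle.trans (Nat.pow_le_pow_left hℓ17 (s - 2))]
  · nlinarith [(quadratic_le_two_pow hs9).trans (Nat.pow_le_pow_left hℓ (s - 2))]

theorem window_condition {s : ℕ} {R : ℝ} (hℓ : 2 ≤ ℓ) (hs : 2 ≤ s) (hR : 1414 ≤ R)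
    (hℓR : (ℓ : ℝ) ≤ R / 9) (hlow : (ℓ : ℝ) ^ (s - 1) < R) :
    (s : ℝ) + 1 + s * (s + 2) * ℓ ≤ R := by
  rcases hs.eq_or_lt with rfl | hs3
  · push_cast; linarith
  by_cases hlarge : 17 ≤ ℓ ∨ 9 ≤ s
  · exact (by exact_mod_cast quadratic_mul_le_pow hℓ hs3 hlarge :
      (s : ℝ) + 1 + s * (s + 2) * ℓ ≤ (ℓ : ℝ) ^ (s - 1)).trans hlow.le
  · have hs8 : s ≤ 8 := by omega
    have hℓ16 : ℓ ≤ 16 := by omega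
    have : s + 1 + s * (s + 2) * ℓ ≤ 8 + 1 + 8 * (8 + 2) * 16 := by gcongr
    exact le_trans (mod_cast this.trans (by norm_num)) hR

theorem card_commonPowerFiber_le {s : ℕ} [NeZero s] (hg : 0 < g) (a θ : Fin s → ZMod p) :
    (commonPowerFiber g a θ).card ≤ g := by
  classical
  calc (commonPowerFiber g a θ).card
      = ((commonPowerFiber g a θ).image (· + a 0)).card :=
        (Finset.card_image_of_injective _ (add_left_injective _)).symm
    _ ≤ (Polynomial.nthRoots g (θ 0)).toFinset.card := by
        refine Finset.card_le_card fun x hx => ?_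
        obtain ⟨y, hy, rfl⟩ := Finset.mem_image.1 hx
        rw [Multiset.mem_toFinset, Polynomial.mem_nthRoots hg]
        exact (Finset.mem_filter.1 hy).2 0
    _ ≤ g := (Multiset.toFinset_card_le _).trans (Polynomial.card_nthRoots _ _)

theorem log_three_gt : 1.0974 < Real.log 3 := by
  have hlog : Real.log (2 ^ 19 : ℝ) ≤ Real.log (3 ^ 12) :=
    Real.log_le_log (by norm_num) (by norm_num)
  rw [Real.log_pow, Real.log_pow] at hlog
  push_cast at hlog
  linarith [Real.log_two_gt_d9]

/- Both coefficients come from `s - 1 ≤ log p / (2 log ℓ)`: the worst case is `ℓ = 2`, where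
`1 / (2 log 2) < 0.7214`. -/
theorem window_exponent_bounds {s : ℕ} {L : ℝ} (hℓ : 2 ≤ ℓ) (hL : 14.5 ≤ L)
    (hlog : ((s : ℝ) - 1) * Real.log ℓ ≤ L / 2) :
    (s : ℝ) ≤ 0.7214 * L + 1 ∧ (s + 1) / 2 + s * (1 - 1 / (ℓ : ℝ)) ≤ 0.7214 * L + 1.5 := by
  rcases hℓ.eq_or_lt with rfl | hℓ3
  · have hs : (s : ℝ) - 1 ≤ 0.7214 * L := by
      push_cast at hlog
      nlinarith [Real.log_two_gt_d9]
    push_cast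
    constructor <;> linarith
  · have hlogℓ : 1.0974 < Real.log ℓ :=
      log_three_gt.trans_le (Real.log_le_log (by norm_num) (mod_cast hℓ3))
    have hs : (s : ℝ) - 1 ≤ 0.457 * L := by nlinarith
    have hinv : (s : ℝ) * (1 - 1 / (ℓ : ℝ)) ≤ s :=
      mul_le_of_le_one_right (Nat.cast_nonneg s) (sub_le_self _ (by positivity))
    constructor <;> linarith

theorem exists_window_exponent {R : ℝ} (hℓ : 2 ≤ ℓ) (hR : 1 < R) (hℓR : ℓ < R) :
    ∃ s : ℕ, 2 ≤ s ∧ (ℓ : ℝ) ^ (s - 1) < R ∧ R ≤ (ℓ : ℝ) ^ s := by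
  classical
  have hex : ∃ s : ℕ, R ≤ (ℓ : ℝ) ^ s :=
    (pow_unbounded_of_one_lt R (mod_cast hℓ : (1 : ℝ) < ℓ)).imp fun _ => le_of_lt
  have hs2 : 2 ≤ Nat.find hex := by
    rw [Nat.le_find_iff]
    intro m hm
    interval_cases m
    · simpa using hR
    · simpa using hℓR
  exact ⟨Nat.find hex, hs2, not_le.1 (Nat.find_min hex (by omega)), Nat.find_spec hex⟩

theorem exists_hasShiftBound (hg : ℓ * g + 1 = p) (hℓ : 2 ≤ ℓ) (hp : 2 * 10 ^ 6 ≤ p) :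
    ∃ s : ℕ, 1 ≤ s ∧ (s : ℝ) ≤ 0.7214 * Real.log p + 1 ∧
      HasShiftBound p g s ((0.7214 * Real.log p + 1.51) * √p) := by
  have hpR : (2 * 10 ^ 6 : ℝ) ≤ p := mod_cast hp
  have hL : 14.5 ≤ Real.log p := log_ge_of_two_million_le hpR
  have hR2 : √(p : ℝ) ^ 2 = p := Real.sq_sqrt (Nat.cast_nonneg p)
  have hR : 1414 ≤ √(p : ℝ) := Real.le_sqrt_of_sq_le (by linarith)
  rcases lt_or_ge (√(p : ℝ) / 9) ℓ with hlarge | hsmall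
  · refine ⟨1, le_rfl, by push_cast; linarith, fun a θ _ _ _ => ?_⟩
    have hg0 : 0 < g := by
      rw [pos_iff_ne_zero]
      rintro rfl
      omega
    have hcard : ((commonPowerFiber g a θ).card : ℝ) ≤ g :=
      mod_cast card_commonPowerFiber_le hg0 a θ
    have hprod : (ℓ : ℝ) * g + 1 = √p ^ 2 := by rw [hR2]; exact_mod_cast hg
    have hg9 : (g : ℝ) ≤ 9 * √p := by
      refine le_of_mul_le_mul_right ?_ (by linarith : (0 : ℝ) < √p)
      nlinarith [mul_le_mul_of_nonneg_left hlarge.le (Nat.cast_nonneg g : (0 : ℝ) ≤ g)]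
    nlinarith
  · obtain ⟨s, hs, hlow, hup⟩ :=
      exists_window_exponent hℓ (by linarith : 1 < √(p : ℝ)) (by linarith)
    have hlow' : (ℓ : ℝ) ^ s < ℓ * √p := by
      rw [← Nat.sub_add_cancel (one_le_two.trans hs), pow_succ']
      gcongr
    have hlog : ((s : ℝ) - 1) * Real.log ℓ ≤ Real.log p / 2 := by
      have := Real.log_le_log (by positivity) hlow.le
      rwa [Real.log_pow, Nat.cast_sub (by omega), Nat.cast_one,
        Real.log_sqrt (Nat.cast_nonneg p)] at this
    obtain ⟨hsL, hcoeff⟩ := window_exponent_bounds hℓ hL hlog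
    refine ⟨s, by omega, hsL, fun a θ ha ha0 hθ => ?_⟩
    refine (hasShiftBound_of_pow_window hg hℓ hs hup hlow'
      (window_condition hℓ hs hR hsmall hlow) a θ ha ha0 hθ).trans ?_
    nlinarith

end ShiftBound

/-! ### Almost constant blocks and Farey points -/

section Blocks

/-- `w` starts a block of `h` consecutive elements on which `v ↦ v ^ g` is constant and nonzero,
up to at most `k` exceptions. -/
def IsAlmostConstantBlock {p : ℕ} (g h k : ℕ) (w : ZMod p) : Prop :=
  ∃ E : Finset ℕ, E.card ≤ k ∧ ∃ c : ZMod p, c ≠ 0 ∧ ∀ m < h, m ∉ E → (w + m) ^ g = c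

open Classical in
/-- The starting points modulo `p` of the blocks of length `h` on which `v ↦ v ^ g` is constant
and nonzero up to at most `k` exceptions. -/
noncomputable def almostConstantBlocks (p : ℕ) [NeZero p] (g h k : ℕ) : Finset (ZMod p) :=
  Finset.univ.filter (IsAlmostConstantBlock g h k)

theorem mem_almostConstantBlocks {p : ℕ} [NeZero p] {g h k : ℕ} {w : ZMod p} :
    w ∈ almostConstantBlocks p g h k ↔ IsAlmostConstantBlock g h k w := by
  simp [almostConstantBlocks]

variable {p : ℕ} [Fact p.Prime] {g h k s : ℕ}

theorem IsAlmostConstantBlock.reflect {w : ZMod p} (hw : IsAlmostConstantBlock g (h + 1) k w) :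
    IsAlmostConstantBlock g (h + 1) k (-w - (h : ZMod p)) := by
  classical
  obtain ⟨E, hE, c, hc, hwc⟩ := hw
  refine ⟨E.image (h - ·), Finset.card_image_le.trans hE, (-1) ^ g * c,
    mul_ne_zero (pow_ne_zero _ (neg_ne_zero.2 one_ne_zero)) hc, fun m hm hmE => ?_⟩
  rw [← hwc (h - m) (by omega) fun hmem =>
    hmE (Finset.mem_image.2 ⟨h - m, hmem, by omega⟩), ← mul_pow, Nat.cast_sub (by omega)]
  ring

/- Dividing by `(w + n 0) ^ g` turns the condition on `w` into one on `y = (w + n 0)⁻¹`: the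
element `y + (n (i + 1) - n 0)⁻¹` has `g`-th power `((n (i + 1) - n 0) ^ g)⁻¹`. -/
theorem card_le_of_hasShiftBound {B : ℝ} (hB : HasShiftBound p g s B) (hg : g ≠ 0)
    {n : Fin (s + 1) → ZMod p} (hn : Function.Injective n) {G : Finset (ZMod p)}
    (hG : ∀ w ∈ G, ∃ c : ZMod p, c ≠ 0 ∧ ∀ i, (w + n i) ^ g = c) : (G.card : ℝ) ≤ B := by
  classical
  have hdiff : ∀ i : Fin s, n i.succ - n 0 ≠ 0 := fun i h =>
    Fin.succ_ne_zero i (hn (sub_eq_zero.1 h))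
  have hinj : Function.Injective fun w : ZMod p => (w + n 0)⁻¹ :=
    inv_injective.comp (add_left_injective (n 0))
  rw [← Finset.card_image_of_injective G hinj]
  refine le_trans (Nat.cast_le.2 (Finset.card_le_card fun y hy => ?_))
    (hB (fun i => (n i.succ - n 0)⁻¹) (fun i => ((n i.succ - n 0) ^ g)⁻¹)
      (fun i j hij => Fin.succ_injective _ (hn (sub_left_injective (inv_injective hij))))
      (fun i => inv_ne_zero (hdiff i)) fun i => inv_ne_zero (pow_ne_zero _ (hdiff i)))
  obtain ⟨w, hw, rfl⟩ := Finset.mem_image.1 hy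
  obtain ⟨c, hc, hwc⟩ := hG w hw
  have hw0 : w + n 0 ≠ 0 := fun h0 => hc (by rw [← hwc 0, h0, zero_pow hg])
  refine Finset.mem_filter.2 ⟨Finset.mem_univ _, fun i => ?_⟩
  have hi := hdiff i
  have factor : (w + n 0)⁻¹ + (n i.succ - n 0)⁻¹
      = (w + n i.succ) * (w + n 0)⁻¹ * (n i.succ - n 0)⁻¹ := by
    field_simp
    ring
  simp only [factor, mul_pow, inv_pow, hwc, mul_inv_cancel₀ hc, one_mul]

theorem exists_powersetCard_of_isAlmostConstantBlock {w : ZMod p}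
    (hw : IsAlmostConstantBlock g (s + k) k w) :
    ∃ S ∈ (Finset.range (s + k)).powersetCard s,
      ∃ c : ZMod p, c ≠ 0 ∧ ∀ m ∈ S, (w + m) ^ g = c := by
  obtain ⟨E, hE, c, hc, hwc⟩ := hw
  have hcard : s ≤ (Finset.range (s + k) \ E).card := by
    have := Finset.le_card_sdiff E (Finset.range (s + k))
    rw [Finset.card_range] at this
    omega
  obtain ⟨S, hS, hScard⟩ := Finset.exists_subset_card_eq hcard
  refine ⟨S, Finset.mem_powersetCard.2 ⟨hS.trans Finset.sdiff_subset, hScard⟩, c, hc,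
    fun m hm => ?_⟩
  obtain ⟨hmr, hmE⟩ := Finset.mem_sdiff.1 (hS hm)
  exact hwc m (Finset.mem_range.1 hmr) hmE

theorem card_almostConstantBlocks_le {B : ℝ} (hB : HasShiftBound p g s B) (hg : g ≠ 0)
    (hp : s + 1 + k ≤ p) :
    ((almostConstantBlocks p g (s + 1 + k) k).card : ℝ) ≤ (s + 1 + k).choose k * B := by
  classical
  let blocksOn (S : Finset ℕ) : Finset (ZMod p) :=
    Finset.univ.filter fun w => ∃ c : ZMod p, c ≠ 0 ∧ ∀ m ∈ S, (w + m) ^ g = c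
  let supports := (Finset.range (s + 1 + k)).powersetCard (s + 1)
  have hcover : almostConstantBlocks p g (s + 1 + k) k ⊆ supports.biUnion blocksOn := by
    intro w hw
    obtain ⟨S, hS, hSc⟩ :=
      exists_powersetCard_of_isAlmostConstantBlock (mem_almostConstantBlocks.1 hw)
    exact Finset.mem_biUnion.2 ⟨S, hS, Finset.mem_filter.2 ⟨Finset.mem_univ w, hSc⟩⟩
  have hblocksOn : ∀ S ∈ supports, ((blocksOn S).card : ℝ) ≤ B := by
    intro S hS
    obtain ⟨hSsub, hScard⟩ := Finset.mem_powersetCard.1 hS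
    let e := S.orderEmbOfFin hScard
    have he : ∀ i, e i ∈ S := Finset.orderEmbOfFin_mem S hScard
    have hlt : ∀ i, e i < p := fun i => (Finset.mem_range.1 (hSsub (he i))).trans_le hp
    refine card_le_of_hasShiftBound (n := fun i => e i) hB hg (fun i j hij => ?_) fun w hw => ?_
    · exact e.injective (((ZMod.natCast_eq_natCast_iff _ _ _).1 hij).eq_of_lt_of_lt (hlt i) (hlt j))
    · obtain ⟨-, c, hc, hwc⟩ := Finset.mem_filter.1 hw
      exact ⟨c, hc, fun i => hwc _ (he i)⟩
  calc ((almostConstantBlocks p g (s + 1 + k) k).card : ℝ)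
      ≤ ∑ S ∈ supports, ((blocksOn S).card : ℝ) :=
        mod_cast (Finset.card_le_card hcover).trans Finset.card_biUnion_le
    _ ≤ supports.card • B := Finset.sum_le_card_nsmul _ _ _ hblocksOn
    _ = (s + 1 + k).choose k * B := by
        rw [Finset.card_powersetCard, Finset.card_range, nsmul_eq_mul, Nat.choose_symm_add]

end Blocks

section CoprimeValues

theorem sub_sub_one_le_card_Ioo_floor_ceil (a b : ℝ) :
    b - a - 1 ≤ (Finset.Ioo ⌊a⌋ ⌈b⌉).card := by
  have hle : ⌈b⌉ - ⌊a⌋ - 1 ≤ ((Finset.Ioo ⌊a⌋ ⌈b⌉).card : ℤ) := by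
    rw [Int.card_Ioo]
    exact Int.self_le_toNat _
  have : ((⌈b⌉ - ⌊a⌋ - 1 : ℤ) : ℝ) ≤ (Finset.Ioo ⌊a⌋ ⌈b⌉).card := mod_cast hle
  push_cast at this
  linarith [Int.le_ceil b, Int.floor_le a]

theorem div_sub_one_le_card_filter_intCast_eq {u : ℕ} [NeZero u] (a l : ℝ) (c : ZMod u) :
    l / u - 1 ≤ ((Finset.Ioo ⌊a⌋ ⌈a + l⌉).filter fun x : ℤ => (x : ZMod u) = c).card := by
  have hu : (0 : ℝ) < u := mod_cast Nat.pos_of_neZero u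
  have hinj : Function.Injective fun m : ℤ => (c.val : ℤ) + u * m := fun m m' h =>
    mul_left_cancel₀ (mod_cast NeZero.ne u) (add_left_cancel h)
  calc l / u - 1 = (a + l - c.val) / u - (a - c.val) / u - 1 := by ring
    _ ≤ (Finset.Ioo ⌊(a - c.val) / u⌋ ⌈(a + l - c.val) / u⌉).card :=
        sub_sub_one_le_card_Ioo_floor_ceil _ _
    _ = ((Finset.Ioo ⌊(a - c.val) / u⌋ ⌈(a + l - c.val) / u⌉).image _).card := by
        rw [Finset.card_image_of_injective _ hinj]
    _ ≤ _ := by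
        refine Nat.cast_le.2 (Finset.card_le_card fun x hx => ?_)
        obtain ⟨m, hm, rfl⟩ := Finset.mem_image.1 hx
        rw [Finset.mem_Ioo, Int.floor_lt, Int.lt_ceil, div_lt_iff₀ hu, lt_div_iff₀ hu] at hm
        rw [Finset.mem_filter, Finset.mem_Ioo, Int.floor_lt, Int.lt_ceil]
        push_cast
        exact ⟨⟨by linarith, by linarith⟩, by simp⟩

theorem exists_coprime_add (d : ℕ) {u : ℕ} (hu : u ≠ 0) :
    ∃ e : ℕ, (d + e).Coprime u ∧ ∀ r : ℕ, r.Prime → r ∣ u → ¬ r ∣ d → r ∣ e := by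
  classical
  let primesOffD := u.primeFactors.filter fun r => ¬ r ∣ d
  have hmem : ∀ r : ℕ, r.Prime → r ∣ u → ¬ r ∣ d → r ∣ ∏ q ∈ primesOffD, q := fun r hr hru hrd =>
    Finset.dvd_prod_of_mem _ (Finset.mem_filter.2 ⟨hr.mem_primeFactors hru hu, hrd⟩)
  refine ⟨∏ q ∈ primesOffD, q, Nat.coprime_of_dvd fun r hr hrsum hru => ?_, hmem⟩
  by_cases hrd : r ∣ d
  · obtain ⟨q, hq, hrq⟩ :=
      (Prime.dvd_finsetProd_iff hr.prime _).1 ((Nat.dvd_add_right hrd).1 hrsum)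
    obtain ⟨hqu, hqd⟩ := Finset.mem_filter.1 hq
    rw [(Nat.prime_dvd_prime_iff_eq hr (Nat.prime_of_mem_primeFactors hqu)).1 hrq] at hrd
    exact hqd hrd
  · exact hrd ((Nat.dvd_add_left (hmem r hr hru hrd)).1 hrsum)

theorem gcd_eq_one_of_isUnit_intCast {u d e : ℕ} {τ x : ℤ}
    (hτ : ∀ r : ℕ, r.Prime → r ∣ u → r ∣ d → ¬ (r : ℤ) ∣ τ)
    (he : ∀ r : ℕ, r.Prime → r ∣ u → ¬ r ∣ d → r ∣ e)
    (hx : IsUnit ((((d + e : ℕ) : ℤ) * x - τ : ℤ) : ZMod u)) : Int.gcd (d * x - τ) u = 1 := by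
  rw [ZMod.coe_int_isUnit_iff_isCoprime, Int.isCoprime_iff_gcd_eq_one] at hx
  rw [Int.gcd_eq_natAbs]
  refine Nat.coprime_of_dvd fun r hr hrx hru => ?_
  replace hrx : (r : ℤ) ∣ d * x - τ := Int.natCast_dvd.2 hrx
  replace hru : r ∣ u := by simpa using hru
  by_cases hrd : r ∣ d
  · refine hτ r hr hru hrd ((dvd_sub_right ?_).1 hrx)
    exact (Int.natCast_dvd_natCast.2 hrd).mul_right x
  · have hre : (r : ℤ) ∣ e * x := (Int.natCast_dvd_natCast.2 (he r hr hru hrd)).mul_right x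
    have hsum : (r : ℤ) ∣ (d + e : ℕ) * x - τ := by
      have := dvd_add hrx hre
      rwa [sub_add_eq_add_sub, ← add_mul, ← Nat.cast_add] at this
    have hdvd := Int.dvd_coe_gcd (Int.natCast_dvd_natCast.2 hru) hsum
    rw [hx] at hdvd
    exact hr.one_lt.ne' (by exact_mod_cast Int.eq_one_of_dvd_one (by positivity) hdvd)

theorem totient_mul_le_card_filter_gcd_eq_one {u : ℕ} (hu : u ≠ 0) {d : ℕ} {τ : ℤ}
    (hτ : ∀ r : ℕ, r.Prime → r ∣ u → r ∣ d → ¬ (r : ℤ) ∣ τ) (a l : ℝ) :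
    u.totient * (l / u - 1)
      ≤ ((Finset.Ioo ⌊a⌋ ⌈a + l⌉).filter fun x : ℤ => Int.gcd (d * x - τ) u = 1).card := by
  classical
  have : NeZero u := ⟨hu⟩
  obtain ⟨e, hcop, he⟩ := exists_coprime_add d hu
  let δ : (ZMod u)ˣ := ZMod.unitOfCoprime (d + e) hcop
  have hδ : (δ : ZMod u) = (d + e : ℕ) := ZMod.coe_unitOfCoprime _ hcop
  let solution (v : (ZMod u)ˣ) : ZMod u := δ⁻¹ * (v + τ)
  let fiber (v : (ZMod u)ˣ) : Finset ℤ :=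
    (Finset.Ioo ⌊a⌋ ⌈a + l⌉).filter fun x : ℤ => (x : ZMod u) = solution v
  have hdisj : ((Finset.univ : Finset (ZMod u)ˣ) : Set (ZMod u)ˣ).PairwiseDisjoint fiber := by
    refine fun v _ v' _ hvv => Finset.disjoint_left.2 fun x hx hx' => hvv (Units.ext ?_)
    have : solution v = solution v' :=
      (Finset.mem_filter.1 hx).2.symm.trans (Finset.mem_filter.1 hx').2
    exact add_right_cancel (δ⁻¹.isUnit.mul_left_cancel this)
  calc (u.totient : ℝ) * (l / u - 1) = ∑ _v : (ZMod u)ˣ, (l / u - 1 : ℝ) := by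
        rw [Finset.sum_const, Finset.card_univ, ZMod.card_units_eq_totient, nsmul_eq_mul]
    _ ≤ ∑ v, ((fiber v).card : ℝ) :=
        Finset.sum_le_sum fun v _ => div_sub_one_le_card_filter_intCast_eq a l _
    _ = ((Finset.univ.biUnion fiber).card : ℝ) := by
        rw [Finset.card_biUnion hdisj, Nat.cast_sum]
    _ ≤ _ := by
        refine Nat.cast_le.2 (Finset.card_le_card fun x hx => ?_)
        obtain ⟨v, -, hv⟩ := Finset.mem_biUnion.1 hx
        obtain ⟨hxI, hxv⟩ := Finset.mem_filter.1 hv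
        refine Finset.mem_filter.2 ⟨hxI, gcd_eq_one_of_isUnit_intCast hτ he ?_⟩
        have : (((d + e : ℕ) : ℤ) * x - τ : ℤ) = (v : ZMod u) := by
          rw [Int.cast_sub, Int.cast_mul, Int.cast_natCast]
          rw [hxv, ← hδ, Units.mul_inv_cancel_left, add_sub_cancel_right]
        exact this ▸ v.isUnit

end CoprimeValues

section FareyPoints

theorem pow_eq_one_of_forall_prime_dvd {R : Type*} [CommSemiring R] {g z : ℕ} (hz : z ≠ 0)
    (hprime : ∀ r : ℕ, r.Prime → r ∣ z → (r : R) ^ g = 1) : (z : R) ^ g = 1 := by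
  induction z using induction_on_primes with
  | zero => exact absurd rfl hz
  | one => simp
  | prime_mul r a hr ih =>
    rw [Nat.cast_mul, mul_pow, hprime r hr (Dvd.intro _ rfl), one_mul]
    exact ih (right_ne_zero_of_mul hz) fun q hq hqa => hprime q hq (hqa.mul_left r)

theorem card_filter_dvd_add_mul_le_one {r z e h : ℕ} (hr : r.Prime) (hcop : z.Coprime e)
    (hh : h ≤ r) : ((Finset.range h).filter fun m => r ∣ z + e * m).card ≤ 1 := by
  refine Finset.card_le_one.2 fun m hm m' hm' => ?_
  simp only [Finset.mem_filter, Finset.mem_range] at hm hm'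
  have hre : r.Coprime e := (hr.coprime_iff_not_dvd).2 fun hre =>
    hr.not_dvd_one (hcop ▸ Nat.dvd_gcd ((Nat.dvd_add_left (hre.mul_right m)).1 hm.2) hre)
  have hmod : e * m ≡ e * m' [MOD r] := Nat.ModEq.add_left_cancel' z
    (((Nat.modEq_zero_iff_dvd).2 hm.2).trans ((Nat.modEq_zero_iff_dvd).2 hm'.2).symm)
  exact (hmod.cancel_left_of_coprime hre).eq_of_lt_of_lt (hm.1.trans_le hh) (hm'.1.trans_le hh)

/-- The weighted count `∑ (X / d - 1)` over the reduced fractions `t / d` in `[0, 1)` with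
`d ≤ X`. It measures how many points lie just above the multiples of `p / d`. -/
noncomputable def fareyWeight (X : ℝ) : ℝ :=
  ∑ d ∈ Finset.Icc 1 ⌊X⌋₊, (d.totient : ℝ) * (X / d - 1)

/-- The reduced fractions `t / d` in `[0, 1)` with `d ≤ X`, encoded as pairs `⟨d, t⟩`. -/
noncomputable def fareyFractions (X : ℝ) : Finset (Σ _ : ℕ, ℕ) :=
  (Finset.Icc 1 ⌊X⌋₊).sigma fun d => (Finset.range d).filter d.Coprime

/-- The integer `x` lies above `t * p / d`, so close that the numbers
`z + d * u * m = d * (x + u * m) - t * p`, for `m ≤ h`, are positive and smaller than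
`X * u * (h + 1)`; moreover `t / d` is a reduced fraction with `d ≤ X`, and `z` is coprime
to `u`. -/
structure IsFareyPoint (p u h : ℕ) (X : ℝ) (d t : ℕ) (x : ℤ) (z : ℕ) : Prop where
  den_pos : 0 < d
  den_le : (d : ℝ) ≤ X
  lt_den : t < d
  coprime_den : t.Coprime d
  numerator_eq : (z : ℤ) = d * x - t * p
  numerator_pos : 0 < z
  add_lt : (z : ℝ) + d * u * h < X * u * (h + 1)
  coprime_numerator : z.Coprime u

/-- All triples `⟨⟨d, t⟩, x⟩` for which `x` is a Farey point near `t * p / d`. -/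
noncomputable def fareyPoints (p u h : ℕ) (X : ℝ) : Finset (Σ _ : (Σ _ : ℕ, ℕ), ℤ) :=
  (fareyFractions X).sigma fun i =>
    (Finset.Ioo ⌊(i.2 * p / i.1 : ℝ)⌋
      ⌈(i.2 * p / i.1 + (X * u * (h + 1) / i.1 - u * h) : ℝ)⌉).filter fun x : ℤ =>
        Int.gcd (i.1 * x - i.2 * p) u = 1

variable {p u h d t z d' t' z' : ℕ} {X : ℝ} {x x' : ℤ}

theorem exists_isFareyPoint_of_mem {y : Σ _ : (Σ _ : ℕ, ℕ), ℤ} (hy : y ∈ fareyPoints p u h X) :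
    ∃ z, IsFareyPoint p u h X y.1.1 y.1.2 y.2 z := by
  obtain ⟨⟨d, t⟩, x⟩ := y
  simp only [fareyPoints, fareyFractions, Finset.mem_sigma, Finset.mem_Icc, Finset.mem_filter,
    Finset.mem_range, Finset.mem_Ioo, Int.floor_lt, Int.lt_ceil] at hy
  obtain ⟨⟨⟨hd, hdX⟩, htd, hcop⟩, ⟨hlo, hhi⟩, hgcd⟩ := hy
  have hdpos : (0 : ℝ) < d := mod_cast hd
  have hpos : (0 : ℤ) < d * x - t * p := by
    rw [div_lt_iff₀ hdpos] at hlo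
    have : (t * p : ℤ) < x * d := mod_cast hlo
    linarith
  obtain ⟨z, hz⟩ := Int.eq_ofNat_of_zero_le hpos.le
  refine ⟨z, hd, (Nat.le_floor_iff' (Nat.one_le_iff_ne_zero.1 hd)).1 hdX, htd, hcop.symm, hz.symm,
    by simpa [hz] using hpos, ?_, by rwa [hz] at hgcd⟩
  have hzr : (z : ℝ) = d * x - t * p := mod_cast hz.symm
  have hscaled := mul_lt_mul_of_pos_left hhi hdpos
  rw [mul_add, mul_sub, mul_div_cancel₀ _ hdpos.ne', mul_div_cancel₀ _ hdpos.ne'] at hscaled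
  linarith

theorem IsFareyPoint.one_le (hx : IsFareyPoint p u h X d t x z) : 1 ≤ X :=
  (Nat.one_le_cast.2 hx.den_pos).trans hx.den_le

theorem IsFareyPoint.numerator_lt (hx : IsFareyPoint p u h X d t x z) :
    (z : ℝ) < X * u * (h + 1) :=
  (le_add_of_nonneg_right (by positivity)).trans_lt hx.add_lt

theorem mul_bound_le (hXp : X ^ 2 * u * (h + 2) ≤ p) : X * (X * u * (h + 1)) ≤ p := by
  have : 0 ≤ X ^ 2 * u := by positivity
  linarith

theorem IsFareyPoint.den_mul_lt (hx : IsFareyPoint p u h X d t x z)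
    (hx' : IsFareyPoint p u h X d' t' x' z') (hXp : X ^ 2 * u * (h + 2) ≤ p) : d' * z < p := by
  have hX : 0 < X := one_pos.trans_le hx.one_le
  have : (d' * z : ℝ) < p := calc
    (d' * z : ℝ) ≤ X * z := by gcongr; exact hx'.den_le
    _ < X * (X * u * (h + 1)) := by gcongr; exact hx.numerator_lt
    _ ≤ p := mul_bound_le hXp
  exact_mod_cast this

theorem IsFareyPoint.den_lt (hx : IsFareyPoint p u h X d t x z)
    (hXp : X ^ 2 * u * (h + 2) ≤ p) : d < p :=
  (Nat.le_mul_of_pos_right d hx.numerator_pos).trans_lt (hx.den_mul_lt hx hXp)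

theorem IsFareyPoint.coprime_den_mul [Fact p.Prime] (hx : IsFareyPoint p u h X d t x z)
    (hXp : X ^ 2 * u * (h + 2) ≤ p) : z.Coprime (d * u) := by
  have hpd : p.Coprime d :=
    Nat.coprime_of_lt_prime hx.den_pos.ne' (hx.den_lt hXp) Fact.out
  refine Nat.Coprime.mul_right (Nat.isCoprime_iff_coprime.1 ?_) hx.coprime_numerator
  rw [hx.numerator_eq, sub_eq_neg_add, IsCoprime.add_mul_left_left_iff, IsCoprime.neg_left_iff]
  exact mod_cast Nat.isCoprime_iff_coprime.2 (hx.coprime_den.mul_left hpd)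

theorem IsFareyPoint.isAlmostConstantBlock [Fact p.Prime] {g : ℕ} {Q : Finset ℕ}
    (hQ : ∀ r ∈ Q, r.Prime ∧ h + 1 ≤ r) (hpu : ¬ p ∣ u)
    (hres : ∀ r : ℕ, r.Prime → (r : ℝ) < X * u * (h + 1) → ¬ r ∣ u → r ∉ Q → (r : ZMod p) ^ g = 1)
    (hXp : X ^ 2 * u * (h + 2) ≤ p) (hx : IsFareyPoint p u h X d t x z) :
    IsAlmostConstantBlock g (h + 1) Q.card ((x : ZMod p) / (u : ZMod p)) := by
  classical
  have hcop := hx.coprime_den_mul hXp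
  have hu : (u : ZMod p) ≠ 0 := by rwa [Ne, ZMod.natCast_eq_zero_iff]
  have hd : (d : ZMod p) ≠ 0 := by
    rw [Ne, ZMod.natCast_eq_zero_iff]
    exact Nat.not_dvd_of_pos_of_lt hx.den_pos (hx.den_lt hXp)
  have hz : (z : ZMod p) = d * x := by
    simpa using congrArg (fun y : ℤ => (y : ZMod p)) hx.numerator_eq
  have hblock : ∀ m : ℕ,
      ((z + d * u * m : ℕ) : ZMod p) = (d : ZMod p) * u * ((x : ZMod p) / u + m) := by
    intro m
    push_cast
    rw [hz]
    field_simp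
  refine ⟨Q.biUnion fun r => (Finset.range (h + 1)).filter fun m => r ∣ z + d * u * m, ?_,
    (((d : ZMod p) * u) ^ g)⁻¹, inv_ne_zero (pow_ne_zero _ (mul_ne_zero hd hu)), fun m hm hmE => ?_⟩
  · simpa using Finset.card_biUnion_le_card_mul Q _ 1 fun r hr =>
      card_filter_dvd_add_mul_le_one (hQ r hr).1 hcop (hQ r hr).2
  · refine eq_inv_of_mul_eq_one_right ?_
    rw [← mul_pow, ← hblock]
    have hz0 := hx.numerator_pos
    refine pow_eq_one_of_forall_prime_dvd (by omega) fun r hr hrz => hres r hr ?_ ?_ ?_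
    · calc (r : ℝ) ≤ z + d * u * m := mod_cast Nat.le_of_dvd (by omega) hrz
        _ ≤ z + d * u * h := by gcongr; omega
        _ < X * u * (h + 1) := hx.add_lt
    · intro hru
      have hrz' : r ∣ z := (Nat.dvd_add_left ((hru.mul_left d).mul_right m)).1 hrz
      exact hr.not_dvd_one (hx.coprime_numerator ▸ Nat.dvd_gcd hrz' hru)
    · exact fun hrQ => hmE (Finset.mem_biUnion.2
        ⟨r, hrQ, Finset.mem_filter.2 ⟨Finset.mem_range.2 hm, hrz⟩⟩)

theorem eq_of_mul_add_mul_eq_mul {k : ℤ} (htd : t < d) (htd' : t' < d') (hcop : t.Coprime d)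
    (hcop' : t'.Coprime d') (hk : (d' : ℤ) * t = d * t' + d * d' * k) :
    d = d' ∧ t = t' ∧ k = 0 := by
  have hdvd : d ∣ d' := hcop.symm.dvd_of_dvd_mul_right
    (Int.natCast_dvd_natCast.1 ⟨t' + d' * k, by push_cast; linear_combination hk⟩)
  have hdvd' : d' ∣ d := hcop'.symm.dvd_of_dvd_mul_right
    (Int.natCast_dvd_natCast.1 ⟨t - d * k, by push_cast; linear_combination -hk⟩)
  obtain rfl : d = d' := Nat.dvd_antisymm hdvd hdvd'
  have hd : 0 < d := Nat.zero_lt_of_lt htd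
  have htk : (t : ℤ) = t' + d * k :=
    mul_left_cancel₀ (a := (d : ℤ)) (mod_cast hd.ne') (by linear_combination hk)
  have htt : t = t' := by
    have hmod : t ≡ t' [MOD d] := (Int.natCast_modEq_iff).1
      (Int.modEq_iff_dvd.2 ⟨-k, by linear_combination -htk⟩)
    exact hmod.eq_of_lt_of_lt htd htd'
  refine ⟨rfl, htt, ?_⟩
  rw [htt, left_eq_add] at htk
  exact (mul_eq_zero.1 htk).resolve_left (mod_cast hd.ne')

theorem IsFareyPoint.eq_of_dvd_sub (hx : IsFareyPoint p u h X d t x z)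
    (hx' : IsFareyPoint p u h X d' t' x' z') (hXp : X ^ 2 * u * (h + 2) ≤ p)
    (hdvd : (p : ℤ) ∣ x - x') : d = d' ∧ t = t' ∧ x = x' := by
  obtain ⟨k, hk⟩ := hdvd
  have hdiff : ((d' * z : ℕ) : ℤ) - ((d * z' : ℕ) : ℤ) = p * (d * d' * k - (d' * t - d * t')) := by
    push_cast
    rw [hx.numerator_eq, hx'.numerator_eq]
    linear_combination (d : ℤ) * d' * hk
  have heq : d' * z = d * z' := by
    have hmod : d' * z ≡ d * z' [MOD p] :=
      ((Int.natCast_modEq_iff).1 (Int.modEq_iff_dvd.2 ⟨_, hdiff⟩)).symm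
    exact hmod.eq_of_lt_of_lt (hx.den_mul_lt hx' hXp) (hx'.den_mul_lt hx hXp)
  have hp : (p : ℤ) ≠ 0 := mod_cast (Nat.zero_lt_of_lt (hx.den_lt hXp)).ne'
  rw [heq, sub_self] at hdiff
  have hfrac := (mul_eq_zero.1 hdiff.symm).resolve_left hp
  obtain ⟨hdd, htt, rfl⟩ := eq_of_mul_add_mul_eq_mul hx.lt_den hx'.lt_den hx.coprime_den
    hx'.coprime_den (k := k) (by linear_combination -hfrac)
  exact ⟨hdd, htt, by simpa [sub_eq_zero] using hk⟩

theorem IsFareyPoint.not_dvd_add (hx : IsFareyPoint p u h X d t x z)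
    (hx' : IsFareyPoint p u h X d' t' x' z') (hXp : X ^ 2 * u * (h + 2) ≤ p) :
    ¬ (p : ℤ) ∣ x + x' + u * h := by
  rintro ⟨k, hk⟩
  have hd := hx.den_pos
  have hd' := hx'.den_pos
  have hz := hx.numerator_pos
  have hdvd : (p : ℤ) ∣ ((d' * z + d * z' + d * d' * u * h : ℕ) : ℤ) := by
    refine ⟨d * d' * k - (d' * t + d * t'), ?_⟩
    push_cast
    rw [hx.numerator_eq, hx'.numerator_eq]
    linear_combination (d : ℤ) * d' * hk
  have hdX : 0 ≤ X - d := sub_nonneg.2 hx.den_le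
  have hdX' : 0 ≤ X - d' := sub_nonneg.2 hx'.den_le
  have hX := hx.one_le
  have hweight : ((d : ℝ) + d') * X * (h + 1) - d * d' * h ≤ X ^ 2 * (h + 2) := by
    have : 0 ≤ (X - d) * (X - d') * h + (X - d) * X + (X - d') * X := by positivity
    linear_combination this
  have hlt : (d' * z + d * z' + d * d' * u * h : ℝ) < p := calc
    (d' * z + d * z' + d * d' * u * h : ℝ)
      = d' * (z + d * u * h) + d * (z' + d' * u * h) - d * d' * u * h := by ring
    _ < d' * (X * u * (h + 1)) + d * (X * u * (h + 1)) - d * d' * u * h := by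
        gcongr
        · exact hx.add_lt
        · exact hx'.add_lt
    _ = u * (((d : ℝ) + d') * X * (h + 1) - d * d' * h) := by ring
    _ ≤ u * (X ^ 2 * (h + 2)) := by gcongr
    _ ≤ p := by linarith
  exact (Nat.le_of_dvd (by positivity) (Int.natCast_dvd_natCast.1 hdvd)).not_gt (mod_cast hlt)

theorem totient_mul_fareyWeight_le_card [Fact p.Prime] (hpu : ¬ p ∣ u) (h : ℕ) (X : ℝ) :
    u.totient * (h + 1) * fareyWeight X ≤ (fareyPoints p u h X).card := by
  have hu : u ≠ 0 := fun hu0 => hpu (hu0 ▸ dvd_zero p)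
  calc u.totient * (h + 1) * fareyWeight X
      = ∑ i ∈ fareyFractions X, (u.totient : ℝ) * ((h + 1) * (X / i.1 - 1)) := by
        rw [fareyFractions, Finset.sum_sigma, fareyWeight, Finset.mul_sum]
        refine Finset.sum_congr rfl fun d _ => ?_
        simp only [Finset.sum_const, nsmul_eq_mul, ← Nat.totient_eq_card_coprime]
        ring
    _ ≤ _ := by
        rw [fareyPoints, Finset.card_sigma, Nat.cast_sum]
        refine Finset.sum_le_sum fun i hi => ?_
        simp only [fareyFractions, Finset.mem_sigma, Finset.mem_Icc, Finset.mem_filter] at hi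
        obtain ⟨⟨hd, -⟩, -, hcop⟩ := hi
        have hdr : (i.1 : ℝ) ≠ 0 := mod_cast (Nat.one_le_iff_ne_zero.1 hd)
        refine le_of_eq_of_le ?_ (totient_mul_le_card_filter_gcd_eq_one hu (d := i.1)
          (τ := i.2 * p) (fun r hr hru hrd hrt => ?_) _ _)
        · field_simp
          ring
        · rcases hr.dvd_mul.1 (mod_cast hrt : r ∣ i.2 * p) with hri | hrp
          · exact hr.not_dvd_one (hcop ▸ Nat.dvd_gcd hrd hri)
          · exact hpu ((Nat.prime_dvd_prime_iff_eq hr Fact.out).1 hrp ▸ hru)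

theorem two_mul_totient_mul_fareyWeight_le_card [Fact p.Prime] {g : ℕ} {Q : Finset ℕ}
    (hQ : ∀ r ∈ Q, r.Prime ∧ h + 1 ≤ r) (hpu : ¬ p ∣ u)
    (hres : ∀ r : ℕ, r.Prime → (r : ℝ) < X * u * (h + 1) → ¬ r ∣ u → r ∉ Q → (r : ZMod p) ^ g = 1)
    (hXp : X ^ 2 * u * (h + 2) ≤ p) :
    2 * (u.totient * (h + 1) * fareyWeight X)
      ≤ (almostConstantBlocks p g (h + 1) Q.card).card := by
  classical
  have hu : (u : ZMod p) ≠ 0 := by rwa [Ne, ZMod.natCast_eq_zero_iff]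
  let points := fareyPoints p u h X
  let start (y : Σ _ : (Σ _ : ℕ, ℕ), ℤ) : ZMod p := (y.2 : ZMod p) / u
  let reflected (y : Σ _ : (Σ _ : ℕ, ℕ), ℤ) : ZMod p := -start y - (h : ZMod p)
  have hstart : Set.InjOn start points := by
    rintro ⟨⟨d, t⟩, x⟩ hy ⟨⟨d', t'⟩, x'⟩ hy' hyy
    obtain ⟨z, hz⟩ := exists_isFareyPoint_of_mem hy
    obtain ⟨z', hz'⟩ := exists_isFareyPoint_of_mem hy'
    obtain ⟨rfl, rfl, rfl⟩ := hz.eq_of_dvd_sub hz' hXp (by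
      rw [← ZMod.intCast_zmod_eq_zero_iff_dvd, Int.cast_sub, sub_eq_zero]
      exact (div_left_inj' hu).1 hyy)
    rfl
  have hreflected : Set.InjOn reflected points := fun y hy y' hy' hyy =>
    hstart hy hy' (neg_injective (sub_left_injective hyy))
  have hdisj : Disjoint (points.image start) (points.image reflected) := by
    refine Finset.disjoint_left.2 fun v hv hv' => ?_
    obtain ⟨y, hy, rfl⟩ := Finset.mem_image.1 hv
    obtain ⟨y', hy', hyy : -((y'.2 : ZMod p) / u) - h = y.2 / u⟩ := Finset.mem_image.1 hv'
    obtain ⟨z, hz⟩ := exists_isFareyPoint_of_mem hy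
    obtain ⟨z', hz'⟩ := exists_isFareyPoint_of_mem hy'
    refine hz.not_dvd_add hz' hXp ((ZMod.intCast_zmod_eq_zero_iff_dvd _ _).1 ?_)
    field_simp at hyy
    push_cast
    linear_combination -hyy
  have hsub : points.image start ∪ points.image reflected
      ⊆ almostConstantBlocks p g (h + 1) Q.card := by
    have hblock : ∀ y ∈ points, IsAlmostConstantBlock g (h + 1) Q.card (start y) := fun y hy =>
      (exists_isFareyPoint_of_mem hy).elim fun z hz => hz.isAlmostConstantBlock hQ hpu hres hXp
    refine Finset.union_subset (Finset.image_subset_iff.2 fun y hy => ?_)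
      (Finset.image_subset_iff.2 fun y hy => ?_)
    · exact mem_almostConstantBlocks.2 (hblock y hy)
    · exact mem_almostConstantBlocks.2 (hblock y hy).reflect
  have hcard := Finset.card_le_card hsub
  rw [Finset.card_union_of_disjoint hdisj, Finset.card_image_of_injOn hstart,
    Finset.card_image_of_injOn hreflected, ← two_mul] at hcard
  calc 2 * (u.totient * (h + 1) * fareyWeight X) ≤ 2 * (points.card : ℝ) := by
        gcongr
        exact totient_mul_fareyWeight_le_card hpu h X
    _ ≤ _ := mod_cast hcard

end FareyPoints

section FareyWeight

theorem one_sub_sum_le_prod_one_sub {ι R : Type*} [CommRing R] [PartialOrder R]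
    [IsOrderedRing R] {s : Finset ι} {f : ι → R} (hf : ∀ i ∈ s, 0 ≤ f i)
    (hf' : ∀ i ∈ s, f i ≤ 1) : 1 - ∑ i ∈ s, f i ≤ ∏ i ∈ s, (1 - f i) := by
  classical
  induction s using Finset.induction_on with
  | empty => simp
  | insert a s ha ih =>
    rw [Finset.forall_mem_insert] at hf hf'
    have hprod : ∏ i ∈ s, (1 - f i) ≤ 1 := Finset.prod_le_one
      (fun i hi => sub_nonneg.2 (hf'.2 i hi)) fun i hi => sub_le_self _ (hf.2 i hi)
    calc 1 - ∑ i ∈ insert a s, f i = 1 - ∑ i ∈ s, f i - f a * 1 := by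
          rw [Finset.sum_insert ha]
          ring
      _ ≤ ∏ i ∈ s, (1 - f i) - f a * ∏ i ∈ s, (1 - f i) :=
          sub_le_sub (ih hf.2 hf'.2) (mul_le_mul_of_nonneg_left hprod hf.1)
      _ = ∏ i ∈ insert a s, (1 - f i) := by
          rw [Finset.prod_insert ha]
          ring

theorem sum_Icc_sub_natCast (Y : ℝ) (N : ℕ) :
    ∑ k ∈ Finset.Icc 1 N, (Y - k) = N * Y - N * (N + 1) / 2 := by
  induction N with
  | zero => simp
  | succ N ih =>
    rw [Finset.sum_Icc_succ_top (by omega), ih]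
    push_cast
    ring

theorem sum_Icc_sub_natCast_le (Y : ℝ) (N : ℕ) : ∑ k ∈ Finset.Icc 1 N, (Y - k) ≤ Y ^ 2 / 2 := by
  rw [sum_Icc_sub_natCast]
  linarith [sq_nonneg (Y - N), N.cast_nonneg (α := ℝ)]

theorem le_sum_Icc_floor_sub {Y : ℝ} (hY : 0 ≤ Y) :
    (Y ^ 2 - Y) / 2 ≤ ∑ k ∈ Finset.Icc 1 ⌊Y⌋₊, (Y - k) := by
  rw [sum_Icc_sub_natCast]
  nlinarith [Nat.floor_le hY, Nat.lt_floor_add_one Y]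

theorem sum_inv_sq_odd_le (N : ℕ) :
    ∑ j ∈ Finset.Icc 2 N, (1 : ℝ) / (2 * j + 1 : ℕ) ^ 2 ≤ 1 / 8 := by
  suffices htail : ∀ M : ℕ, ∑ j ∈ Finset.Icc 2 (M + 1), (1 : ℝ) / (2 * j + 1 : ℕ) ^ 2
      ≤ 1 / 8 - 1 / (4 * (M + 2)) by
    rcases N with _ | M
    · simp
    · exact (htail M).trans (sub_le_self _ (by positivity))
  intro M
  induction M with
  | zero => norm_num
  | succ M ih =>
    have hterm : (1 : ℝ) / (2 * (M + 1 + 1) + 1 : ℕ) ^ 2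
        ≤ 1 / (4 * (M + 2)) - 1 / (4 * ((M + 1 : ℕ) + 2)) := by
      push_cast
      rw [div_sub_div _ _ (by positivity) (by positivity),
        div_le_div_iff₀ (by positivity) (by positivity)]
      nlinarith [(Nat.cast_nonneg M : (0 : ℝ) ≤ M)]
    rw [Finset.sum_Icc_succ_top (by omega)]
    linarith

/- The bound is `1 / 4 + 1 / 9` for the primes `2` and `3`, plus `1 / 8` for all odd numbers
from `5` on. -/
theorem sum_inv_sq_primes_le (N : ℕ) :
    ∑ r ∈ (Finset.Icc 1 N).filter Nat.Prime, 1 / (r : ℝ) ^ 2 ≤ 35 / 72 := by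
  let oddsFromFive := (Finset.Icc 2 N).image fun j => 2 * j + 1
  have hsub : (Finset.Icc 1 N).filter Nat.Prime ⊆ {2, 3} ∪ oddsFromFive := by
    intro r hr
    obtain ⟨hrN, hrp⟩ := Finset.mem_filter.1 hr
    have := hrp.two_le
    have := (Finset.mem_Icc.1 hrN).2
    simp only [oddsFromFive, Finset.mem_union, Finset.mem_insert, Finset.mem_singleton,
      Finset.mem_image, Finset.mem_Icc]
    rcases hrp.eq_two_or_odd with h_two | h_odd
    · exact Or.inl (Or.inl h_two)
    · by_cases h_three : r = 3
      · exact Or.inl (Or.inr h_three)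
      · exact Or.inr ⟨r / 2, by omega, by omega⟩
  have hodd : ∑ r ∈ oddsFromFive, 1 / (r : ℝ) ^ 2 ≤ 1 / 8 := by
    rw [Finset.sum_image fun a _ b _ (hab : 2 * a + 1 = 2 * b + 1) => by omega]
    exact sum_inv_sq_odd_le N
  have hsmall : ∑ r ∈ ({2, 3} : Finset ℕ), 1 / (r : ℝ) ^ 2 = 13 / 36 := by
    rw [Finset.sum_pair (by norm_num)]
    norm_num
  calc ∑ r ∈ (Finset.Icc 1 N).filter Nat.Prime, 1 / (r : ℝ) ^ 2
      ≤ ∑ r ∈ {2, 3} ∪ oddsFromFive, 1 / (r : ℝ) ^ 2 :=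
        Finset.sum_le_sum_of_subset_of_nonneg hsub fun _ _ _ => by positivity
    _ ≤ ∑ r ∈ ({2, 3} : Finset ℕ), 1 / (r : ℝ) ^ 2 + ∑ r ∈ oddsFromFive, 1 / (r : ℝ) ^ 2 := by
        rw [← Finset.sum_union_inter]
        exact le_add_of_nonneg_right (Finset.sum_nonneg fun _ _ => by positivity)
    _ ≤ 35 / 72 := by linarith

theorem mul_one_sub_sum_inv_le_totient (d : ℕ) :
    (d : ℝ) * (1 - ∑ r ∈ d.primeFactors, 1 / (r : ℝ)) ≤ d.totient := by
  have htotient : (d.totient : ℝ) = d * ∏ r ∈ d.primeFactors, (1 - 1 / (r : ℝ)) := by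
    simpa using congrArg (Rat.cast (K := ℝ)) (Nat.totient_eq_mul_prod_factors d)
  rw [htotient]
  refine mul_le_mul_of_nonneg_left (one_sub_sum_le_prod_one_sub (fun _ _ => by positivity)
    fun r hr => ?_) d.cast_nonneg
  rw [one_div]
  exact inv_le_one_of_one_le₀ (mod_cast (Nat.prime_of_mem_primeFactors hr).one_le)

theorem sum_multiples_sub_div_le (X : ℝ) {r : ℕ} (hr : 0 < r) :
    ∑ d ∈ (Finset.Icc 1 ⌊X⌋₊).filter (r ∣ ·), (X - d) * (1 / r)
      ≤ X ^ 2 / 2 * (1 / (r : ℝ) ^ 2) := by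
  have hmultiples :
      (Finset.Icc 1 ⌊X⌋₊).filter (r ∣ ·) = (Finset.Icc 1 (⌊X⌋₊ / r)).image (r * ·) := by
    ext d
    simp only [Finset.mem_filter, Finset.mem_Icc, Finset.mem_image, Nat.le_div_iff_mul_le hr]
    constructor
    · rintro ⟨⟨hpos, hle⟩, k, rfl⟩
      exact ⟨k, ⟨Nat.pos_of_mul_pos_left hpos, by rwa [mul_comm]⟩, rfl⟩
    · rintro ⟨k, ⟨hpos, hle⟩, rfl⟩
      exact ⟨⟨Nat.mul_pos hr hpos, by rwa [mul_comm]⟩, dvd_mul_right _ _⟩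
  have hr' : (r : ℝ) ≠ 0 := mod_cast hr.ne'
  rw [hmultiples, Finset.sum_image fun a _ b _ hab => Nat.eq_of_mul_eq_mul_left hr hab]
  calc ∑ k ∈ Finset.Icc 1 (⌊X⌋₊ / r), (X - (r * k : ℕ)) * (1 / r)
      = ∑ k ∈ Finset.Icc 1 (⌊X⌋₊ / r), (X / r - k) := by
        refine Finset.sum_congr rfl fun k _ => ?_
        push_cast
        field_simp
    _ ≤ (X / r) ^ 2 / 2 := sum_Icc_sub_natCast_le _ _
    _ = X ^ 2 / 2 * (1 / (r : ℝ) ^ 2) := by field_simp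

/- Bounding `φ(d) / d` below by `1 - ∑ 1 / r` over the primes `r ∣ d` and exchanging the sums
gives the leading coefficient `37 / 144 = (1 - 35 / 72) / 2`. -/
theorem le_fareyWeight {X : ℝ} (hX : 0 ≤ X) : 37 / 144 * X ^ 2 - X / 2 ≤ fareyWeight X := by
  have hexchange : ∑ d ∈ Finset.Icc 1 ⌊X⌋₊, ∑ r ∈ d.primeFactors, (X - d) * (1 / (r : ℝ))
      = ∑ r ∈ (Finset.Icc 1 ⌊X⌋₊).filter Nat.Prime,
        ∑ d ∈ (Finset.Icc 1 ⌊X⌋₊).filter (r ∣ ·), (X - d) * (1 / (r : ℝ)) := by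
    refine Finset.sum_comm' fun d r => ?_
    simp only [Finset.mem_filter, Finset.mem_Icc, Nat.mem_primeFactors]
    constructor
    · rintro ⟨⟨hd, hdX⟩, hr, hrd, -⟩
      exact ⟨⟨⟨hd, hdX⟩, hrd⟩, ⟨hr.one_le, (Nat.le_of_dvd hd hrd).trans hdX⟩, hr⟩
    · rintro ⟨⟨⟨hd, hdX⟩, hrd⟩, -, hr⟩
      exact ⟨⟨hd, hdX⟩, hr, hrd, by omega⟩
  calc 37 / 144 * X ^ 2 - X / 2 = (X ^ 2 - X) / 2 - X ^ 2 / 2 * (35 / 72) := by ring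
    _ ≤ (X ^ 2 - X) / 2
        - ∑ r ∈ (Finset.Icc 1 ⌊X⌋₊).filter Nat.Prime, X ^ 2 / 2 * (1 / (r : ℝ) ^ 2) := by
        rw [← Finset.mul_sum]
        gcongr
        exact sum_inv_sq_primes_le _
    _ ≤ ∑ d ∈ Finset.Icc 1 ⌊X⌋₊, (X - d)
        - ∑ d ∈ Finset.Icc 1 ⌊X⌋₊, ∑ r ∈ d.primeFactors, (X - d) * (1 / (r : ℝ)) := by
        rw [hexchange]
        gcongr with r hr
        · exact le_sum_Icc_floor_sub hX
        · exact sum_multiples_sub_div_le X (Finset.mem_filter.1 hr).2.pos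
    _ ≤ fareyWeight X := by
        rw [← Finset.sum_sub_distrib]
        refine Finset.sum_le_sum fun d hd => ?_
        obtain ⟨hd, hdX⟩ := Finset.mem_Icc.1 hd
        have hd' : (0 : ℝ) < d := mod_cast hd
        have hratio : 0 ≤ X / d - 1 :=
          sub_nonneg.2 ((one_le_div hd').2 ((Nat.le_floor_iff hX).1 hdX))
        refine le_of_eq_of_le ?_
          (mul_le_mul_of_nonneg_right (mul_one_sub_sum_inv_le_totient d) hratio)
        rw [← Finset.mul_sum]
        field_simp

end FareyWeight

section Characters

theorem exists_index_of_ne_one {R : Type*} [CommMonoidWithZero R] [Nontrivial R] {p : ℕ}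
    [Fact p.Prime] {χ : DirichletCharacter R p} (hχ : χ ≠ 1) :
    ∃ ℓ g : ℕ, 2 ≤ ℓ ∧ ℓ * g + 1 = p ∧ ∀ v : ZMod p, χ v = 1 → v ^ g = 1 := by
  have hp : p.Prime := Fact.out
  obtain ⟨γ, hγ⟩ := IsCyclic.exists_monoid_generator (α := (ZMod p)ˣ)
  have hcard : γ ^ (p - 1) = 1 := ZMod.units_pow_card_sub_one_eq_one p γ
  let ζ := MulChar.toUnitHom χ γ
  have hζ : ζ ≠ 1 := by
    refine fun hζ => hχ (MulChar.ext fun x => ?_)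
    obtain ⟨j, rfl⟩ := (Submonoid.mem_powers_iff _ _).1 (hγ x)
    rw [MulChar.one_apply_coe, ← MulChar.coe_toUnitHom, map_pow, show MulChar.toUnitHom χ γ = 1
      from hζ, one_pow, Units.val_one]
  obtain ⟨g, hg⟩ : orderOf ζ ∣ p - 1 := by
    rw [orderOf_dvd_iff_pow_eq_one, ← map_pow, hcard, map_one]
  have hℓ : orderOf ζ ≠ 1 := by rwa [Ne, orderOf_eq_one_iff]
  have hℓ0 : orderOf ζ ≠ 0 := fun h0 => by
    have := hp.one_lt
    rw [h0, zero_mul] at hg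
    omega
  refine ⟨orderOf ζ, g, by omega, by have := hp.one_lt; omega, fun v hv => ?_⟩
  have hv0 : v ≠ 0 := by
    rintro rfl
    exact zero_ne_one ((MulChar.map_zero χ).symm.trans hv)
  obtain ⟨j, hj⟩ := (Submonoid.mem_powers_iff _ _).1 (hγ (Units.mk0 v hv0))
  have hζj : ζ ^ j = 1 := by
    rw [← map_pow, hj]
    ext
    rw [MulChar.coe_toUnitHom]
    simpa using hv
  obtain ⟨i, rfl⟩ := orderOf_dvd_of_pow_eq_one hζj
  have hvg : (Units.mk0 v hv0) ^ g = 1 := by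
    rw [← hj, ← pow_mul, mul_right_comm, ← hg, pow_mul, hcard, one_pow]
  simpa using congrArg Units.val hvg

end Characters

/-! ### Numerical estimates -/

section Cutoff

/-- The size conditions on a cutoff `Y` under which no more than `m` exceptional primes can
occur below `Y`: the lower bound for the number of almost constant blocks, which grows with `Y`,
then exceeds the upper bound, which is proportional to `√p`. For the cutoff of the theorem the
constants are due to `9.68 < (3.8 * 3 / π) ^ 2 * 2 / e`, `5.96 < (π / 3) ^ 2 * 2 * e` and
`7.6 = 2 * 3.8`. -/
structure IsAdmissibleCutoff (m : ℕ) (p Y : ℝ) : Prop where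
  two_million_le : 2 * 10 ^ 6 ≤ p
  eight_mul_lt_log : 8 * m < Real.log p
  log_pow_le_sqrt : 9.68 * ((m + 2) / (m + 1)) ^ 2 * Real.log p ^ m ≤ √p
  sqrt_mul_log_pow_le_sq : 5.96 * ((m + 1) / (m + 2)) ^ 2 * √p * Real.log p ^ (m + 2) ≤ Y ^ 2
  log_pow_le : 7.6 * Real.log p ^ (m + 1) ≤ Y
  log_le_of_eq_zero : m = 0 → 45.8 * Real.log p ≤ Y

variable {n m : ℕ} {p₀ p : ℝ}

theorem half_le_div_succ (hn : 0 < n) : (1 : ℝ) / 2 ≤ n / (n + 1) := by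
  have : (1 : ℝ) ≤ n := mod_cast hn
  rw [div_le_div_iff₀ (by norm_num) (by positivity)]
  linarith

theorem log_le_sub_of_le {X : ℝ} (hX : 3.8 ≤ X) : Real.log X ≤ X - 2.45 := by
  have hexp : 3.8 ≤ Real.exp 1.35 := by
    have hsplit : Real.exp 1.35 = Real.exp 1 * Real.exp 0.35 := by
      rw [← Real.exp_add]
      norm_num
    have htaylor := Real.quadratic_le_exp_of_nonneg (show (0 : ℝ) ≤ 0.35 by norm_num)
    rw [hsplit]
    nlinarith [Real.exp_one_gt_d9]
  have hlog : Real.log 3.8 ≤ 1.35 := (Real.log_le_iff_le_exp (by norm_num)).2 hexp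
  have htangent := Real.log_le_sub_one_of_pos (show 0 < X / 3.8 by positivity)
  rw [Real.log_div (by positivity) (by norm_num), le_sub_iff_add_le, le_div_iff₀ (by norm_num)]
    at htangent
  linarith

theorem le_gconst (hn : 0 < n) (hp : 2 * 10 ^ 6 ≤ p) (hX : 3.8 < Xstar n p) :
    π / 3 * √(2 * Real.exp 1) * (n / (n + 1)) ≤ gconst n p := by
  have hL := log_ge_of_two_million_le hp
  have hratio := half_le_div_succ hn
  set X := Xstar n p
  have hlog : 0 ≤ Real.log X := Real.log_nonneg (by linarith)
  have hpi : π ^ 2 / 9 ≤ 1.09663 := by nlinarith [Real.pi_lt_d6, Real.pi_gt_three]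
  have hdenom : π ^ 2 / 9 * (Real.log X + 9) / (3 * X) < 1 := by
    rw [div_lt_one (by linarith)]
    have : π ^ 2 / 9 * (Real.log X + 9) ≤ 1.09663 * (X - 2.45 + 9) := by
      gcongr
      exact log_le_sub_of_le hX.le
    linarith
  have hdenom0 : 0 ≤ π ^ 2 / 9 * (Real.log X + 9) / (3 * X) :=
    div_nonneg (by positivity) (by linarith)
  have hnum : 0 ≤ √2 / (2 * ((n : ℝ) / (2 * ((n : ℝ) + 1))) * Real.log p - 3) := by
    have hB : 2 * ((n : ℝ) / (2 * ((n : ℝ) + 1))) = n / (n + 1) := by field_simp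
    rw [hB]
    exact div_nonneg (by positivity) (by nlinarith)
  refine le_mul_of_one_le_right (by positivity) (Real.one_le_rpow ?_ (by norm_num))
  rw [le_div_iff₀ (by linarith)]
  linarith

theorem succ_div_pow_le (hn : 0 < n) :
    (((n : ℝ) + 1) / n) ^ (n - 1) ≤ Real.exp 1 * (n / (n + 1)) := by
  have hn' : (0 : ℝ) < n := mod_cast hn
  have hpow : (((n : ℝ) + 1) / n) ^ n ≤ Real.exp 1 := by
    have := Real.one_sub_div_pow_le_exp_neg (n := n) (t := -1) (by linarith)
    rwa [neg_div, sub_neg_eq_add, neg_neg, ← same_add_div hn'.ne'] at this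
  rwa [← pow_sub_one_mul hn.ne', ← le_div_iff₀ (by positivity), div_div_eq_mul_div,
    mul_div_assoc] at hpow

theorem rpow_quarter_div_log_mono {a x y : ℝ} (ha : 0 ≤ a) (hx : 1 < x) (hxy : x ≤ y)
    (hax : 2 * a ≤ Real.log x) :
    x ^ ((1 : ℝ) / 4) / Real.log x ^ (a / 2) ≤ y ^ ((1 : ℝ) / 4) / Real.log y ^ (a / 2) := by
  have hx0 : 0 < x := one_pos.trans hx
  have hy0 : 0 < y := hx0.trans_le hxy
  have hlogx : 0 < Real.log x := Real.log_pos hx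
  have hlogxy : Real.log x ≤ Real.log y := Real.log_le_log hx0 hxy
  have hlogy : 0 < Real.log y := hlogx.trans_le hlogxy
  rw [div_le_div_iff₀ (by positivity) (by positivity), Real.rpow_def_of_pos hx0,
    Real.rpow_def_of_pos hy0, Real.rpow_def_of_pos hlogx, Real.rpow_def_of_pos hlogy,
    ← Real.exp_add, ← Real.exp_add, Real.exp_le_exp]
  have hratio : 0 ≤ Real.log y / Real.log x - 1 := sub_nonneg.2 ((one_le_div hlogx).2 hlogxy)
  have hloglog : Real.log (Real.log y) - Real.log (Real.log x) ≤ Real.log y / Real.log x - 1 := by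
    rw [← Real.log_div hlogy.ne' hlogx.ne']
    exact Real.log_le_sub_one_of_pos (by positivity)
  have hgrowth : 2 * a * (Real.log y / Real.log x - 1) ≤ Real.log y - Real.log x := calc
    _ ≤ Real.log x * (Real.log y / Real.log x - 1) := by gcongr
    _ = Real.log y - Real.log x := by field_simp
  linarith [mul_le_mul_of_nonneg_left hloglog ha]

theorem le_rpow_quarter (hn : 0 < n) (hp₀ : 2 * 10 ^ 6 ≤ p₀)
    (hlog : 8 * ((n : ℝ) - 1) < Real.log p₀) (hX : 3.8 < Xstar n p₀) (hp : p₀ ≤ p) :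
    3.8 * (3 / π) * √(2 * Real.exp 1) / Real.exp 1 * ((n + 1) / n)
      * Real.log p ^ (((n : ℝ) - 1) / 2) ≤ p ^ ((1 : ℝ) / 4) := by
  have hn1 : (1 : ℝ) ≤ n := mod_cast hn
  have hp₀pos : 0 < p₀ := by linarith
  have hppos : 0 < p := hp₀pos.trans_le hp
  have hL₀ := log_ge_of_two_million_le hp₀
  have hL := log_ge_of_two_million_le (hp₀.trans hp)
  have : 0 < Real.log p₀ := by linarith
  have : 0 < Real.log p := by linarith
  let ratio (x : ℝ) : ℝ := x ^ ((1 : ℝ) / 4) / Real.log x ^ (((n : ℝ) - 1) / 2)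
  have : 0 ≤ ratio p := by positivity
  have hmono : ratio p₀ ≤ ratio p :=
    rpow_quarter_div_log_mono (by linarith) (by linarith) hp (by linarith)
  have hinv : (2 * Real.exp 1) ^ (-(1 : ℝ) / 2) = 1 / √(2 * Real.exp 1) := by
    rw [neg_div, Real.rpow_neg (by positivity), ← Real.sqrt_eq_rpow, one_div]
  have hlower : 3.8 ≤ π / 3 * (1 / √(2 * Real.exp 1)) * (Real.exp 1 * (n / (n + 1))) * ratio p := by
    calc (3.8 : ℝ) ≤ Xstar n p₀ := hX.le
      _ ≤ π / 3 * (1 / √(2 * Real.exp 1)) * (((n : ℝ) + 1) / n) ^ (n - 1) * ratio p₀ := by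
          rw [Xstar, ← hinv, mul_div_assoc]
          exact mul_le_of_le_one_right (by positivity) (sub_le_self _ (by positivity))
      _ ≤ _ := by
          gcongr
          exact succ_div_pow_le hn
  rw [← le_div_iff₀ (by positivity)]
  calc _ = 3.8 * ((3 / π) * √(2 * Real.exp 1) / Real.exp 1 * ((n + 1) / n)) := by ring
    _ ≤ π / 3 * (1 / √(2 * Real.exp 1)) * (Real.exp 1 * (n / (n + 1))) * ratio p
        * ((3 / π) * √(2 * Real.exp 1) / Real.exp 1 * ((n + 1) / n)) := by gcongr
    _ = ratio p := by field_simp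

theorem monotone_succ_div_sq_mul_pow {L : ℝ} (hL : 4 ≤ L) :
    Monotone fun m : ℕ => ((m + 2) / (m + 1) : ℝ) ^ 2 * L ^ m := by
  refine monotone_nat_of_le_succ fun m => ?_
  have hle : ((m + 2) / (m + 1) : ℝ) ≤ 2 := by
    rw [div_le_iff₀ (by positivity)]
    linarith [m.cast_nonneg (α := ℝ)]
  have hge : (1 : ℝ) ≤ ((m + 1 : ℕ) + 2) / ((m + 1 : ℕ) + 1) := by
    rw [le_div_iff₀ (by positivity)]
    linarith
  calc ((m + 2) / (m + 1) : ℝ) ^ 2 * L ^ m ≤ 2 ^ 2 * L ^ m := by gcongr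
    _ ≤ 1 ^ 2 * (L * L ^ m) := by
        rw [← mul_assoc]
        gcongr
        linarith
    _ = 1 ^ 2 * L ^ (m + 1) := by ring
    _ ≤ _ := by gcongr

theorem rpow_half_sq {x : ℝ} (hx : 0 ≤ x) (a : ℝ) : (x ^ (a / 2)) ^ 2 = x ^ a := by
  rw [← Real.rpow_mul_natCast hx]
  norm_num

theorem rpow_quarter_sq {x : ℝ} (hx : 0 ≤ x) : (x ^ ((1 : ℝ) / 4)) ^ 2 = √x := by
  rw [Real.sqrt_eq_rpow, ← Real.rpow_mul_natCast hx]
  norm_num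

theorem le_gconst_leading_sq : 5.96 ≤ (π / 3 * √(2 * Real.exp 1)) ^ 2 := by
  rw [mul_pow, Real.sq_sqrt (by positivity)]
  calc (5.96 : ℝ) ≤ (3.141592 / 3) ^ 2 * (2 * 2.718) := by norm_num
    _ ≤ _ := by
      gcongr
      · exact Real.pi_gt_d6.le
      · linarith [Real.exp_one_gt_d9]

theorem log_pow_le_sqrt (hm : m < n) (hp₀ : 2 * 10 ^ 6 ≤ p₀)
    (hlog : 8 * ((n : ℝ) - 1) < Real.log p₀) (hX : 3.8 < Xstar n p₀) (hp : p₀ ≤ p) :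
    9.68 * ((m + 2) / (m + 1)) ^ 2 * Real.log p ^ m ≤ √p := by
  have hL := log_ge_of_two_million_le (hp₀.trans hp)
  have hquarter := le_rpow_quarter (by omega) hp₀ hlog hX hp
  have hmono := monotone_succ_div_sq_mul_pow (L := Real.log p) (by linarith)
  obtain ⟨M, rfl⟩ : ∃ M, n = M + 1 := ⟨n - 1, by omega⟩
  have hconst : 9.68 ≤ (3.8 * (3 / π) * √(2 * Real.exp 1) / Real.exp 1) ^ 2 := by
    have hsq : (3.8 * (3 / π) * √(2 * Real.exp 1) / Real.exp 1) ^ 2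
        = 259.92 / (π ^ 2 * Real.exp 1) := by
      rw [div_pow, mul_pow, Real.sq_sqrt (by positivity)]
      field_simp
      norm_num
    rw [hsq, le_div_iff₀ (by positivity)]
    calc 9.68 * (π ^ 2 * Real.exp 1) ≤ 9.68 * (3.141593 ^ 2 * 2.7182818286) := by
          gcongr
          · exact Real.pi_lt_d6.le
          · exact Real.exp_one_lt_d9.le
      _ ≤ 259.92 := by norm_num
  calc 9.68 * ((m + 2) / (m + 1)) ^ 2 * Real.log p ^ m
      ≤ 9.68 * (((M + 2) / (M + 1)) ^ 2 * Real.log p ^ M) := by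
        rw [mul_assoc]
        exact mul_le_mul_of_nonneg_left (hmono (Nat.le_of_lt_succ hm)) (by norm_num)
    _ ≤ (3.8 * (3 / π) * √(2 * Real.exp 1) / Real.exp 1) ^ 2
          * (((M + 2) / (M + 1)) ^ 2 * Real.log p ^ M) := by gcongr
    _ = (3.8 * (3 / π) * √(2 * Real.exp 1) / Real.exp 1 * (((M + 1 : ℕ) + 1) / (M + 1 : ℕ))
          * Real.log p ^ ((((M + 1 : ℕ) : ℝ) - 1) / 2)) ^ 2 := by
        rw [mul_pow _ (_ ^ (_ / 2 : ℝ)), rpow_half_sq (by linarith)]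
        push_cast
        rw [add_sub_cancel_right, Real.rpow_natCast, add_assoc]
        norm_num
        ring
    _ ≤ (p ^ ((1 : ℝ) / 4)) ^ 2 := by gcongr
    _ = √p := rpow_quarter_sq (by linarith)

theorem log_rpow_le_gconst_mul (hn : 0 < n) (hp₀ : 2 * 10 ^ 6 ≤ p₀)
    (hlog : 8 * ((n : ℝ) - 1) < Real.log p₀) (hX : 3.8 < Xstar n p₀) (hp : p₀ ≤ p) :
    7.6 * Real.log p ^ (((n : ℝ) - 1) / 2) ≤ gconst n p₀ * p ^ ((1 : ℝ) / 4) := by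
  have hn' : (n : ℝ) ≠ 0 := mod_cast hn.ne'
  have hL := log_ge_of_two_million_le (hp₀.trans hp)
  have hC := le_gconst hn hp₀ hX
  have hC0 : 0 ≤ gconst n p₀ := hC.trans' (by positivity)
  calc 7.6 * Real.log p ^ (((n : ℝ) - 1) / 2)
      = π / 3 * √(2 * Real.exp 1) * (n / (n + 1))
          * (3.8 * (3 / π) * √(2 * Real.exp 1) / Real.exp 1 * ((n + 1) / n)
            * Real.log p ^ (((n : ℝ) - 1) / 2)) := by
        field_simp
        rw [Real.sq_sqrt (by positivity)]
        ring
    _ ≤ _ := by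
        gcongr
        exact le_rpow_quarter hn hp₀ hlog hX hp

theorem sqrt_mul_log_pow_le_gconst_mul_sq (hm : m < n) (hp₀ : 2 * 10 ^ 6 ≤ p₀)
    (hX : 3.8 < Xstar n p₀) (hp : p₀ ≤ p) :
    5.96 * ((m + 1) / (m + 2)) ^ 2 * √p * Real.log p ^ (m + 2)
      ≤ (gconst n p₀ * p ^ ((1 : ℝ) / 4) * Real.log p ^ (((m : ℝ) + 2) / 2)) ^ 2 := by
  have hL := log_ge_of_two_million_le (hp₀.trans hp)
  have hfrac : ((m + 1) / (m + 2) : ℝ) ≤ n / (n + 1) := by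
    have : (m : ℝ) + 1 ≤ n := mod_cast hm
    rw [div_le_div_iff₀ (by positivity) (by positivity)]
    linarith
  have hlogpow : (Real.log p ^ (((m : ℝ) + 2) / 2)) ^ 2 = Real.log p ^ (m + 2) := by
    rw [rpow_half_sq (by linarith)]
    exact mod_cast Real.rpow_natCast _ (m + 2)
  rw [mul_pow, mul_pow, rpow_quarter_sq (by linarith), hlogpow]
  gcongr ?_ * _ * _
  calc 5.96 * ((m + 1) / (m + 2) : ℝ) ^ 2
      ≤ (π / 3 * √(2 * Real.exp 1)) ^ 2 * (n / (n + 1)) ^ 2 := by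
        gcongr
        exact le_gconst_leading_sq
    _ = (π / 3 * √(2 * Real.exp 1) * (n / (n + 1))) ^ 2 := (mul_pow _ _ _).symm
    _ ≤ gconst n p₀ ^ 2 := by
        gcongr
        exact le_gconst (by omega) hp₀ hX

theorem le_gconst_mul_rpow_quarter (hn : 0 < n) (hp₀ : 2 * 10 ^ 6 ≤ p₀)
    (hX : 3.8 < Xstar n p₀) (hp : p₀ ≤ p) : 45.8 ≤ gconst n p₀ * p ^ ((1 : ℝ) / 4) := by
  have hquarter : 37.6 ≤ p ^ ((1 : ℝ) / 4) := calc
    (37.6 : ℝ) = ((37.6 : ℝ) ^ (4 : ℝ)) ^ ((1 : ℝ) / 4) := by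
      rw [← Real.rpow_mul (by norm_num)]
      norm_num
    _ ≤ p ^ ((1 : ℝ) / 4) := by
      refine Real.rpow_le_rpow (by positivity) (le_trans ?_ (hp₀.trans hp)) (by norm_num)
      norm_num
  have hconst : 2.44 ≤ π / 3 * √(2 * Real.exp 1) :=
    (sq_le_sq₀ (by norm_num) (by positivity)).1 (le_gconst_leading_sq.trans' (by norm_num))
  calc (45.8 : ℝ) ≤ 2.44 * (1 / 2) * 37.6 := by norm_num
    _ ≤ π / 3 * √(2 * Real.exp 1) * (n / (n + 1)) * p ^ ((1 : ℝ) / 4) := by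
        gcongr ?_ * ?_ * ?_
        exact half_le_div_succ hn
    _ ≤ gconst n p₀ * p ^ ((1 : ℝ) / 4) := by
        have : 0 ≤ p := by linarith
        gcongr
        exact le_gconst hn hp₀ hX

theorem isAdmissibleCutoff_gconst_mul (hm : m < n) (hp₀ : 2 * 10 ^ 6 ≤ p₀)
    (hlog : 8 * ((n : ℝ) - 1) < Real.log p₀) (hX : 3.8 < Xstar n p₀) (hp : p₀ ≤ p) :
    IsAdmissibleCutoff m p
      (gconst n p₀ * p ^ ((1 : ℝ) / 4) * Real.log p ^ (((m : ℝ) + 2) / 2)) := by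
  have hL := log_ge_of_two_million_le (hp₀.trans hp)
  have hmn : (m : ℝ) ≤ n - 1 := le_sub_iff_add_le.2 (mod_cast hm)
  refine ⟨hp₀.trans hp, ?_, log_pow_le_sqrt hm hp₀ hlog hX hp,
    sqrt_mul_log_pow_le_gconst_mul_sq hm hp₀ hX hp, ?_, ?_⟩
  · linarith [Real.log_le_log (by linarith) hp]
  · calc 7.6 * Real.log p ^ (m + 1)
        = 7.6 * Real.log p ^ ((m : ℝ) / 2) * Real.log p ^ (((m : ℝ) + 2) / 2) := by
          rw [mul_assoc, ← Real.rpow_add (by linarith), ← Real.rpow_natCast]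
          push_cast
          ring_nf
      _ ≤ 7.6 * Real.log p ^ (((n : ℝ) - 1) / 2) * Real.log p ^ (((m : ℝ) + 2) / 2) := by
          gcongr
          linarith
      _ ≤ _ := by
          refine mul_le_mul_of_nonneg_right ?_ (by positivity)
          exact log_rpow_le_gconst_mul (by omega) hp₀ hlog hX hp
  · rintro rfl
    rw [Nat.cast_zero, zero_add, div_self two_ne_zero, Real.rpow_one]
    gcongr
    exact le_gconst_mul_rpow_quarter hm hp₀ hX hp

end Cutoff

section BinomialEstimates

variable {h k j m : ℕ} {L R Z : ℝ}

theorem succ_mul_choose_le (hk : 1 ≤ k) : (h + 1) * h.choose k ≤ h * (h + 1).choose k := by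
  rw [mul_comm (h + 1), Nat.choose_mul_succ_eq, mul_comm h]
  exact Nat.mul_le_mul_left _ (by omega)

theorem two_pow_mul_pow_div_factorial_le (hZ : 2 * (k + j) ≤ Z) :
    2 ^ k * (Z ^ j / j.factorial) ≤ Z ^ (k + j) / (k + j).factorial := by
  induction k with
  | zero => simp
  | succ k ih =>
    push_cast at hZ
    have hZ0 : 0 ≤ Z := le_trans (by positivity) hZ
    have hratio : 2 ≤ Z / (k + j + 1) := by
      rw [le_div_iff₀ (by positivity)]
      linarith
    calc 2 ^ (k + 1) * (Z ^ j / j.factorial) = 2 * (2 ^ k * (Z ^ j / j.factorial)) := by ring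
      _ ≤ Z / (k + j + 1) * (Z ^ (k + j) / (k + j).factorial) := by
          gcongr
          exact ih (by linarith)
      _ = Z ^ (k + 1 + j) / (k + 1 + j).factorial := by
          rw [Nat.add_right_comm, Nat.factorial_succ, pow_succ']
          push_cast
          rw [div_mul_div_comm]

theorem succ_mul_two_pow_mul_choose_le (hh : 2 ≤ h) (hhZ : h + 1 ≤ Z) (hZ : 2 * (k + j) ≤ Z)
    (hkj : 1 ≤ k + j) :
    (h + 1) * (2 ^ k * h.choose j) ≤ h * (Z ^ (k + j) / (k + j).factorial) := by
  have hh' : (2 : ℝ) ≤ h := mod_cast hh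
  rcases Nat.eq_zero_or_pos j with rfl | hj
  · obtain ⟨i, rfl⟩ := Nat.exists_eq_add_of_le' hkj
    simp only [add_zero, Nat.cast_add, Nat.cast_one, Nat.cast_zero] at hZ ⊢
    calc (h + 1) * (2 ^ (i + 1) * (h.choose 0 : ℝ)) = 2 ^ i * (2 * (h + 1)) := by
          rw [Nat.choose_zero_right]
          ring
      _ ≤ 2 ^ i * (h * Z) := by
          gcongr
      _ = h * (2 ^ i * (Z ^ 1 / (1 : ℕ).factorial)) := by
          simp only [pow_one, Nat.factorial_one, Nat.cast_one]
          ring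
      _ ≤ h * (Z ^ (i + 1) / (i + 1).factorial) := by
          gcongr
          refine two_pow_mul_pow_div_factorial_le ?_
          rwa [Nat.cast_one]
  · have hshift : ((h : ℝ) + 1) * h.choose j ≤ h * (h + 1).choose j :=
      mod_cast succ_mul_choose_le hj
    calc (h + 1) * (2 ^ k * (h.choose j : ℝ)) = 2 ^ k * ((h + 1) * h.choose j) := by ring
      _ ≤ 2 ^ k * (h * (h + 1).choose j) := by gcongr
      _ ≤ 2 ^ k * (h * ((h + 1 : ℕ) ^ j / j.factorial)) := by
          gcongr
          exact Nat.choose_le_pow_div j (h + 1)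
      _ ≤ 2 ^ k * (h * (Z ^ j / j.factorial)) := by
          gcongr
          exact_mod_cast hhZ
      _ = h * (2 ^ k * (Z ^ j / j.factorial)) := by ring
      _ ≤ h * (Z ^ (k + j) / (k + j).factorial) := by
          gcongr
          exact two_pow_mul_pow_div_factorial_le hZ

theorem taylor_mul_le_exp_half (c : ℕ) (hL : 2 * c ≤ L) :
    2.718 ^ c * ∑ i ∈ Finset.range 6, (L / 2 - c) ^ i / i.factorial ≤ Real.exp (L / 2) := by
  have hsplit : Real.exp (L / 2) = Real.exp 1 ^ c * Real.exp (L / 2 - c) := by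
    rw [← Real.exp_nat_mul, ← Real.exp_add]
    ring_nf
  rw [hsplit]
  gcongr
  · exact Finset.sum_nonneg fun i _ => div_nonneg (pow_nonneg (by linarith) _) (by positivity)
  · linarith [Real.exp_one_gt_d9]
  · exact Real.sum_le_exp_of_nonneg (by linarith) 6

theorem thirty_one_mul_le_exp_half (hL : 14.5 ≤ L) : 31 * L ≤ Real.exp (L / 2) := by
  have htaylor := taylor_mul_le_exp_half (L := L) 7 (by norm_num; linarith)
  obtain ⟨t, rfl⟩ : ∃ t, L = 2 * (t + 7) := ⟨L / 2 - 7, by ring⟩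
  have ht : 0 ≤ t := by linarith
  norm_num [Finset.sum_range_succ, Nat.factorial] at htaylor ⊢
  nlinarith [pow_nonneg ht 2, pow_nonneg ht 3, pow_nonneg ht 4, pow_nonneg ht 5]

theorem linear_mul_lt_exp_half (hL : 14.5 ≤ L) :
    (0.7214 * L + 4) * (0.7214 * L + 1.51) < 0.47 * Real.exp (L / 2) := by
  have htaylor := taylor_mul_le_exp_half (L := L) 7 (by norm_num; linarith)
  obtain ⟨t, rfl⟩ : ∃ t, L = 2 * (t + 7) := ⟨L / 2 - 7, by ring⟩
  have ht : 0 ≤ t := by linarith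
  norm_num [Finset.sum_range_succ, Nat.factorial] at htaylor ⊢
  nlinarith [pow_nonneg ht 2, pow_nonneg ht 3, pow_nonneg ht 4, pow_nonneg ht 5]

theorem quadratic_mul_lt_exp_half (hL : 20 ≤ L) :
    (0.7214 * L + 5) ^ 2 / 2 * (0.7214 * L + 1.51) < 0.47 * Real.exp (L / 2) := by
  have htaylor := taylor_mul_le_exp_half (L := L) 10 (by norm_num; linarith)
  obtain ⟨t, rfl⟩ : ∃ t, L = 2 * (t + 10) := ⟨L / 2 - 10, by ring⟩
  have ht : 0 ≤ t := by linarith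
  norm_num [Finset.sum_range_succ, Nat.factorial] at htaylor ⊢
  nlinarith [pow_nonneg ht 2, pow_nonneg ht 3, pow_nonneg ht 4, pow_nonneg ht 5]

theorem cubic_mul_lt_exp_half (hL : 24 ≤ L) :
    (0.7214 * L + 6) ^ 3 / 6 * (0.7214 * L + 1.51) < 0.47 * Real.exp (L / 2) := by
  have htaylor := taylor_mul_le_exp_half (L := L) 12 (by norm_num; linarith)
  obtain ⟨t, rfl⟩ : ∃ t, L = 2 * (t + 12) := ⟨L / 2 - 12, by ring⟩
  have ht : 0 ≤ t := by linarith
  norm_num [Finset.sum_range_succ, Nat.factorial] at htaylor ⊢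
  nlinarith [pow_nonneg ht 2, pow_nonneg ht 3, pow_nonneg ht 4, pow_nonneg ht 5]

theorem quartic_mul_lt_exp_half (hL : 32 ≤ L) :
    (0.7214 * L + 7) ^ 4 / 24 * (0.7214 * L + 1.51) < 0.47 * Real.exp (L / 2) := by
  have htaylor := taylor_mul_le_exp_half (L := L) 16 (by norm_num; linarith)
  obtain ⟨t, rfl⟩ : ∃ t, L = 2 * (t + 16) := ⟨L / 2 - 16, by ring⟩
  have ht : 0 ≤ t := by linarith
  norm_num [Finset.sum_range_succ, Nat.factorial] at htaylor ⊢
  nlinarith [pow_nonneg ht 2, pow_nonneg ht 3, pow_nonneg ht 4, pow_nonneg ht 5]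

/- Here `Z ^ m / m! ≤ 8 ^ m * exp (Z / 8)`, and `8 ^ m ≤ exp (0.26 * L)` because `8 * m ≤ L`. -/
theorem pow_div_factorial_mul_lt_exp_half (hL : 40 ≤ L) (hm : 8 * m ≤ L) :
    (0.7214 * L + (3 + m)) ^ m / m.factorial * (0.7214 * L + 1.51)
      < 0.47 * Real.exp (L / 2) := by
  set Z := 0.7214 * L + (3 + m) with hZ
  have : 0 ≤ Z := by positivity
  have eight_pow_le : (8 : ℝ) ^ m ≤ Real.exp (0.26 * L) := by
    rw [← Real.log_le_iff_le_exp (by positivity), Real.log_pow,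
      show (8 : ℝ) = 2 ^ 3 by norm_num, Real.log_pow]
    push_cast
    nlinarith [Real.log_two_lt_d9, (Nat.cast_nonneg m : (0 : ℝ) ≤ m)]
  have hpow : Z ^ m / m.factorial ≤ Real.exp (0.36580 * L + 0.375) := by
    calc Z ^ m / m.factorial = 8 ^ m * ((Z / 8) ^ m / m.factorial) := by
          rw [div_pow]
          field_simp
      _ ≤ Real.exp (0.26 * L) * Real.exp (Z / 8) := by
          gcongr
          exact Real.pow_div_factorial_le_exp _ (by positivity) m
      _ ≤ Real.exp (0.36580 * L + 0.375) := by
          rw [← Real.exp_add, Real.exp_le_exp]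
          linarith
  have hlinear : 0.7214 * L + 1.51 < 0.47 * Real.exp (0.13420 * L - 0.375) := by
    have hsplit : Real.exp (0.13420 * L - 0.375)
        = Real.exp 1 ^ 4 * Real.exp (0.13420 * L - 4.375) := by
      rw [← Real.exp_nat_mul, ← Real.exp_add]
      ring_nf
    have htangent : (2.7 : ℝ) ^ 4 * (0.13420 * L - 4.375 + 1)
        ≤ Real.exp 1 ^ 4 * Real.exp (0.13420 * L - 4.375) := by
      gcongr
      · linarith
      · linarith [Real.exp_one_gt_d9]
      · exact Real.add_one_le_exp _
    linarith
  calc Z ^ m / m.factorial * (0.7214 * L + 1.51)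
      < Real.exp (0.36580 * L + 0.375) * (0.47 * Real.exp (0.13420 * L - 0.375)) :=
        mul_lt_mul' hpow hlinear (by positivity) (Real.exp_pos _)
    _ = 0.47 * Real.exp (L / 2) := by
        rw [mul_left_comm, ← Real.exp_add]
        ring_nf

end BinomialEstimates

section ProductsOfPrimes

variable {Q : Finset ℕ} {L : ℝ}

theorem prime_dvd_prod_primes (hQ : ∀ r ∈ Q, r.Prime) {r : ℕ} (hr : r.Prime) :
    r ∣ ∏ q ∈ Q, q ↔ r ∈ Q := by
  refine ⟨fun hdvd => ?_, fun hmem => Finset.dvd_prod_of_mem _ hmem⟩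
  obtain ⟨q, hq, hrq⟩ := (Prime.dvd_finsetProd_iff hr.prime _).1 hdvd
  rwa [(Nat.prime_dvd_prime_iff_eq hr (hQ q hq)).1 hrq]

theorem totient_prod_primes (hQ : ∀ r ∈ Q, r.Prime) :
    ((∏ q ∈ Q, q).totient : ℝ) = ∏ q ∈ Q, ((q : ℝ) - 1) := by
  induction Q using Finset.induction_on with
  | empty => simp
  | insert a s ha ih =>
    obtain ⟨hap, hsp⟩ := Finset.forall_mem_insert _ _ _ |>.1 hQ
    have hcop : a.Coprime (∏ q ∈ s, q) := (hap.coprime_iff_not_dvd).2 fun hdvd =>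
      ha ((prime_dvd_prod_primes hsp hap).1 hdvd)
    rw [Finset.prod_insert ha, Finset.prod_insert ha, Nat.totient_mul hcop, Nat.cast_mul, ih hsp,
      Nat.totient_prime hap, Nat.cast_sub hap.one_le, Nat.cast_one]

theorem prod_primes_le_totient_mul_two_pow (hQ : ∀ r ∈ Q, r.Prime) :
    ((∏ q ∈ Q, q : ℕ) : ℝ) ≤ (∏ q ∈ Q, q : ℕ).totient * 2 ^ Q.card := by
  rw [totient_prod_primes hQ, ← Finset.prod_const, ← Finset.prod_mul_distrib, Nat.cast_prod]
  refine Finset.prod_le_prod (fun _ _ => by positivity) fun r hr => ?_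
  have : (2 : ℝ) ≤ r := mod_cast (hQ r hr).two_le
  linarith

theorem prod_primes_sq_le_totient_mul_pow (hL : 4.5 ≤ L) (hQ : ∀ r ∈ Q, r.Prime)
    (hQL : ∀ r ∈ Q, (r : ℝ) + 1.25 ≤ L) :
    ((∏ q ∈ Q, q : ℕ) : ℝ) ^ 2 ≤ (∏ q ∈ Q, q : ℕ).totient * L ^ Q.card := by
  rw [totient_prod_primes hQ, ← Finset.prod_const, ← Finset.prod_mul_distrib, Nat.cast_prod,
    ← Finset.prod_pow]
  refine Finset.prod_le_prod (fun _ _ => by positivity) fun r hr => ?_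
  have hrL := hQL r hr
  have hr2 : 2 ≤ r := (hQ r hr).two_le
  rcases lt_or_ge r 5 with hr5 | hr5
  · interval_cases r
    · norm_num
      linarith
    · norm_num
      linarith
    · exact absurd (hQ 4 hr) (by norm_num)
  · have : (5 : ℝ) ≤ r := mod_cast hr5
    nlinarith

theorem prod_le_pow_card (hQL : ∀ r ∈ Q, (r : ℝ) ≤ L) :
    ((∏ q ∈ Q, q : ℕ) : ℝ) ≤ L ^ Q.card := by
  rw [← Finset.prod_const, Nat.cast_prod]
  exact Finset.prod_le_prod (fun _ _ => by positivity) hQL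

end ProductsOfPrimes

namespace IsAdmissibleCutoff

variable {m k j h : ℕ} {p Y : ℝ}

theorem log_ge (hY : IsAdmissibleCutoff m p Y) : 14.5 ≤ Real.log p :=
  log_ge_of_two_million_le hY.two_million_le

theorem exp_half_log (hY : IsAdmissibleCutoff m p Y) : Real.exp (Real.log p / 2) = √p := by
  rw [Real.exp_half, Real.exp_log (by linarith [hY.two_million_le])]

theorem mul_sq_log_le_sqrt (hY : IsAdmissibleCutoff 2 p Y) : 17.2 * Real.log p ^ 2 ≤ √p := by
  refine le_trans ?_ hY.log_pow_le_sqrt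
  push_cast
  gcongr
  norm_num

theorem pow_div_factorial_mul_lt_sqrt (hY : IsAdmissibleCutoff m p Y) (hm : 1 ≤ m) :
    (0.7214 * Real.log p + (3 + m)) ^ m / m.factorial * (0.7214 * Real.log p + 1.51)
      < 0.47 * √p := by
  have hL := hY.log_ge
  have hmL := hY.eight_mul_lt_log
  rcases lt_or_ge m 5 with hm5 | hm5
  · interval_cases m
    · have := linear_mul_lt_exp_half hL
      rw [hY.exp_half_log] at this
      norm_num at this ⊢
      linarith
    · have hsq := hY.mul_sq_log_le_sqrt
      norm_num at hmL ⊢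
      rcases le_total (Real.log p) 20 with h20 | h20
      · nlinarith
      · have := quadratic_mul_lt_exp_half h20
        rw [hY.exp_half_log] at this
        norm_num at this ⊢
        linarith
    · norm_num at hmL
      have := cubic_mul_lt_exp_half hmL.le
      rw [hY.exp_half_log] at this
      norm_num [Nat.factorial] at this ⊢
      linarith
    · norm_num at hmL
      have := quartic_mul_lt_exp_half hmL.le
      rw [hY.exp_half_log] at this
      norm_num [Nat.factorial] at this ⊢
      linarith
  · rw [← hY.exp_half_log]
    have : (5 : ℝ) ≤ m := mod_cast hm5
    exact pow_div_factorial_mul_lt_exp_half (by linarith) hmL.le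

theorem choose_mul_lt_sqrt (hY : IsAdmissibleCutoff m p Y) (hkj : k + j = m) (hh : 2 ≤ h)
    (hhL : h ≤ 0.7214 * Real.log p + 2 + m) :
    (h + 1) * (2 ^ k * h.choose j) * (0.7214 * Real.log p + 1.51) < 0.47 * √p * h := by
  have hL := hY.log_ge
  have hh' : (2 : ℝ) ≤ h := mod_cast hh
  rcases Nat.eq_zero_or_pos m with rfl | hm
  · obtain ⟨rfl, rfl⟩ := Nat.add_eq_zero_iff.1 hkj
    have hlinear := linear_mul_lt_exp_half hL
    rw [hY.exp_half_log] at hlinear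
    calc (h + 1) * (2 ^ 0 * (h.choose 0 : ℝ)) * (0.7214 * Real.log p + 1.51)
        = (h + 1) * (0.7214 * Real.log p + 1.51) := by
          rw [pow_zero, Nat.choose_zero_right, Nat.cast_one]
          ring
      _ ≤ (0.7214 * Real.log p + 4) * h * (0.7214 * Real.log p + 1.51) := by
          gcongr
          nlinarith
      _ = (0.7214 * Real.log p + 4) * (0.7214 * Real.log p + 1.51) * h := by ring
      _ < 0.47 * √p * h := by gcongr
  · have hmL := hY.eight_mul_lt_log
    have hm' : (m : ℝ) = k + j := mod_cast hkj.symm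
    calc (h + 1) * (2 ^ k * h.choose j) * (0.7214 * Real.log p + 1.51)
        ≤ h * ((0.7214 * Real.log p + (3 + m)) ^ m / m.factorial)
          * (0.7214 * Real.log p + 1.51) := by
          gcongr ?_ * _
          rw [← hkj]
          refine succ_mul_two_pow_mul_choose_le hh ?_ ?_ (by omega)
          · push_cast
            linarith
          · push_cast
            linarith
      _ = (0.7214 * Real.log p + (3 + m)) ^ m / m.factorial * (0.7214 * Real.log p + 1.51) * h := by
          ring
      _ < 0.47 * √p * h := by
          gcongr ?_ * _
          exact hY.pow_div_factorial_mul_lt_sqrt hm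

theorem mul_log_pow_succ_le (hY : IsAdmissibleCutoff m p Y) :
    937.5 * Real.log p ^ (m + 1) ≤ p := by
  have hL := hY.log_ge
  have hR : √p ^ 2 = p := Real.sq_sqrt (by linarith [hY.two_million_le])
  rcases lt_or_ge m 2 with hm | hm
  · have hlinear := thirty_one_mul_le_exp_half hL
    rw [hY.exp_half_log] at hlinear
    calc 937.5 * Real.log p ^ (m + 1) ≤ 937.5 * Real.log p ^ 2 := by
          gcongr
          · linarith
          · omega
      _ ≤ (31 * Real.log p) ^ 2 := by
          rw [mul_pow]
          gcongr
          norm_num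
      _ ≤ √p ^ 2 := by gcongr
      _ = p := hR
  · have hsqrt : 9.68 * Real.log p ^ m ≤ √p := by
      refine le_trans ?_ hY.log_pow_le_sqrt
      gcongr
      refine le_mul_of_one_le_right (by norm_num) (one_le_pow₀ ?_)
      rw [le_div_iff₀ (by positivity)]
      linarith
    calc 937.5 * Real.log p ^ (m + 1) ≤ 9.68 ^ 2 * Real.log p * Real.log p ^ (m + 1) := by
          gcongr
          linarith
      _ = 9.68 ^ 2 * Real.log p ^ (m + 2) := by ring
      _ ≤ 9.68 ^ 2 * Real.log p ^ (2 * m) := by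
          gcongr
          · linarith
          · omega
      _ = (9.68 * Real.log p ^ m) ^ 2 := by ring
      _ ≤ √p ^ 2 := by gcongr
      _ = p := hR

theorem exists_height_bound (hY : IsAdmissibleCutoff m p Y) :
    ∃ x : ℝ, 2 < x ∧ x * Real.log p ^ (m + 1) ≤ Y ∧
      (0.7214 * Real.log p + 1.51) * (0.7214 * Real.log p + 2 + m)
        < 5.96 * ((m + 1) / (m + 2)) ^ 2 * Real.log p ^ 2 * (37 / 72 - 1 / x) := by
  have hL := hY.log_ge
  rcases Nat.eq_zero_or_pos m with rfl | hm
  · refine ⟨45.8, by norm_num, by simpa using hY.log_le_of_eq_zero rfl, ?_⟩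
    norm_num at hL ⊢
    nlinarith
  · refine ⟨7.6, by norm_num, hY.log_pow_le, ?_⟩
    have hmL := hY.eight_mul_lt_log
    have hm' : (1 : ℝ) ≤ m := mod_cast hm
    have hratio : (2 / 3 : ℝ) ≤ (m + 1) / (m + 2) := by
      rw [div_le_div_iff₀ (by norm_num) (by positivity)]
      linarith
    calc (0.7214 * Real.log p + 1.51) * (0.7214 * Real.log p + 2 + m)
        ≤ (0.7214 * Real.log p + 1.51) * (0.8464 * Real.log p + 2) := by
          gcongr _ * ?_
          linarith
      _ < 5.96 * (2 / 3) ^ 2 * Real.log p ^ 2 * (37 / 72 - 1 / 7.6) := by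
          norm_num at hL ⊢
          nlinarith
      _ ≤ 5.96 * ((m + 1) / (m + 2)) ^ 2 * Real.log p ^ 2 * (37 / 72 - 1 / 7.6) := by
          gcongr

theorem mul_sqrt_lt_of_height_eq {u φ h c X : ℝ} (hY : IsAdmissibleCutoff m p Y) (hu : 0 < u)
    (hφ : 0 < φ) (hh : 0 < h) (huh : u * h ≤ Real.log p ^ (m + 1))
    (hhL : h ≤ 0.7214 * Real.log p + 2 + m) (huc : u ^ 2 * c ≤ φ * Real.log p ^ m)
    (hX : X * (u * h) = Y) :
    c * ((0.7214 * Real.log p + 1.51) * √p) < 2 * (φ * h * (37 / 144 * X ^ 2 - X / 2)) := by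
  obtain ⟨x, hx, hxY, hnum⟩ := hY.exists_height_bound
  have hL := hY.log_ge
  have hR : 0 < √p := Real.sqrt_pos.2 (by linarith [hY.two_million_le])
  have hxX : x ≤ X := by
    refine le_of_mul_le_mul_right ?_ (mul_pos hu hh)
    rw [hX]
    refine le_trans ?_ hxY
    gcongr
  have hx' : 0 ≤ 37 / 72 - 1 / x := by
    have := one_div_le_one_div_of_le two_pos hx.le
    linarith
  have hlinear : X ≤ X ^ 2 * (1 / x) := by
    rw [mul_one_div, le_div_iff₀ (by linarith)]
    nlinarith
  refine lt_of_mul_lt_mul_left ?_ (by positivity : 0 ≤ u ^ 2 * h)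
  calc u ^ 2 * h * (c * ((0.7214 * Real.log p + 1.51) * √p))
      = u ^ 2 * c * ((0.7214 * Real.log p + 1.51) * h * √p) := by ring
    _ ≤ φ * Real.log p ^ m
        * ((0.7214 * Real.log p + 1.51) * (0.7214 * Real.log p + 2 + m) * √p) := by gcongr
    _ < φ * Real.log p ^ m
        * (5.96 * ((m + 1) / (m + 2)) ^ 2 * Real.log p ^ 2 * (37 / 72 - 1 / x) * √p) := by gcongr
    _ = φ * (37 / 72 - 1 / x)
        * (5.96 * ((m + 1) / (m + 2)) ^ 2 * √p * Real.log p ^ (m + 2)) := by ring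
    _ ≤ φ * (37 / 72 - 1 / x) * Y ^ 2 := by
        gcongr
        exact hY.sqrt_mul_log_pow_le_sq
    _ = φ * (u * h) ^ 2 * (37 / 72 * X ^ 2 - X ^ 2 * (1 / x)) := by
        rw [← hX]
        ring
    _ ≤ φ * (u * h) ^ 2 * (37 / 72 * X ^ 2 - X) := by gcongr
    _ = u ^ 2 * h * (2 * (φ * h * (37 / 144 * X ^ 2 - X / 2))) := by ring

theorem mul_sqrt_lt_of_height_sq_eq {u φ X : ℝ} (hY : IsAdmissibleCutoff m p Y) (hu : 0 < u)
    (hφ : 0 < φ) (hkj : k + j = m) (hh : 2 ≤ h) (hhL : h ≤ 0.7214 * Real.log p + 2 + m)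
    (huφ : u ≤ φ * 2 ^ k) (hX : 25 ≤ X) (hXp : X ^ 2 * (u * (h + 1)) = p) :
    h.choose j * ((0.7214 * Real.log p + 1.51) * √p)
      < 2 * (φ * h * (37 / 144 * X ^ 2 - X / 2)) := by
  have hL := hY.log_ge
  have hp : 0 < p := by linarith [hY.two_million_le]
  have : 0 < √p := Real.sqrt_pos.2 hp
  refine lt_of_mul_lt_mul_left ?_ (by positivity : 0 ≤ u * (h + 1))
  calc u * (h + 1) * (h.choose j * ((0.7214 * Real.log p + 1.51) * √p))
      ≤ φ * 2 ^ k * (h + 1) * (h.choose j * ((0.7214 * Real.log p + 1.51) * √p)) := by gcongr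
    _ = φ * √p * ((h + 1) * (2 ^ k * h.choose j) * (0.7214 * Real.log p + 1.51)) := by ring
    _ < φ * √p * (0.47 * √p * h) := by
        gcongr φ * √p * ?_
        exact hY.choose_mul_lt_sqrt hkj hh hhL
    _ = φ * h * (u * (h + 1)) * (0.47 * X ^ 2) := by
        rw [show φ * √p * (0.47 * √p * h) = φ * h * 0.47 * √p ^ 2 by ring, Real.sq_sqrt hp.le,
          ← hXp]
        ring
    _ ≤ φ * h * (u * (h + 1)) * (37 / 72 * X ^ 2 - X) := by
        gcongr
        nlinarith
    _ = u * (h + 1) * (2 * (φ * h * (37 / 144 * X ^ 2 - X / 2))) := by ring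

end IsAdmissibleCutoff

/-! ### Prime nonresidues -/

section ExceptionalPrimes

theorem IsAdmissibleCutoff.exists_height {m k j h : ℕ} {p Y u φ : ℝ}
    (hY : IsAdmissibleCutoff m p Y) (hu : 0 < u) (hφ : 0 < φ) (hkj : k + j = m) (hh : 2 ≤ h)
    (hhL : h ≤ 0.7214 * Real.log p + 2 + m) (huh : u * h ≤ Real.log p ^ (m + 1))
    (huφ : u ≤ φ * 2 ^ k) (huc : u ^ 2 * h.choose j ≤ φ * Real.log p ^ m) :
    ∃ X : ℝ, 1 ≤ X ∧ X ^ 2 * (u * (h + 1)) ≤ p ∧ X * (u * h) ≤ Y ∧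
      h.choose j * ((0.7214 * Real.log p + 1.51) * √p)
        < 2 * (φ * h * (37 / 144 * X ^ 2 - X / 2)) := by
  have hh' : (2 : ℝ) ≤ h := mod_cast hh
  have huh_pos : 0 < u * h := by positivity
  have huhY : u * h ≤ Y := by linarith [hY.log_pow_le]
  rcases le_or_gt ((Y / (u * h)) ^ 2 * (u * (h + 1))) p with hsmall | hlarge
  · have hX : Y / (u * h) * (u * h) = Y := div_mul_cancel₀ _ huh_pos.ne'
    exact ⟨Y / (u * h), (one_le_div huh_pos).2 huhY, hsmall, hX.le,
      hY.mul_sqrt_lt_of_height_eq hu hφ (by linarith) huh hhL huc hX⟩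
  · have hsqrt : √(p / (u * (h + 1))) ^ 2 = p / (u * (h + 1)) :=
      Real.sq_sqrt (div_nonneg (by linarith [hY.two_million_le]) (by positivity))
    have hXp : √(p / (u * (h + 1))) ^ 2 * (u * (h + 1)) = p := by
      rw [hsqrt, div_mul_cancel₀ _ (by positivity)]
    have hX : 25 ≤ √(p / (u * (h + 1))) := by
      refine Real.le_sqrt_of_sq_le ?_
      rw [le_div_iff₀ (by positivity)]
      calc 25 ^ 2 * (u * (h + 1)) ≤ 25 ^ 2 * (u * (1.5 * h)) := by
            gcongr
            linarith
        _ = 937.5 * (u * h) := by ring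
        _ ≤ 937.5 * Real.log p ^ (m + 1) := by gcongr
        _ ≤ p := hY.mul_log_pow_succ_le
    refine ⟨_, by linarith, hXp.le, ?_, hY.mul_sqrt_lt_of_height_sq_eq hu hφ hkj hh hhL huφ hX hXp⟩
    rw [← le_div_iff₀ huh_pos]
    refine Real.sqrt_le_iff.2 ⟨div_nonneg (by linarith) huh_pos.le, ?_⟩
    rw [div_le_iff₀ (by positivity)]
    exact hlarge.le

theorem IsAdmissibleCutoff.exists_height_of_primes {m j h : ℕ} {p Y : ℝ} {Q : Finset ℕ}
    (hY : IsAdmissibleCutoff m p Y) (hQ : ∀ r ∈ Q, r.Prime) (hkj : Q.card + j = m)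
    (hQL : ∀ r ∈ Q, (r : ℝ) + 1.25 ≤ Real.log p) (hh : 2 ≤ h)
    (hhL : h ≤ 0.7214 * Real.log p + 2 + m) :
    ∃ X : ℝ, 1 ≤ X ∧ X ^ 2 * ((∏ q ∈ Q, q : ℕ) * (h + 1)) ≤ p ∧ X * ((∏ q ∈ Q, q : ℕ) * h) ≤ Y ∧
      h.choose j * ((0.7214 * Real.log p + 1.51) * √p)
        < 2 * ((∏ q ∈ Q, q : ℕ).totient * h * (37 / 144 * X ^ 2 - X / 2)) := by
  have hL := hY.log_ge
  have hmL := hY.eight_mul_lt_log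
  have hhlog : h ≤ Real.log p := by linarith
  have hsq := prod_primes_sq_le_totient_mul_pow (by linarith) hQ hQL
  have huφ := prod_primes_le_totient_mul_two_pow hQ
  have huL := prod_le_pow_card (Q := Q) (L := Real.log p) fun r hr => by linarith [hQL r hr]
  have hu_pos : 0 < ∏ q ∈ Q, q := Finset.prod_pos fun r hr => (hQ r hr).pos
  set u := ∏ q ∈ Q, q
  refine hY.exists_height (mod_cast hu_pos) (mod_cast Nat.totient_pos.2 hu_pos) hkj hh hhL ?_
    huφ ?_
  · calc (u * h : ℝ) ≤ Real.log p ^ Q.card * Real.log p := by gcongr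
      _ = Real.log p ^ (Q.card + 1) := (pow_succ _ _).symm
      _ ≤ Real.log p ^ (m + 1) := pow_le_pow_right₀ (by linarith) (by omega)
  · calc (u : ℝ) ^ 2 * h.choose j ≤ u.totient * Real.log p ^ Q.card * h ^ j := by
          gcongr
          exact_mod_cast Nat.choose_le_pow h j
      _ ≤ u.totient * Real.log p ^ Q.card * Real.log p ^ j := by gcongr
      _ = u.totient * Real.log p ^ m := by rw [mul_assoc, ← pow_add, hkj]

variable {p : ℕ} [Fact p.Prime] {g : ℕ} {Q : Finset ℕ}

theorem two_mul_totient_mul_le_choose_mul {s h u : ℕ} {B X : ℝ} (hB : HasShiftBound p g s B)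
    (hg : g ≠ 0) (hh : s + 1 + Q.card = h) (hhp : h ≤ p)
    (hQ : ∀ r ∈ Q, r.Prime ∧ h ≤ r) (hpu : ¬ p ∣ u) (hX : 1 ≤ X)
    (hXp : X ^ 2 * (u * (h + 1)) ≤ p)
    (hres : ∀ r : ℕ, r.Prime → (r : ℝ) < X * (u * h) → r ≠ p → ¬ r ∣ u → r ∉ Q →
      (r : ZMod p) ^ g = 1) :
    2 * (u.totient * h * (37 / 144 * X ^ 2 - X / 2)) ≤ h.choose Q.card * B := by
  obtain ⟨i, rfl⟩ : ∃ i, h = i + 1 := ⟨s + Q.card, by omega⟩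
  have hXp' : X ^ 2 * u * (i + 2) ≤ p := by
    push_cast at hXp
    linarith
  have hrange : X * (u * (i + 1)) ≤ p := by
    refine le_trans ?_ (mul_bound_le hXp')
    rw [mul_assoc X (u : ℝ)]
    exact le_mul_of_one_le_left (by positivity) hX
  push_cast at hres ⊢
  calc 2 * (u.totient * (i + 1) * (37 / 144 * X ^ 2 - X / 2))
      ≤ 2 * (u.totient * (i + 1) * fareyWeight X) := by
        gcongr
        exact le_fareyWeight (by linarith)
    _ ≤ (almostConstantBlocks p g (i + 1) Q.card).card := by
        refine two_mul_totient_mul_fareyWeight_le_card hQ hpu (fun r hr hrX hru hrQ => ?_) hXp'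
        rw [mul_assoc] at hrX
        refine hres r hr hrX ?_ hru hrQ
        rintro rfl
        exact hrX.not_ge hrange
    _ ≤ (i + 1).choose Q.card * B := by
        rw [← hh] at hhp ⊢
        exact card_almostConstantBlocks_le hB hg hhp

theorem IsAdmissibleCutoff.add_le_log_of_lt_add {m s r : ℕ} {x Y : ℝ}
    (hY : IsAdmissibleCutoff m x Y) (hs : s ≤ 0.7214 * Real.log x + 1) (hr : r < s + 1 + m)
    (hm : 1 ≤ m) :
    (r : ℝ) + 1.25 ≤ Real.log x := by
  have hL := hY.log_ge
  have hmL := hY.eight_mul_lt_log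
  have hrm : (r : ℝ) ≤ s + m := mod_cast (by omega : r ≤ s + m)
  rcases hm.eq_or_lt with rfl | hm2
  · push_cast at hrm
    linarith
  · have : (2 : ℝ) ≤ m := mod_cast hm2
    linarith

theorem exists_prime_pow_ne_one {ℓ m : ℕ} {Y : ℝ} (hY : IsAdmissibleCutoff m p Y) (hℓ : 2 ≤ ℓ)
    (hg : ℓ * g + 1 = p) (hQ : ∀ r ∈ Q, r.Prime) (hcard : Q.card = m) :
    ∃ r : ℕ, r.Prime ∧ (r : ℝ) < Y ∧ r ≠ p ∧ r ∉ Q ∧ (r : ZMod p) ^ g ≠ 1 := by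
  by_contra! hres
  have hp : p.Prime := Fact.out
  have hL := hY.log_ge
  have hmL := hY.eight_mul_lt_log
  have hlogp : Real.log p ≤ p - 1 := Real.log_le_sub_one_of_pos (mod_cast hp.pos)
  have hg0 : g ≠ 0 := by
    rintro rfl
    exact hp.one_lt.ne hg
  obtain ⟨s, hs1, hsL, hB⟩ := exists_hasShiftBound hg hℓ (mod_cast hY.two_million_le)
  let small := Q.filter (· < s + 1 + m)
  let large := Q.filter (¬ · < s + 1 + m)
  have hcards : small.card + large.card = m := by
    rw [Finset.card_filter_add_card_filter_not, hcard]
  have hjm : (large.card : ℝ) ≤ m := mod_cast (by omega : large.card ≤ m)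
  have hprime : ∀ r ∈ small, r.Prime := fun r hr => hQ r (Finset.mem_filter.1 hr).1
  have hsmallL : ∀ r ∈ small, (r : ℝ) + 1.25 ≤ Real.log p := by
    intro r hr
    have hrs := (Finset.mem_filter.1 hr).2
    refine hY.add_le_log_of_lt_add hsL hrs ?_
    exact hcards ▸ (Finset.card_pos.2 ⟨r, hr⟩).trans_le (Nat.le_add_right _ _)
  have hhL : ((s + 1 + large.card : ℕ) : ℝ) ≤ 0.7214 * Real.log p + 2 + m := by
    push_cast
    linarith
  obtain ⟨X, hX, hXp, hXY, hlt⟩ :=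
    hY.exists_height_of_primes hprime hcards hsmallL (by omega) hhL
  refine hlt.not_ge (two_mul_totient_mul_le_choose_mul hB hg0 rfl ?_ (fun r hr => ?_) ?_ hX hXp
    fun r hr hrX hrp hru hrlarge => hres r hr (hrX.trans_le hXY) hrp fun hrQ => ?_)
  · have : ((s + 1 + large.card : ℕ) : ℝ) ≤ p := by linarith
    exact_mod_cast this
  · obtain ⟨hrQ, hrs⟩ := Finset.mem_filter.1 hr
    exact ⟨hQ r hrQ, by omega⟩
  · rw [prime_dvd_prod_primes hprime hp]
    intro hmem
    linarith [hsmallL p hmem]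
  · rw [prime_dvd_prod_primes hprime hr] at hru
    by_cases hrs : r < s + 1 + m
    · exact hru (Finset.mem_filter.2 ⟨hrQ, hrs⟩)
    · exact hrlarge (Finset.mem_filter.2 ⟨hrQ, hrs⟩)

end ExceptionalPrimes

section Nonresidues

variable {R : Type*} [CommMonoidWithZero R] [Nontrivial R] {p : ℕ} {χ : DirichletCharacter R p}

theorem exists_prime_nonresidue_notMem [Fact p.Prime] {m : ℕ} {Y : ℝ} {Q : Finset ℕ} (hχ : χ ≠ 1)
    (hY : IsAdmissibleCutoff m p Y) (hQ : ∀ r ∈ Q, r.Prime) (hcard : Q.card = m) :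
    ∃ r : ℕ, r.Prime ∧ (r : ℝ) < Y ∧ r ∉ Q ∧ χ (r : ZMod p) ≠ 0 ∧ χ (r : ZMod p) ≠ 1 := by
  obtain ⟨ℓ, g, hℓ, hg, hres⟩ := exists_index_of_ne_one hχ
  obtain ⟨r, hr, hrY, hrp, hrQ, hrg⟩ := exists_prime_pow_ne_one hY hℓ hg hQ hcard
  have hunit : IsUnit (r : ZMod p) :=
    (ZMod.isUnit_iff_coprime r p).2 ((Nat.coprime_primes hr Fact.out).2 hrp)
  exact ⟨r, hr, hrY, hrQ, (hunit.map χ).ne_zero, fun hχr => hrg (hres _ hχr)⟩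

theorem stmt_1_general {n₀ n q : ℕ} {p₀ : ℝ} (hX : 3.8 < Xstar n₀ p₀) (hp₀ : 2 * 10 ^ 6 ≤ p₀)
    (hexp : Real.exp (8 * ((n₀ : ℝ) - 1)) < p₀) (hp : p.Prime) (hp₀p : p₀ ≤ p) (hχ : χ ≠ 1)
    (hnn₀ : n ≤ n₀)
    (hq : {r : ℕ | r < q ∧ r.Prime ∧ χ (r : ZMod p) ≠ 0 ∧ χ (r : ZMod p) ≠ 1}.ncard < n) :
    (q : ℝ) ≤ gconst n₀ p₀ * (p : ℝ) ^ ((1 : ℝ) / 4) * Real.log p ^ (((n : ℝ) + 1) / 2) := by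
  by_contra! hlt
  have : Fact p.Prime := ⟨hp⟩
  have hfin : {r : ℕ | r < q ∧ r.Prime ∧ χ (r : ZMod p) ≠ 0 ∧ χ (r : ZMod p) ≠ 1}.Finite :=
    (Set.finite_lt_nat q).subset fun r hr => hr.1
  rw [Set.ncard_eq_toFinset_card _ hfin] at hq
  have hlog : 8 * ((n₀ : ℝ) - 1) < Real.log p₀ := (Real.lt_log_iff_exp_lt (by linarith)).2 hexp
  have hY := isAdmissibleCutoff_gconst_mul (hq.trans_le hnn₀) hp₀ hlog hX hp₀p
  obtain ⟨r, hr, hrY, hrQ, hr0, hr1⟩ := exists_prime_nonresidue_notMem hχ hY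
    (fun r hr => (hfin.mem_toFinset.1 hr).2.1) rfl
  refine hrQ (hfin.mem_toFinset.2 ⟨mod_cast (hrY.trans_le ?_).trans hlt, hr, hr0, hr1⟩)
  have hm : (hfin.toFinset.card : ℝ) + 1 ≤ n := mod_cast hq
  have hg : 0 ≤ gconst n₀ p₀ :=
    le_trans (by positivity) (le_gconst (Nat.zero_lt_of_lt (hq.trans_le hnn₀)) hp₀ hX)
  gcongr _ * ?_
  exact Real.rpow_le_rpow_of_exponent_le (by linarith [hY.log_ge]) (by linarith)

end Nonresidues

/-- Corollary: fix positive integers `n₀`, `p₀` with `X*(p₀,n₀) > 3.8` and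
`p₀ > max{2·10⁶, exp(8(n₀-1))}`, and set `C = g(n₀,p₀)`.  Then for every prime `p ≥ p₀`,
every nonprincipal Dirichlet character `χ` mod `p`, and every `1 ≤ n ≤ n₀`, the `n`-th
smallest prime nonresidue `qₙ` of `χ` (i.e. the prime nonresidue `q` preceded by exactly
`n - 1` smaller prime nonresidues) satisfies `qₙ ≤ C p^(1/4) (log p)^((n+1)/2)`. -/
theorem stmt_1 (n₀ p₀ : ℕ) (hn₀ : 0 < n₀) (hp₀ : 0 < p₀)
    (hX : Xstar n₀ p₀ > 3.8)
    (hp₀big : (p₀ : ℝ) > max (2 * 10 ^ 6) (Real.exp (8 * ((n₀ : ℝ) - 1))))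
    (C : ℝ) (hC : C = gconst n₀ p₀) :
    ∀ p : ℕ, p.Prime → p₀ ≤ p →
      ∀ χ : DirichletCharacter ℂ p, χ ≠ 1 →
        ∀ n : ℕ, 1 ≤ n → n ≤ n₀ →
          ∀ q : ℕ,
            (q.Prime ∧ χ ((q : ZMod p)) ≠ 0 ∧ χ ((q : ZMod p)) ≠ 1) →
            ({r : ℕ | r < q ∧ r.Prime ∧ χ ((r : ZMod p)) ≠ 0 ∧ χ ((r : ZMod p)) ≠ 1}.ncard
              = n - 1) →
            (q : ℝ) ≤ C * (p : ℝ) ^ ((1 : ℝ) / 4) * Real.log p ^ (((n : ℝ) + 1) / 2) := by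
  intro p hp hp₀p χ hχ n hn hnn₀ q _ hcard
  obtain ⟨hp₀_ge, hexp⟩ := max_lt_iff.1 hp₀big
  rw [hC]
  exact stmt_1_general hX hp₀_ge.le hexp hp (mod_cast hp₀p) hχ hnn₀ (by omega)
end

section
/- Let p be a prime, and let H, h be positive reals with h ≥ 1. For integers 0 ≤ b < a with gcd(a,b) = 1, define the real intervals I(a,b) = (bp/a, (bp+H)/a] and J(a,b) = [(bp−H)/a, bp/a). Let X be a real number with 2XH < p. Then the intervals I(a,b) and J(a,b), ranging over all pairs (a,b) with 0 ≤ b < a ≤ X and gcd(a,b) = 1, are pairwise disjoint subintervals of (0, p − H), with the single exception of J(1,0) = [−H, 0). -/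
/-- The interval `I(a,b) = (bp/a, (bp+H)/a]`. -/
def Iab (p : ℕ) (H : ℝ) (a b : ℕ) : Set ℝ :=
  Set.Ioc ((b * p : ℝ) / a) (((b * p : ℝ) + H) / a)

/-- The interval `J(a,b) = [(bp-H)/a, bp/a)`. -/
def Jab (p : ℕ) (H : ℝ) (a b : ℕ) : Set ℝ :=
  Set.Ico (((b * p : ℝ) - H) / a) ((b * p : ℝ) / a)

/-!
A common point `x` of two closed intervals `[(bp-H)/a, (bp+H)/a]` and `[(b'p-H)/a', (b'p+H)/a']`
satisfies `(a'b - ab')p = a(a'x - b'p) - a'(ax - bp)`, which is at most `(a + a')H ≤ 2XH < p` in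
absolute value. Hence the integer `a'b - ab'` vanishes, and coprimality makes the two pairs equal.
-/

/-- The reals `x` with `|a * x - b * p| ≤ H`: for `0 < a` this is the closed interval
`[(bp-H)/a, (bp+H)/a]`, which contains both `I(a,b)` and `J(a,b)`. -/
def approxInterval (p H : ℝ) (a b : ℕ) : Set ℝ :=
  {x | |a * x - b * p| ≤ H}

theorem mul_eq_mul_of_abs_mul_sub_mul_le {R : Type*} [CommRing R] [LinearOrder R]
    [IsStrictOrderedRing R] {a b a' b' : ℤ} {p x ε ε' : R} (h : |a * x - b * p| ≤ ε)
    (h' : |a' * x - b' * p| ≤ ε') (hp : |(a' : R)| * ε + |(a : R)| * ε' < p) :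
    a' * b = a * b' := by
  have hdet_mul : |((a' * b - a * b' : ℤ) : R)| * p < 1 * p := by
    calc |((a' * b - a * b' : ℤ) : R)| * p
        ≤ |((a' * b - a * b' : ℤ) : R)| * |p| := by gcongr; exact le_abs_self p
      _ = |a * (a' * x - b' * p) - a' * (a * x - b * p)| := by
          rw [← abs_mul]; push_cast; ring_nf
      _ ≤ |(a : R)| * |a' * x - b' * p| + |(a' : R)| * |a * x - b * p| := by
          simpa only [abs_mul] using abs_sub (a * (a' * x - b' * p)) (a' * (a * x - b * p))
      _ ≤ |(a : R)| * ε' + |(a' : R)| * ε := by gcongr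
      _ < 1 * p := by rwa [one_mul, add_comm]
  have hp_pos : 0 < p :=
    have hε : 0 ≤ ε := (abs_nonneg _).trans h
    have hε' : 0 ≤ ε' := (abs_nonneg _).trans h'
    lt_of_le_of_lt (by positivity) hp
  have hdet : |a' * b - a * b'| < 1 := by
    exact_mod_cast lt_of_mul_lt_mul_right hdet_mul hp_pos.le
  exact sub_eq_zero.mp (Int.abs_lt_one_iff.mp hdet)

theorem eq_and_eq_of_coprime_of_mul_eq_mul {a b a' b' : ℕ} (hab : a.Coprime b)
    (hab' : a'.Coprime b') (h : a' * b = a * b') : a = a' ∧ b = b' :=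
  ⟨Nat.dvd_antisymm (hab.dvd_of_dvd_mul_right (h ▸ Nat.dvd_mul_right a b'))
    (hab'.dvd_of_dvd_mul_right (h ▸ Nat.dvd_mul_right a' b)),
  Nat.dvd_antisymm (hab.symm.dvd_of_dvd_mul_left (h ▸ Nat.dvd_mul_left b a'))
    (hab'.symm.dvd_of_dvd_mul_left (h ▸ Nat.dvd_mul_left b' a))⟩

section approxInterval

variable {p H : ℝ} {a b a' b' : ℕ}

theorem mem_approxInterval {x : ℝ} : x ∈ approxInterval p H a b ↔ |a * x - b * p| ≤ H :=
  Iff.rfl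

theorem disjoint_approxInterval (hp : (a + a') * H < p) (hab : a.Coprime b)
    (hab' : a'.Coprime b') (hne : (a, b) ≠ (a', b')) :
    Disjoint (approxInterval p H a b) (approxInterval p H a' b') := by
  refine Set.disjoint_left.mpr fun x hx hx' => hne ?_
  have hdet : (a' : ℤ) * b = a * b' :=
    mul_eq_mul_of_abs_mul_sub_mul_le (p := p) (x := x) (ε := H) (ε' := H)
      (by simpa using mem_approxInterval.mp hx) (by simpa using mem_approxInterval.mp hx')
      (by simpa [← add_mul, add_comm] using hp)
  exact Prod.ext_iff.mpr (eq_and_eq_of_coprime_of_mul_eq_mul hab hab' (by exact_mod_cast hdet))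

theorem approxInterval_subset_Ioi (hb : H < b * p) : approxInterval p H a b ⊆ Set.Ioi 0 := by
  intro x hx
  have hax : 0 < a * x := by linarith [(abs_le.mp (mem_approxInterval.mp hx)).1]
  exact pos_of_mul_pos_right hax a.cast_nonneg

theorem approxInterval_subset_Iio (hba : b < a) (hp : (a + 1) * H < p) :
    approxInterval p H a b ⊆ Set.Iio (p - H) := by
  intro x hx
  have hH : 0 ≤ H := (abs_nonneg _).trans (mem_approxInterval.mp hx)
  have hp_pos : 0 < p := lt_of_le_of_lt (by positivity) hp
  have hbp : (b + 1 : ℝ) * p ≤ a * p := by gcongr; exact_mod_cast hba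
  have hax : a * x < a * (p - H) := by linarith [(abs_le.mp (mem_approxInterval.mp hx)).2]
  exact lt_of_mul_lt_mul_left hax a.cast_nonneg

end approxInterval

section Intervals

variable {p : ℕ} {H : ℝ} {a b a' b' : ℕ}

theorem Iab_subset_approxInterval (ha : 0 < a) : Iab p H a b ⊆ approxInterval p H a b := by
  rintro x ⟨hleft, hright⟩
  rw [div_lt_iff₀' (by positivity)] at hleft
  rw [le_div_iff₀' (by positivity)] at hright
  exact mem_approxInterval.mpr (abs_le.mpr ⟨by linarith, by linarith⟩)

theorem Jab_subset_approxInterval (ha : 0 < a) : Jab p H a b ⊆ approxInterval p H a b := by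
  rintro x ⟨hleft, hright⟩
  rw [div_le_iff₀' (by positivity)] at hleft
  rw [lt_div_iff₀' (by positivity)] at hright
  exact mem_approxInterval.mpr (abs_le.mpr ⟨by linarith, by linarith⟩)

theorem Iab_subset_Ioo (hba : b < a) (hp : (a + 1) * H < p) :
    Iab p H a b ⊆ Set.Ioo 0 (p - H) := fun _ hx =>
  ⟨lt_of_le_of_lt (by positivity) hx.1,
    approxInterval_subset_Iio hba hp (Iab_subset_approxInterval (Nat.zero_lt_of_lt hba) hx)⟩

theorem Jab_subset_Ioo (hb : 0 < b) (hba : b < a) (hp : (a + 1) * H < p) :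
    Jab p H a b ⊆ Set.Ioo 0 (p - H) := by
  intro x hxJ
  have hx : x ∈ approxInterval p H a b :=
    Jab_subset_approxInterval (Nat.zero_lt_of_lt hba) hxJ
  have hH : 0 ≤ H := (abs_nonneg _).trans (mem_approxInterval.mp hx)
  have hHp : H < b * p := calc
    H ≤ (a + 1) * H := le_mul_of_one_le_left hH (by simp)
    _ < p := hp
    _ ≤ b * p := le_mul_of_one_le_left p.cast_nonneg (Nat.one_le_cast.mpr hb)
  exact ⟨approxInterval_subset_Ioi hHp hx, approxInterval_subset_Iio hba hp hx⟩

theorem disjoint_Iab_Iab (ha : 0 < a) (ha' : 0 < a') (hp : (a + a') * H < p)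
    (hab : a.Coprime b) (hab' : a'.Coprime b') (hne : (a, b) ≠ (a', b')) :
    Disjoint (Iab p H a b) (Iab p H a' b') :=
  (disjoint_approxInterval hp hab hab' hne).mono
    (Iab_subset_approxInterval ha) (Iab_subset_approxInterval ha')

theorem disjoint_Jab_Jab (ha : 0 < a) (ha' : 0 < a') (hp : (a + a') * H < p)
    (hab : a.Coprime b) (hab' : a'.Coprime b') (hne : (a, b) ≠ (a', b')) :
    Disjoint (Jab p H a b) (Jab p H a' b') :=
  (disjoint_approxInterval hp hab hab' hne).mono
    (Jab_subset_approxInterval ha) (Jab_subset_approxInterval ha')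

theorem disjoint_Iab_Jab_self : Disjoint (Iab p H a b) (Jab p H a b) :=
  Set.disjoint_left.mpr fun _ hI hJ => lt_asymm hI.1 hJ.2

theorem disjoint_Iab_Jab (ha : 0 < a) (ha' : 0 < a') (hp : (a + a') * H < p)
    (hab : a.Coprime b) (hab' : a'.Coprime b') :
    Disjoint (Iab p H a b) (Jab p H a' b') := by
  by_cases heq : (a, b) = (a', b')
  · obtain ⟨rfl, rfl⟩ := Prod.ext_iff.mp heq
    exact disjoint_Iab_Jab_self
  · exact (disjoint_approxInterval hp hab hab' heq).mono
      (Iab_subset_approxInterval ha) (Jab_subset_approxInterval ha')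

theorem Jab_one_zero : Jab p H 1 0 = Set.Ico (-H) 0 := by
  simp [Jab]

end Intervals

theorem stmt_3_general (p : ℕ) (H X : ℝ) (hH : 0 < H) (hXH : 2 * X * H < p) :
    (∀ a b : ℕ, b < a → (a : ℝ) ≤ X → Nat.Coprime a b →
      Iab p H a b ⊆ Set.Ioo 0 ((p : ℝ) - H) ∧
        (¬(a = 1 ∧ b = 0) → Jab p H a b ⊆ Set.Ioo 0 ((p : ℝ) - H))) ∧
    Jab p H 1 0 = Set.Ico (-H) 0 ∧
    (∀ a b a' b' : ℕ, b < a → (a : ℝ) ≤ X → Nat.Coprime a b →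
      b' < a' → (a' : ℝ) ≤ X → Nat.Coprime a' b' →
      ((a, b) ≠ (a', b') →
        Disjoint (Iab p H a b) (Iab p H a' b') ∧ Disjoint (Jab p H a b) (Jab p H a' b')) ∧
      Disjoint (Iab p H a b) (Jab p H a' b')) := by
  have hsum {a a' : ℝ} (ha : a ≤ X) (ha' : a' ≤ X) : (a + a') * H < p := by nlinarith
  have hsucc {a b : ℕ} (hba : b < a) (haX : a ≤ X) : (a + 1) * H < p :=
    hsum haX ((Nat.one_le_cast.mpr (Nat.zero_lt_of_lt hba)).trans haX)
  refine ⟨fun a b hba haX hab => ⟨Iab_subset_Ioo hba (hsucc hba haX), fun hne => ?_⟩,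
    Jab_one_zero, fun a b a' b' hba haX hab hba' haX' hab' => ?_⟩
  · have hb : 0 < b := Nat.pos_of_ne_zero fun hb => hne ⟨by simpa [hb] using hab, hb⟩
    exact Jab_subset_Ioo hb hba (hsucc hba haX)
  · have ha : 0 < a := Nat.zero_lt_of_lt hba
    have ha' : 0 < a' := Nat.zero_lt_of_lt hba'
    have hp : (a + a') * H < p := hsum haX haX'
    exact ⟨fun hne => ⟨disjoint_Iab_Iab ha ha' hp hab hab' hne,
      disjoint_Jab_Jab ha ha' hp hab hab' hne⟩, disjoint_Iab_Jab ha ha' hp hab hab'⟩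

/-- Let `p` be prime, `H, h` positive reals with `h ≥ 1`, and `X` a real with `2XH < p`.
The intervals `I(a,b)` and `J(a,b)`, over coprime pairs `0 ≤ b < a ≤ X`, are pairwise
disjoint subintervals of `(0, p - H)`, the single exception being `J(1,0) = [-H, 0)`. -/
theorem stmt_3 (p : ℕ) (hp : p.Prime) (H h X : ℝ) (hH : 0 < H) (hh : 1 ≤ h)
    (hXH : 2 * X * H < p) :
    (∀ a b : ℕ, b < a → (a : ℝ) ≤ X → Nat.Coprime a b →
      Iab p H a b ⊆ Set.Ioo 0 ((p : ℝ) - H) ∧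
        (¬(a = 1 ∧ b = 0) → Jab p H a b ⊆ Set.Ioo 0 ((p : ℝ) - H))) ∧
    Jab p H 1 0 = Set.Ico (-H) 0 ∧
    (∀ a b a' b' : ℕ, b < a → (a : ℝ) ≤ X → Nat.Coprime a b →
      b' < a' → (a' : ℝ) ≤ X → Nat.Coprime a' b' →
      ((a, b) ≠ (a', b') →
        Disjoint (Iab p H a b) (Iab p H a' b') ∧ Disjoint (Jab p H a b) (Jab p H a' b')) ∧
      Disjoint (Iab p H a b) (Jab p H a' b')) :=
  stmt_3_general p H X hH hXH
end
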